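/- Let γ be the Euler–Mascheroni constant, and let S_1 = Σ_p (log p)/(p² − 1) and S_2 = Σ_p p²·(log p)²/(p² − 1)², both convergent sums over all primes p. Then for every ε > 0 there is C_ε > 0 such that for all real X ≥ 2, | Σ_{n ≤ X} τ(n)·τ(n+1) − X·(6/π²)·( (log X)² + (4γ + 4S_1 − 2)·log X + ( 4(γ + S_1)² − 4(γ + S_1) − 4S_2 + 2 ) ) | ≤ C_ε·X^{5/6+ε}. -/

import Mathlib

/-!
Grouping the pairs `a b = n` by the hyperbola method reduces `∑ τ(n) τ(n + 1)` over `n ≤ Y²` to the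
sums `∑ τ(q b + 1)` over `b ≤ Y² / q` and over `b ≤ Y`, for `q ≤ Y` (`hyperbola`). A second use of the
hyperbola method turns such a sum, with `x = q B + 1`, into a count of divisors `c ≤ √x` prime to `q`
whose complementary divisor lies in the class of `c⁻¹` modulo `q`. This gives a main term `mainq` and
sums of the sawtooth function at points such as `(x / c - c̄) / q`, where `c̄` is the inverse of `c`
modulo `q` (`tau_progression`). The two halves of the proof bound the latter and add up the former.

*The sawtooth sums.* A truncated Fourier expansion (`saw_fourier`) leads to the exponential sums
`∑ e(h x / (q c)) e(-h c̄ / q)` over dyadic ranges of `c`. On a short block of `c` the first phase is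
linear up to bounded variation, and its slope is within `1 / (2 q)` of a fraction with denominator
`q`, so that partial summation leaves an incomplete Kloosterman sum modulo `q` (`block_bound`), which
is completed (`incomplete_bound`). The outcome is the bound `x ^ ε u(q) (x ^ (1/3) + √(x / q))` of
`sawSum_le`, where `u(q)` measures the loss in the bound `u(q) √q √(h, q)` for Kloosterman sums. Only
an average bound for `u` is needed: `∑_{q ≤ Y} u(q) / q ≪ Y ^ ε` (`exists_weight`). It follows by
twisted multiplicativity from the prime case, prime powers being estimated trivially: the modulus is
`q = s c² d³`, where `s` collects the primes dividing `q` exactly once, and one takes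
`u(q) = τ(q) c d ^ (3/2)` (`KS_bound`).

*Weil's bound for prime moduli.* The coefficients of the `L`-function attached to a Kloosterman sum,
which are sums over monic polynomials of given degree, vanish from degree `3` on, and the one in
degree `2` is `p` (`coeffL_two`, `coeffL_of_three_le`). Hence the sums over the extensions of `𝔽_p`
are power sums of the two inverse roots `α`, `β`, with `α β = p` (`newton`), and `|α| = |β| = √p`
follows once these sums are `O(√(#K))` in the extensions `K` of even degree. That estimate comes from
the point count on `y ^ p - y = a x + b / x` by Stepanov's method in Bombieri's form (`point_count`):
with `P = p ^ (r + 1)`, a nontrivial combination of functions `(x ^ i y ^ j) ^ P x ^ i' (y + t) ^ j'`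
vanishes identically for dimension reasons (`exists_aux`), and at the points over a field with `P²`
elements where `Tr (a x + b / x) = t` it is the `P`-th power of a function of smaller degree, which is
nonzero because its terms have distinct orders at infinity (`sum_gTerm_ne_zero`).

*The main terms.* Expanding the condition that `c` be prime to `q` by the Möbius function, the terms
`mainq` add up to `∑ μ(d) mainP(Y / d)` (`sum_mainq`), where `mainP(z)` is `z²` times a quadratic
polynomial in `log z` up to `O(z log z)` (`mainP_bound`). The resulting series
`∑ μ(n) (log n) ^ k / n²`, for `k = 0, 1, 2`, are derivatives of `1 / ζ` at `2` up to sign; they are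
computed in `series_values` from `-ζ' / ζ = ∑ Λ(n) n ^ (-s)`.

With `X ≈ Y²` every error term is `O(Y ^ (5/3 + ε))`, that is `O(X ^ (5/6 + ε/2))`; the passage from
squares to real `X` costs only `O(X ^ (2/3))` (`mainL_smooth`, `short_sum`).
-/


/-- `tauk k n` is the number of ordered `k`-tuples of positive integers with product `n`. -/
def tauk (k n : ℕ) : ℕ :=
  ((Fintype.piFinset fun _ : Fin k => n.divisors).filter fun f => ∏ i, f i = n).card

/-- `S₁ = Σ_p (log p)/(p² − 1)`, sum over all primes. -/
noncomputable def S1 : ℝ :=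
  ∑' p : Nat.Primes, Real.log ((p : ℕ) : ℝ) / (((p : ℕ) : ℝ) ^ 2 - 1)

/-- `S₂ = Σ_p p²(log p)²/(p² − 1)²`, sum over all primes. -/
noncomputable def S2 : ℝ :=
  ∑' p : Nat.Primes,
    ((p : ℕ) : ℝ) ^ 2 * (Real.log ((p : ℕ) : ℝ)) ^ 2 / (((p : ℕ) : ℝ) ^ 2 - 1) ^ 2

/-! ### Functions on the curve `y ^ p - y = a x + b / x` -/

namespace Stepanov
variable {p : ℕ} [Fact p.Prime] {R : Type*} [CommRing R] [Algebra (ZMod p) R]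

/-- The index set of the monomials `x ^ i * y ^ l` with `-m ≤ i ≤ n` and `l < p`. -/
noncomputable def box (p : ℕ) (m n : ℤ) : Finset (ℤ × ℕ) := Finset.Icc (-m) n ×ˢ Finset.range p

/-- The monomial `x ^ i * y ^ l`. -/
def mono (x : Rˣ) (y : R) (s : ℤ × ℕ) : R := ((x ^ s.1 : Rˣ) : R) * y ^ s.2

/-- The span of the monomials indexed by `box p m n`: reduced functions on the curve
`y ^ p - y = a x + b / x` with bounded poles. -/
def V (x : Rˣ) (y : R) (m n : ℤ) : Submodule (ZMod p) R :=
  Submodule.span (ZMod p) (mono x y '' (box p m n : Set (ℤ × ℕ)))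

lemma mono_mem {x : Rˣ} {y : R} {m n i : ℤ} {l : ℕ} (h1 : -m ≤ i) (h2 : i ≤ n) (hl : l < p) :
    ((x ^ i : Rˣ) : R) * y ^ l ∈ V (p := p) x y m n :=
  Submodule.subset_span ⟨(i, l), by simp [box, h1, h2, hl], rfl⟩

lemma V_mono {x : Rˣ} {y : R} {m n m' n' : ℤ} (hm : m ≤ m') (hn : n ≤ n') :
    V (p := p) x y m n ≤ V x y m' n' := by
  apply Submodule.span_mono
  apply Set.image_mono
  intro s hs
  simp only [box, Finset.coe_product, Set.mem_prod, Finset.mem_coe, Finset.mem_Icc,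
    Finset.mem_range] at hs ⊢
  exact ⟨⟨by linarith [hs.1.1], by linarith [hs.1.2]⟩, hs.2⟩

/-- To bound the poles of `z * v` for `v` in `V` it suffices to bound those of `z` times each monomial. -/
lemma mul_mem_of {x : Rˣ} {y z : R} {m n m' n' : ℤ}
    (h : ∀ i : ℤ, ∀ l : ℕ, -m ≤ i → i ≤ n → l < p →
      z * (((x ^ i : Rˣ) : R) * y ^ l) ∈ V (p := p) x y m' n') {v : R}
    (hv : v ∈ V (p := p) x y m n) : z * v ∈ V (p := p) x y m' n' := by
  have : V (p := p) x y m n ≤ (V (p := p) x y m' n').comap (LinearMap.mulLeft (ZMod p) z) := by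
    refine Submodule.span_le.2 ?_
    rintro _ ⟨⟨i, l⟩, hs, rfl⟩
    simp only [box, Finset.coe_product, Set.mem_prod, Finset.mem_coe, Finset.mem_Icc,
      Finset.mem_range] at hs
    exact h i l hs.1.1 hs.1.2 hs.2
  exact this hv

lemma zpow_mul_mem {x : Rˣ} {y : R} {m n : ℤ} (j : ℤ) {v : R} (hv : v ∈ V (p := p) x y m n) :
    ((x ^ j : Rˣ) : R) * v ∈ V (p := p) x y (m - j) (n + j) := by
  refine mul_mem_of (fun i l h1 h2 hl => ?_) hv
  rw [← mul_assoc, ← Units.val_mul, ← zpow_add]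
  exact mono_mem (by linarith) (by linarith) hl

/-- Multiplication by `y` costs at most one in each pole order: `y * y ^ (p - 1)` is reduced by the
equation of the curve. -/
lemma y_mul_mem {x : Rˣ} {y : R} {a b : ZMod p}
    (hy : y ^ p = y + (a • (x : R) + b • ((x⁻¹ : Rˣ) : R))) {m n : ℤ} {v : R}
    (hv : v ∈ V (p := p) x y m n) : y * v ∈ V (p := p) x y (m + 1) (n + 1) := by
  have hp : 2 ≤ p := (Fact.out : p.Prime).two_le
  refine mul_mem_of (fun i l h1 h2 hl => ?_) hv
  have e : y * (((x ^ i : Rˣ) : R) * y ^ l) = ((x ^ i : Rˣ) : R) * y ^ (l + 1) := by ring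
  rw [e]
  rcases Nat.lt_or_ge (l + 1) p with h | h
  · exact mono_mem (by linarith) (by linarith) h
  · have : l + 1 = p := by omega
    rw [this, hy]
    have e2 : ((x ^ i : Rˣ) : R) * (y + (a • (x : R) + b • ((x⁻¹ : Rˣ) : R)))
        = ((x ^ i : Rˣ) : R) * y ^ 1 + (a • (((x ^ (i + 1) : Rˣ) : R) * y ^ 0)
          + b • (((x ^ (i - 1) : Rˣ) : R) * y ^ 0)) := by
      rw [zpow_add, zpow_sub]; simp [mul_add]
    rw [e2]
    refine add_mem (mono_mem (by linarith) (by linarith) (by omega)) (add_mem ?_ ?_)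
    · exact Submodule.smul_mem _ _ (mono_mem (by linarith) (by linarith) (by omega))
    · exact Submodule.smul_mem _ _ (mono_mem (by linarith) (by linarith) (by omega))

/-- The equation of the curve, iterated by applying powers of Frobenius to it. -/
lemma y_pow_p_pow {x : Rˣ} {y : R} {a b : ZMod p} [CharP R p]
    (hy : y ^ p = y + (a • (x : R) + b • ((x⁻¹ : Rˣ) : R))) (r : ℕ) :
    y ^ p ^ r = y + ∑ i ∈ Finset.range r, (a • ((x ^ (p ^ i : ℤ) : Rˣ) : R)
      + b • ((x ^ (-(p ^ i : ℤ)) : Rˣ) : R)) := by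
  induction r with
  | zero => simp
  | succ r ih =>
    have key : (a • (x : R) + b • ((x⁻¹ : Rˣ) : R)) ^ p ^ r
        = a • ((x ^ (p ^ r : ℤ) : Rˣ) : R) + b • ((x ^ (-(p ^ r : ℤ)) : Rˣ) : R) := by
      rw [add_pow_char_pow, smul_pow, smul_pow, ZMod.pow_card_pow, ZMod.pow_card_pow]
      rw [← Units.val_pow_eq_pow_val, ← Units.val_pow_eq_pow_val, ← zpow_natCast,
        ← zpow_natCast, inv_zpow]
      push_cast
      simp
    rw [pow_succ', pow_mul, hy, add_pow_char_pow, ih, key, Finset.sum_range_succ]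
    ring

/-- Multiplication by `y ^ p ^ (r + 1)` costs only `p ^ r` in each pole order, instead of `p ^ (r + 1)`:
this is the gain on which Stepanov's method rests. -/
lemma ypow_mul_mem {x : Rˣ} {y : R} {a b : ZMod p} [CharP R p]
    (hy : y ^ p = y + (a • (x : R) + b • ((x⁻¹ : Rˣ) : R))) (r : ℕ) {m n : ℤ} {v : R}
    (hv : v ∈ V (p := p) x y m n) :
    y ^ p ^ (r + 1) * v ∈ V (p := p) x y (m + p ^ r) (n + p ^ r) := by
  have hp : 1 ≤ p := (Fact.out : p.Prime).one_le
  rw [y_pow_p_pow hy, add_mul, Finset.sum_mul]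
  have h1 : (1 : ℤ) ≤ (p : ℤ) ^ r := by exact_mod_cast Nat.one_le_pow _ _ hp
  refine add_mem (V_mono (by linarith) (by linarith) (y_mul_mem hy hv)) (sum_mem fun i hi => ?_)
  have h2 : (p : ℤ) ^ i ≤ (p : ℤ) ^ r := by
    exact_mod_cast Nat.pow_le_pow_right hp (by simp at hi; omega)
  have h3 : (0 : ℤ) ≤ (p : ℤ) ^ i := by positivity
  rw [add_mul, smul_mul_assoc, smul_mul_assoc]
  refine add_mem (Submodule.smul_mem _ _ ?_) (Submodule.smul_mem _ _ ?_)
  · exact V_mono (by linarith) (by linarith) (zpow_mul_mem _ hv)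
  · exact V_mono (by linarith) (by linarith) (zpow_mul_mem _ hv)

lemma ypow_pow_mul_mem {x : Rˣ} {y : R} {a b : ZMod p} [CharP R p]
    (hy : y ^ p = y + (a • (x : R) + b • ((x⁻¹ : Rˣ) : R))) (r j : ℕ) {m n : ℤ} {v : R}
    (hv : v ∈ V (p := p) x y m n) :
    (y ^ p ^ (r + 1)) ^ j * v ∈ V (p := p) x y (m + j * p ^ r) (n + j * p ^ r) := by
  induction j with
  | zero => simpa using hv
  | succ j ih =>
    rw [pow_succ', mul_assoc]
    have := ypow_mul_mem hy r ih
    refine V_mono ?_ ?_ this <;> push_cast <;> linarith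

lemma yt_pow_mul_mem {x : Rˣ} {y : R} {a b : ZMod p}
    (hy : y ^ p = y + (a • (x : R) + b • ((x⁻¹ : Rˣ) : R))) (t : ZMod p) (j : ℕ) {m n : ℤ}
    {v : R} (hv : v ∈ V (p := p) x y m n) :
    (y + algebraMap _ R t) ^ j * v ∈ V (p := p) x y (m + j) (n + j) := by
  induction j with
  | zero => simpa using hv
  | succ j ih =>
    rw [pow_succ', mul_assoc, add_mul, ← Algebra.smul_def]
    push_cast
    refine add_mem ?_ (Submodule.smul_mem _ _ (V_mono (by linarith) (by linarith) ih))
    exact V_mono (by linarith) (by linarith) (y_mul_mem hy ih)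

lemma one_mem_V {x : Rˣ} {y : R} : (1 : R) ∈ V (p := p) x y 0 0 := by
  have := mono_mem (p := p) (x := x) (y := y) (m := 0) (n := 0) (i := 0) (l := 0) (by simp)
    (by simp) (Fact.out : p.Prime).pos
  simpa using this

lemma finrank_V_le {x : Rˣ} {y : R} {m n : ℤ} :
    Module.finrank (ZMod p) (V (p := p) x y m n) ≤ (n + 1 + m).toNat * p := by
  classical
  have : V (p := p) x y m n = Submodule.span (ZMod p)
      (((box p m n).image (mono x y) : Finset R) : Set R) := by
    simp [V]
  rw [this]
  refine (finrank_span_finset_le_card _).trans (Finset.card_image_le.trans ?_)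
  simp [box]

instance {x : Rˣ} {y : R} {m n : ℤ} : FiniteDimensional (ZMod p) (V (p := p) x y m n) :=
  FiniteDimensional.span_of_finite _ (((box p m n).finite_toSet).image _)

lemma exists_coeff {x : Rˣ} {y v : R} {m n : ℤ} (hv : v ∈ V (p := p) x y m n) :
    ∃ g : ℤ × ℕ → ZMod p, ∑ s ∈ box p m n, g s • mono x y s = v := by
  classical
  obtain ⟨c, hc⟩ := (Submodule.mem_span_image_finset_iff_exists_fun (ZMod p)).1 hv
  refine ⟨fun s => if h : s ∈ box p m n then c ⟨s, h⟩ else 0, ?_⟩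
  rw [← hc, ← Finset.sum_coe_sort]
  refine Finset.sum_congr rfl fun s _ => ?_
  simp

end Stepanov

/-! ### The auxiliary function of Stepanov's method -/

namespace Stepanov
variable {p : ℕ} [Fact p.Prime] {R : Type*} [CommRing R] [Algebra (ZMod p) R]

/-- Indices `((i, j), (i', j'))` of the auxiliary function, with `D = p ^ r`. -/
def idx (p r : ℕ) : Finset ((ℕ × ℕ) × (ℕ × ℕ)) :=
  (Finset.range (p ^ r) ×ˢ Finset.range p) ×ˢ (Finset.range (p ^ r + 4) ×ˢ Finset.range p)

/-- The function `(x ^ i * y ^ j) ^ P * x ^ i' * (y + t) ^ j'`, where `P = p ^ (r + 1)`. -/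
def hTerm (r : ℕ) (t : ZMod p) (x : Rˣ) (y : R) (s : (ℕ × ℕ) × (ℕ × ℕ)) : R :=
  ((x : R) ^ s.1.1 * y ^ s.1.2) ^ p ^ (r + 1) *
    ((x : R) ^ s.2.1 * (y + algebraMap _ R t) ^ s.2.2)

/-- The function `x ^ i * y ^ j * (x ^ i' * y ^ j') ^ P`, where `P = p ^ (r + 1)`. -/
def gTerm (p r : ℕ) (x : Rˣ) (y : R) (s : (ℕ × ℕ) × (ℕ × ℕ)) : R :=
  ((x : R) ^ s.1.1 * y ^ s.1.2) * ((x : R) ^ s.2.1 * y ^ s.2.2) ^ p ^ (r + 1)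

/-- The pole orders of the functions `H`, after reduction by the equation of the curve. The large powers
of `y` contribute only `(p - 1) p ^ r`, so that the space containing all `H` is smaller than the
number of indices. -/
lemma hTerm_mem [CharP R p] {x : Rˣ} {y : R} {a b : ZMod p}
    (hy : y ^ p = y + (a • (x : R) + b • ((x⁻¹ : Rˣ) : R))) (t : ZMod p) (r : ℕ)
    {s : (ℕ × ℕ) × (ℕ × ℕ)} (hs : s ∈ idx p r) :
    hTerm r t x y s ∈ V (p := p) x y ((p - 1) * (p ^ r + 1))
      (p * p ^ r * (p ^ r - 1) + (p ^ r + 3) + (p - 1) * (p ^ r + 1)) := by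
  obtain ⟨⟨i, j⟩, ⟨i', j'⟩⟩ := s
  simp only [idx, Finset.mem_product, Finset.mem_range] at hs
  obtain ⟨⟨hi, hj⟩, hi', hj'⟩ := hs
  have h1 := ypow_pow_mul_mem hy r j (yt_pow_mul_mem hy t j'
    (zpow_mul_mem ((p ^ (r + 1) * i + i' : ℕ) : ℤ) (one_mem_V (p := p) (x := x) (y := y))))
  have e : hTerm r t x y ((i, j), (i', j')) = (y ^ p ^ (r + 1)) ^ j *
      ((y + algebraMap _ R t) ^ j' * (((x ^ ((p ^ (r + 1) * i + i' : ℕ) : ℤ) : Rˣ) : R) * 1)) := by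
    simp only [hTerm, zpow_natCast, Units.val_pow_eq_pow_val]; ring
  rw [e]
  zify at hi hj hi' hj'
  have hD : (0 : ℤ) ≤ (p : ℤ) ^ r := by positivity
  have hP : (0 : ℤ) ≤ (p : ℤ) ^ (r + 1) := by positivity
  have hj2 : (j : ℤ) * p ^ r ≤ (p - 1) * p ^ r := mul_le_mul_of_nonneg_right (by linarith) hD
  have hi2 : (p : ℤ) ^ (r + 1) * i ≤ p * p ^ r * (p ^ r - 1) := by
    rw [pow_succ', mul_assoc, mul_assoc]
    gcongr; linarith
  refine V_mono ?_ ?_ h1 <;> push_cast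
  · have : (0 : ℤ) ≤ (p : ℤ) ^ (r + 1) * i + i' := by positivity
    linarith
  · linarith

/-- The pole orders of the functions `G`, after reduction by the equation of the curve; their sum bounds
the number of zeros. -/
lemma gTerm_mem [CharP R p] {x : Rˣ} {y : R} {a b : ZMod p}
    (hy : y ^ p = y + (a • (x : R) + b • ((x⁻¹ : Rˣ) : R))) (r : ℕ)
    {s : (ℕ × ℕ) × (ℕ × ℕ)} (hs : s ∈ idx p r) :
    gTerm p r x y s ∈ V (p := p) x y ((p - 1) * (p ^ r + 1))
      (p * p ^ r * (p ^ r + 3) + (p ^ r - 1) + (p - 1) * (p ^ r + 1)) := by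
  obtain ⟨⟨i, j⟩, ⟨i', j'⟩⟩ := s
  simp only [idx, Finset.mem_product, Finset.mem_range] at hs
  obtain ⟨⟨hi, hj⟩, hi', hj'⟩ := hs
  have h1 := ypow_pow_mul_mem hy r j' (yt_pow_mul_mem hy 0 j
    (zpow_mul_mem ((p ^ (r + 1) * i' + i : ℕ) : ℤ) (one_mem_V (p := p) (x := x) (y := y))))
  have e : gTerm p r x y ((i, j), (i', j')) = (y ^ p ^ (r + 1)) ^ j' *
      ((y + algebraMap (ZMod p) R 0) ^ j *
        (((x ^ ((p ^ (r + 1) * i' + i : ℕ) : ℤ) : Rˣ) : R) * 1)) := by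
    simp only [gTerm, zpow_natCast, Units.val_pow_eq_pow_val, map_zero]; ring
  rw [e]
  zify at hi hj hi' hj'
  have hD : (0 : ℤ) ≤ (p : ℤ) ^ r := by positivity
  have hP : (0 : ℤ) ≤ (p : ℤ) ^ (r + 1) := by positivity
  have hj2 : (j' : ℤ) * p ^ r ≤ (p - 1) * p ^ r := mul_le_mul_of_nonneg_right (by linarith) hD
  have hi2 : (p : ℤ) ^ (r + 1) * i' ≤ p * p ^ r * (p ^ r + 3) := by
    rw [pow_succ', mul_assoc, mul_assoc]
    gcongr; linarith
  refine V_mono ?_ ?_ h1 <;> push_cast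
  · have : (0 : ℤ) ≤ (p : ℤ) ^ (r + 1) * i' + i := by positivity
    linarith
  · linarith

/-- There are more indices than the dimension of the target space, so some nontrivial linear
combination of the `hTerm`s vanishes identically. -/
lemma exists_aux [CharP R p] {x : Rˣ} {y : R} {a b : ZMod p}
    (hy : y ^ p = y + (a • (x : R) + b • ((x⁻¹ : Rˣ) : R))) (t : ZMod p) (r : ℕ) :
    ∃ c : (ℕ × ℕ) × (ℕ × ℕ) → ZMod p, (∃ s ∈ idx p r, c s ≠ 0) ∧
      ∑ s ∈ idx p r, c s • hTerm r t x y s = 0 := by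
  classical
  have hp : 2 ≤ p := (Fact.out : p.Prime).two_le
  have hD : 1 ≤ p ^ r := Nat.one_le_pow _ _ (by omega)
  set W := V (p := p) x y ((p - 1) * (p ^ r + 1))
      (p * p ^ r * (p ^ r - 1) + (p ^ r + 3) + (p - 1) * (p ^ r + 1)) with hW
  let f : (idx p r → ZMod p) →ₗ[ZMod p] W :=
    ∑ s : idx p r, (LinearMap.proj s : (idx p r → ZMod p) →ₗ[ZMod p] ZMod p).smulRight
      (⟨hTerm r t x y s, hTerm_mem hy t r s.2⟩ : W)
  have hlt : Module.finrank (ZMod p) W < Module.finrank (ZMod p) (idx p r → ZMod p) := by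
    refine (finrank_V_le).trans_lt ?_
    rw [Module.finrank_fintype_fun_eq_card, Fintype.card_coe]
    simp only [idx, Finset.card_product, Finset.card_range]
    have e : p ^ r * p * ((p ^ r + 4) * p) = (p ^ r * p * (p ^ r + 4)) * p := by ring
    rw [e]
    refine Nat.mul_lt_mul_of_pos_right ?_ (by omega)
    rw [Int.toNat_lt' (by positivity)]
    generalize hE : p ^ r = D at *
    have hE' : (p : ℤ) ^ r = D := by rw [← hE]; push_cast; rfl
    rw [hE']
    push_cast
    zify at hp hD
    nlinarith [mul_nonneg (sub_nonneg.2 hp) (sub_nonneg.2 hD)]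
  have hk := LinearMap.ker_ne_bot_of_finrank_lt (f := f) hlt
  obtain ⟨c, hc, hc0⟩ := (Submodule.ne_bot_iff _).1 hk
  obtain ⟨s, hs⟩ : ∃ s, c s ≠ 0 := by
    by_contra! h
    exact hc0 (funext h)
  refine ⟨fun s => if h : s ∈ idx p r then c ⟨s, h⟩ else 0, ⟨s, s.2, by simpa using hs⟩, ?_⟩
  rw [← Finset.sum_coe_sort]
  have := congrArg (Subtype.val) (LinearMap.mem_ker.1 hc)
  simpa [f, LinearMap.sum_apply] using this

end Stepanov

/-! ### The place at infinity -/

namespace Stepanov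
variable {p : ℕ} [Fact p.Prime]

lemma addVal_powerSeries_nonneg {k : Type*} [Field k] (f : PowerSeries k) :
    0 ≤ HahnSeries.addVal ℤ k (HahnSeries.ofPowerSeries ℤ k f) := by
  rw [HahnSeries.addVal_apply]
  refine HahnSeries.le_orderTop_iff_forall.2 fun i hi => ?_
  rw [show i = (i : ℤ) from rfl]
  have hi' : i < 0 := by exact_mod_cast hi
  rw [HahnSeries.ofPowerSeries_apply]
  refine HahnSeries.embDomain_of_notMem_range ?_
  rintro ⟨n, hn⟩
  simp at hn
  omega

open Polynomial in
/-- Hensel's lemma for the quadratic `θ² - (1 - s) θ + t`, with `s`, `t` in the ideal `I`. -/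
lemma exists_root_quadratic {A : Type*} [CommRing A] (I : Ideal A) [HenselianRing A I] {s t : A}
    (hs : s ∈ I) (ht : t ∈ I) : ∃ θ : A, θ ^ 2 - (1 - s) * θ + t = 0 ∧ θ - 1 ∈ I := by
  obtain ⟨c, hc⟩ : ∃ c, c = 1 - s := ⟨_, rfl⟩
  rw [← hc]
  let f : A[X] := X ^ 2 + (C (-c) * X + C t)
  have hf : f.Monic := monic_X_pow_add (degree_linear_le.trans_lt (by norm_num))
  have h1 : f.eval 1 ∈ I := by
    have : f.eval 1 = s + t := by simp [f, hc]; ring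
    rw [this]
    exact I.add_mem hs ht
  have h2 : IsUnit (Ideal.Quotient.mk I (f.derivative.eval 1)) := by
    have : f.derivative.eval 1 = 1 + s := by
      simp [f, hc]
    rw [this, map_add, Ideal.Quotient.eq_zero_iff_mem.2 hs]
    simp
  obtain ⟨θ, hθ, hθ1⟩ := HenselianRing.is_henselian f hf 1 h1 h2
  refine ⟨θ, ?_, hθ1⟩
  have : θ ^ 2 + (-(c * θ) + t) = 0 := by simpa [f, IsRoot] using hθ
  linear_combination this

/-- Substitution of `y = 1 / W` and `x = U / (A W ^ p)`, with `p = m + 1`, in the equation of the curve: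
it becomes the quadratic equation `h` for `U`. -/
lemma curve_param {L : Type*} [Field L] {W U A B : L} {m : ℕ} (hW : W ≠ 0) (hU : U ≠ 0)
    (hA : A ≠ 0) (h : U ^ 2 - (1 - W ^ m) * U + A * B * W ^ (2 * (m + 1)) = 0) :
    W⁻¹ ^ (m + 1) = W⁻¹ + (A * (U * A⁻¹ * W⁻¹ ^ (m + 1)) + B * (U * A⁻¹ * W⁻¹ ^ (m + 1))⁻¹) := by
  have e : W⁻¹ + (A * (U * A⁻¹ * W⁻¹ ^ (m + 1)) + B * (U * A⁻¹ * W⁻¹ ^ (m + 1))⁻¹)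
      = (U * W ^ m + U ^ 2 + A * B * W ^ (2 * (m + 1))) / (U * W ^ (m + 1)) := by
    rw [inv_pow]
    field_simp
    ring
  rw [e, eq_div_iff (by positivity), inv_pow]
  field_simp
  linear_combination -h

/-- At its place at infinity the curve `y ^ p - y = a x + b / x` is parametrised by Laurent series
in `w`, with `y = 1 / w` and `x = θ / (a w ^ p)`, where `θ` is the power series root near `1` of
`θ² - (1 - w ^ (p - 1)) θ + a b w ^ (2 p)`. -/
lemma exists_laurent {a : ZMod p} (b : ZMod p) (ha : a ≠ 0) :
    ∃ (L : Type) (_ : Field L) (_ : Algebra (ZMod p) L) (v : AddValuation L (WithTop ℤ))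
      (x : Lˣ) (y : L),
      y ^ p = y + (a • (x : L) + b • ((x⁻¹ : Lˣ) : L)) ∧
      v (x : L) = ((-p : ℤ) : WithTop ℤ) ∧ v y = ((-1 : ℤ) : WithTop ℤ) ∧
      ∀ c : ZMod p, c ≠ 0 → v (algebraMap (ZMod p) L c) = 0 := by
  have hp : 2 ≤ p := (Fact.out : p.Prime).two_le
  let w : PowerSeries (ZMod p) := PowerSeries.X
  obtain ⟨θ, hroot, hθ1⟩ := exists_root_quadratic (Ideal.span {w}) (s := w ^ (p - 1))
    (t := algebraMap (ZMod p) _ (a * b) * w ^ (2 * p))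
    (Ideal.mem_span_singleton.2 (dvd_pow_self _ (by omega)))
    (Ideal.mem_span_singleton.2 ((dvd_pow_self _ (by omega)).mul_left _))
  have hθ0 : IsUnit θ := by
    rw [PowerSeries.isUnit_iff_constantCoeff]
    obtain ⟨d, hd⟩ := Ideal.mem_span_singleton.1 hθ1
    have : θ = 1 + w * d := by rw [← hd]; ring
    rw [this]
    simp [w]
  let v := HahnSeries.addVal ℤ (ZMod p)
  let φ := HahnSeries.ofPowerSeries ℤ (ZMod p)
  obtain ⟨u, rfl⟩ := hθ0
  have hu : v (φ u) = 0 := by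
    have e1 := addVal_powerSeries_nonneg (u : PowerSeries (ZMod p))
    have e2 := addVal_powerSeries_nonneg ((u⁻¹ : (PowerSeries (ZMod p))ˣ) : PowerSeries (ZMod p))
    have e3 : v (φ u) + v (φ ((u⁻¹ : (PowerSeries (ZMod p))ˣ) : PowerSeries (ZMod p))) = 0 := by
      rw [← v.map_mul, ← map_mul]; simp
    exact (add_eq_zero_iff_of_nonneg e1 e2).1 e3 |>.1
  let ι : ZMod p →+* LaurentSeries (ZMod p) := HahnSeries.C
  have hcv : ∀ c : (ZMod p), c ≠ 0 → v (ι c) = 0 := by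
    intro c hc
    have : ι c = HahnSeries.single 0 c := rfl
    rw [this, HahnSeries.addVal_apply, HahnSeries.orderTop_single hc]
    rfl
  have hw : v (φ w) = ((1 : ℤ) : WithTop ℤ) := by
    simp only [φ, w, HahnSeries.ofPowerSeries_X]
    rw [HahnSeries.addVal_apply, HahnSeries.orderTop_single one_ne_zero]
  have hw0 : φ w ≠ 0 := by
    intro h
    rw [h, v.map_zero] at hw
    exact WithTop.top_ne_coe hw
  have hu0 : φ u ≠ 0 := by
    intro h
    rw [h, v.map_zero] at hu
    exact WithTop.top_ne_coe hu
  have hφc : ∀ c : (ZMod p), φ (algebraMap (ZMod p) _ c) = ι c := by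
    intro c
    exact RingHom.congr_fun (Subsingleton.elim (φ.comp (algebraMap (ZMod p) _)) ι) c
  have ha' : ι a ≠ 0 := by simpa using ha
  let x : LaurentSeries (ZMod p) := φ u * (ι a)⁻¹ * (φ w)⁻¹ ^ p
  have hx : x ≠ 0 := by simp [x, hu0, ha', hw0]
  have hrootL : φ u ^ 2 - (1 - φ w ^ (p - 1)) * φ u + ι a *
      ι b * φ w ^ (2 * p) = 0 := by
    have := congrArg φ hroot
    rw [map_add, map_sub, map_mul, map_mul, map_sub, hφc] at this
    simpa using this
  have hvwi : v ((φ w)⁻¹) = ((-1 : ℤ) : WithTop ℤ) := by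
    have e3 : v ((φ w)⁻¹) + v (φ w) = 0 := by
      rw [← v.map_mul, inv_mul_cancel₀ hw0]; simp
    rw [hw] at e3
    generalize v ((φ w)⁻¹) = z at e3
    induction z with
    | top => simp at e3
    | coe z => 
      norm_cast at e3 ⊢
      omega
  refine ⟨LaurentSeries (ZMod p), inferInstance, ι.toAlgebra, v, Units.mk0 x hx, (φ w)⁻¹, ?_, ?_, hvwi, hcv⟩
  · rw [Units.val_mk0, Units.val_inv_eq_inv_val, Units.val_mk0]
    change (φ w)⁻¹ ^ p = (φ w)⁻¹ + (ι a * x + ι b * x⁻¹)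
    simp only [x]
    obtain ⟨m, rfl⟩ : ∃ m, p = m + 1 := ⟨p - 1, by omega⟩
    simp only [Nat.add_sub_cancel] at hrootL
    exact curve_param hw0 hu0 ha' hrootL
  · rw [Units.val_mk0]
    simp only [x]
    have ha2 : v ((ι a)⁻¹) = 0 := by
      rw [← map_inv₀]
      exact hcv _ (inv_ne_zero ha)
    rw [v.map_mul, v.map_mul, hu, ha2, v.map_pow, hvwi, ← WithTop.coe_nsmul]
    simp

end Stepanov

/-! ### Nonvanishing -/

namespace Stepanov
variable {p : ℕ} [Fact p.Prime]

/-- A sum of elements whose valuations are finite and pairwise distinct does not vanish. -/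
lemma sum_ne_zero_of_distinct {L : Type*} [CommRing L] (v : AddValuation L (WithTop ℤ))
    {ι : Type*} {s : Finset ι} (hs : s.Nonempty) (f : ι → L) (e : ι → ℤ)
    (he : ∀ i ∈ s, v (f i) = e i) (inj : Set.InjOn e s) : ∑ i ∈ s, f i ≠ 0 := by
  classical
  obtain ⟨i, hi, hmin⟩ := s.exists_min_image e hs
  have h1 : v (f i) < v (∑ j ∈ s.erase i, f j) := by
    refine v.map_lt_sum (by rw [he i hi]; exact WithTop.coe_ne_top) fun j hj => ?_
    have hj' := Finset.mem_of_mem_erase hj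
    rw [he i hi, he j hj', WithTop.coe_lt_coe]
    exact lt_of_le_of_ne (hmin j hj') fun h => Finset.ne_of_mem_erase hj (inj hj' hi h.symm)
  intro h0
  rw [← Finset.add_sum_erase s f hi] at h0
  have h2 := v.map_add_eq_of_lt_left h1
  rw [h0, v.map_zero, he i hi] at h2
  exact WithTop.top_ne_coe h2

/-- The order of `G` at infinity is `-(p i + j + P (p i' + j'))`, where `j, j' < p` and `p i + j < P`. By
uniqueness of the digits these orders are distinct, so the combination cannot vanish. -/
lemma sum_gTerm_ne_zero {L : Type*} [Field L] [Algebra (ZMod p) L]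
    (v : AddValuation L (WithTop ℤ)) {x : Lˣ} {y : L}
    (hx : v (x : L) = ((-p : ℤ) : WithTop ℤ)) (hy : v y = ((-1 : ℤ) : WithTop ℤ))
    (hv : ∀ c : ZMod p, c ≠ 0 → v (algebraMap (ZMod p) L c) = 0) (r : ℕ)
    (c : (ℕ × ℕ) × (ℕ × ℕ) → ZMod p) (hc : ∃ s ∈ idx p r, c s ≠ 0) :
    ∑ s ∈ idx p r, c s • gTerm p r x y s ≠ 0 := by
  classical
  have hp : 2 ≤ p := (Fact.out : p.Prime).two_le
  obtain ⟨s₀, hs₀, hcs⟩ := hc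
  have e1 : ∑ s ∈ idx p r, c s • gTerm p r x y s =
      ∑ s ∈ (idx p r).filter (fun s => c s ≠ 0), c s • gTerm p r x y s := by
    rw [Finset.sum_filter]
    refine Finset.sum_congr rfl fun s _ => ?_
    split_ifs with h
    · rfl
    · rw [not_not.1 h, zero_smul]
  rw [e1]
  refine sum_ne_zero_of_distinct v ⟨s₀, Finset.mem_filter.2 ⟨hs₀, hcs⟩⟩ _
    (fun s => -((p * s.1.1 + s.1.2 + p ^ (r + 1) * (p * s.2.1 + s.2.2) : ℕ) : ℤ)) ?_ ?_
  · intro s hs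
    have hcs := (Finset.mem_filter.1 hs).2
    rw [Algebra.smul_def, v.map_mul, hv _ hcs, gTerm]
    simp only [v.map_mul, v.map_pow, hx, hy, ← WithTop.coe_nsmul, zero_add, ← WithTop.coe_add]
    congr 1
    push_cast
    simp only [nsmul_eq_mul]
    push_cast
    ring
  · rintro ⟨⟨i, j⟩, ⟨i', j'⟩⟩ hs ⟨⟨k, l⟩, ⟨k', l'⟩⟩ hs' h
    have hs := (Finset.mem_filter.1 hs).1
    have hs' := (Finset.mem_filter.1 hs').1
    simp only [idx, Finset.mem_product, Finset.mem_range] at hs hs'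
    simp only [neg_inj, Nat.cast_inj] at h
    have key : ∀ i j : ℕ, i < p ^ r → j < p → p * i + j < p ^ (r + 1) := by
      intro i j hi hj
      calc p * i + j < p * i + p := by omega
        _ = p * (i + 1) := by ring
        _ ≤ p * p ^ r := Nat.mul_le_mul_left _ hi
        _ = _ := by ring
    have dig : ∀ {m a b a' b' : ℕ}, a < m → a' < m → a + m * b = a' + m * b' → a = a' ∧ b = b' := by
      intro m a b a' b' ha ha' hh
      have h1 := congrArg (· % m) hh
      have h2 := congrArg (· / m) hh
      simp only [Nat.add_mul_mod_self_left, Nat.mod_eq_of_lt ha, Nat.mod_eq_of_lt ha'] at h1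
      simp only [Nat.add_mul_div_left _ _ (by omega : 0 < m), Nat.div_eq_of_lt ha,
        Nat.div_eq_of_lt ha', zero_add] at h2
      exact ⟨h1, h2⟩
    obtain ⟨h1, h2⟩ := dig (key i j hs.1.1 hs.1.2) (key k l hs'.1.1 hs'.1.2) h
    rw [add_comm, add_comm (p * k)] at h1
    rw [add_comm, add_comm (p * k')] at h2
    obtain ⟨h3, h4⟩ := dig hs.1.2 hs'.1.2 h1
    obtain ⟨h5, h6⟩ := dig hs.2.2 hs'.2.2 h2
    subst h3 h4 h5 h6
    rfl
end Stepanov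

/-! ### Vanishing at rational points -/

namespace Stepanov
variable {p : ℕ} [Fact p.Prime]

section map
variable {R S : Type*} [CommRing R] [Algebra (ZMod p) R] [CommRing S] [Algebra (ZMod p) S]

lemma map_mono (φ : R →ₐ[ZMod p] S) (x : Rˣ) (y : R) (s : ℤ × ℕ) :
    φ (mono x y s) = mono (Units.map (φ : R →* S) x) (φ y) s := by
  simp [mono, ← map_zpow]

lemma map_gTerm (φ : R →ₐ[ZMod p] S) (r : ℕ) (x : Rˣ) (y : R) (s : (ℕ × ℕ) × (ℕ × ℕ)) :
    φ (gTerm p r x y s) = gTerm p r (Units.map (φ : R →* S) x) (φ y) s := by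
  simp [gTerm]

lemma map_hTerm (φ : R →ₐ[ZMod p] S) (r : ℕ) (t : ZMod p) (x : Rˣ) (y : R)
    (s : (ℕ × ℕ) × (ℕ × ℕ)) :
    φ (hTerm r t x y s) = hTerm r t (Units.map (φ : R →* S) x) (φ y) s := by
  simp [hTerm]

end map

lemma pow_p_pow_of {F : Type*} [CommRing F] [CharP F p] {y β : F} (h : y ^ p = y + β) (n : ℕ) :
    y ^ p ^ n = y + ∑ i ∈ Finset.range n, β ^ p ^ i := by
  induction n with
  | zero => simp
  | succ n ih =>
    rw [pow_succ', pow_mul, h, add_pow_char_pow, ih, Finset.sum_range_succ]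
    ring

/-- The functions `G` and `H` of Stepanov's method satisfy `G ^ P = H` at a rational point. -/
lemma gTerm_pow {F : Type*} [Field F] [Algebra (ZMod p) F] {r : ℕ} {t : ZMod p} {x : Fˣ} {y : F}
    (hx : (x : F) ^ p ^ (2 * (r + 1)) = x)
    (hy : y ^ p ^ (2 * (r + 1)) = y + algebraMap _ F t) (s : (ℕ × ℕ) × (ℕ × ℕ)) :
    gTerm p r x y s ^ p ^ (r + 1) = hTerm r t x y s := by
  have e : ∀ z : F, (z ^ p ^ (r + 1)) ^ p ^ (r + 1) = z ^ p ^ (2 * (r + 1)) := by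
    intro z
    rw [← pow_mul, ← pow_add, two_mul]
  rw [gTerm, hTerm, mul_pow, e, mul_pow ((x : F) ^ s.2.1), pow_right_comm, hx,
    pow_right_comm, hy]

lemma smul_pow_p_pow {F : Type*} [Field F] [Algebra (ZMod p) F] (c : ZMod p) (z : F) (n : ℕ) :
    (c • z) ^ p ^ n = c • z ^ p ^ n := by
  rw [smul_pow, ZMod.pow_card_pow]

/-- Since Frobenius is additive and fixes the coefficients, the relation `G ^ P = H` passes to linear
combinations: where a combination of the `H` vanishes, so does that of the `G`. -/
lemma sum_gTerm_eq_zero {F : Type*} [Field F] [Algebra (ZMod p) F] {r : ℕ} {t : ZMod p} {x : Fˣ}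
    {y : F} (hx : (x : F) ^ p ^ (2 * (r + 1)) = x)
    (hy : y ^ p ^ (2 * (r + 1)) = y + algebraMap _ F t) {c : (ℕ × ℕ) × (ℕ × ℕ) → ZMod p}
    (hc : ∑ s ∈ idx p r, c s • hTerm r t x y s = 0) :
    ∑ s ∈ idx p r, c s • gTerm p r x y s = 0 := by
  have : CharP F p := charP_of_injective_algebraMap (algebraMap (ZMod p) F).injective p
  refine pow_eq_zero_iff (n := p ^ (r + 1)) (pow_ne_zero _ (Fact.out : p.Prime).ne_zero) |>.1 ?_
  rw [sum_pow_char_pow, ← hc]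
  refine Finset.sum_congr rfl fun s _ => ?_
  rw [smul_pow_p_pow, gTerm_pow hx hy]

open Polynomial in
/-- If `∑ g (i, l) x ^ i y ^ l` vanishes at all the points `(x, y + c)` with `c` in the prime
field, then each coefficient `∑ g (i, l) x ^ i` vanishes. -/
lemma coeff_vanish {F : Type*} [Field F] [Algebra (ZMod p) F] {m n : ℤ} {g : ℤ × ℕ → ZMod p}
    {x : Fˣ} {y : F}
    (h : ∀ c : ZMod p, ∑ s ∈ box p m n, g s • mono x (y + algebraMap _ F c) s = 0) {l : ℕ}
    (hl : l < p) : ∑ i ∈ Finset.Icc (-m) n, g (i, l) • ((x ^ i : Fˣ) : F) = 0 := by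
  classical
  let Q : F[X] := ∑ l ∈ Finset.range p,
    C (∑ i ∈ Finset.Icc (-m) n, g (i, l) • ((x ^ i : Fˣ) : F)) * X ^ l
  have hQ : Q = 0 := by
    refine eq_zero_of_natDegree_lt_card_of_eval_eq_zero Q (f := fun c : ZMod p => y + algebraMap _ F c)
      (fun c d hcd => (algebraMap (ZMod p) F).injective (add_left_cancel hcd)) ?_ ?_
    · intro c
      have := h c
      rw [box, Finset.sum_product_right] at this
      rw [← this]
      simp only [Q, eval_finsetSum, eval_mul, eval_C, eval_pow, eval_X, mono, Finset.sum_mul,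
        smul_mul_assoc]
    · rw [ZMod.card]
      refine lt_of_le_of_lt (natDegree_sum_le_of_forall_le (n := p - 1) _ _ fun l hl => ?_)
        (Nat.sub_lt (Fact.out : p.Prime).pos one_pos)
      exact (natDegree_C_mul_X_pow_le _ _).trans (by have := Finset.mem_range.1 hl; omega)
  have := congrArg (fun q => q.coeff l) hQ
  simp only [Q, finsetSum_coeff, coeff_C_mul, coeff_X_pow, coeff_zero] at this
  rw [Finset.sum_eq_single l] at this
  · simpa using this
  · intro b _ hb
    rw [if_neg hb.symm, mul_zero]
  · intro h
    exact absurd (Finset.mem_range.2 hl) h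

open Polynomial in
/-- A nonzero Laurent polynomial with exponents between `-m` and `n` has at most `m + n` zeros. -/
lemma card_le_of_vanish {K : Type*} [Field K] [Algebra (ZMod p) K] {m n : ℤ} (hmn : -m ≤ n) {g : ℤ → ZMod p}
    (hg : ∃ i ∈ Finset.Icc (-m) n, g i ≠ 0) (T : Finset Kˣ)
    (hT : ∀ x ∈ T, ∑ i ∈ Finset.Icc (-m) n, g i • ((x ^ i : Kˣ) : K) = 0) :
    (T.card : ℤ) ≤ m + n := by
  classical
  let Q : K[X] := ∑ i ∈ Finset.Icc (-m) n, C (algebraMap _ K (g i)) * X ^ (i + m).toNat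
  have hcoeff : ∀ i ∈ Finset.Icc (-m) n, Q.coeff (i + m).toNat = algebraMap _ K (g i) := by
    intro i hi
    simp only [Q, finsetSum_coeff, coeff_C_mul, coeff_X_pow]
    rw [Finset.sum_eq_single i]
    · simp
    · intro j hj hji
      simp only [Finset.mem_Icc] at hi hj
      rw [if_neg (by omega), mul_zero]
    · intro h; exact absurd hi h
  have hQ : Q ≠ 0 := by
    obtain ⟨i, hi, hgi⟩ := hg
    intro h
    have := hcoeff i hi
    rw [h, coeff_zero] at this
    exact hgi ((map_eq_zero _).1 this.symm)
  have hroot : (T.image (fun u : Kˣ => (u : K))) ⊆ Q.roots.toFinset := by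
    intro z hz
    obtain ⟨x, hx, rfl⟩ := Finset.mem_image.1 hz
    rw [Multiset.mem_toFinset, mem_roots hQ, IsRoot]
    have h1 := congrArg (fun z => ((x ^ m : Kˣ) : K) * z) (hT x hx)
    simp only [mul_zero, Finset.mul_sum] at h1
    rw [← h1]
    simp only [Q, eval_finsetSum, eval_mul, eval_C, eval_pow, eval_X]
    refine Finset.sum_congr rfl fun i hi => ?_
    simp only [Finset.mem_Icc] at hi
    rw [Algebra.smul_def, mul_left_comm, ← Units.val_mul, ← zpow_add, ← Units.val_pow_eq_pow_val,
      ← zpow_natCast, Int.toNat_of_nonneg (by omega), add_comm]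
  have h1 := Finset.card_le_card hroot
  rw [Finset.card_image_of_injective _ Units.val_injective] at h1
  have h2 := (Multiset.toFinset_card_le Q.roots).trans Q.card_roots'
  have h3 : Q.natDegree ≤ (m + n).toNat := by
    refine natDegree_sum_le_of_forall_le _ _ fun i hi => ?_
    refine (natDegree_C_mul_X_pow_le _ _).trans ?_
    simp only [Finset.mem_Icc] at hi
    omega
  omega
end Stepanov

/-! ### The point count -/

namespace Stepanov
variable {p : ℕ} [Fact p.Prime]

open scoped Classical in
/-- Stepanov's bound for the number of `x` with `Tr (a x + b / x) = t` in a field with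
`p ^ (2 (r + 1))` elements: the main term `p ^ (2 r + 1)` is the expected number. -/
theorem point_count {K : Type} [Field K] [Fintype K] [Algebra (ZMod p) K] {r : ℕ}
    (hK : Fintype.card K = p ^ (2 * (r + 1))) {a : ZMod p} (b : ZMod p) (ha : a ≠ 0) (t : ZMod p) :
    ((Finset.univ.filter fun x : Kˣ =>
      Algebra.trace (ZMod p) K (a • (x : K) + b • ((x⁻¹ : Kˣ) : K)) = t).card : ℤ) ≤
      p * (p : ℤ) ^ (2 * r) + 8 * p * (p : ℤ) ^ r := by
  have hp : 2 ≤ p := (Fact.out : p.Prime).two_le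
  have hrank : Module.finrank (ZMod p) K = 2 * (r + 1) := by
    have := Module.card_eq_pow_finrank (K := ZMod p) (V := K)
    rw [hK, ZMod.card] at this
    exact (Nat.pow_right_injective hp this).symm
  obtain ⟨L, _, _, v, x, y, hxy, hvx, hvy, hvc⟩ := exists_laurent b ha
  let F := AlgebraicClosure K
  let β : Kˣ → K := fun u => a • (u : K) + b • ((u⁻¹ : Kˣ) : K)
  let Z := {z : Kˣ × F // Algebra.trace (ZMod p) K (β z.1) = t ∧ z.2 ^ p = z.2 + algebraMap K F (β z.1)}
  have : CharP F p := charP_of_injective_algebraMap (algebraMap (ZMod p) F).injective p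
  -- A relation in this product ring holds at once on the curve, seen through its place at infinity,
  -- and at all the points lying over the `u` with trace `t`.
  let PP := L × (Z → F)
  have : CharP PP p := charP_of_injective_algebraMap (algebraMap (ZMod p) PP).injective p
  let ux : Kˣ → Fˣ := fun u => Units.map (algebraMap K F : K →* F) u
  let X : PPˣ := MulEquiv.prodUnits.symm (x, MulEquiv.piUnits.symm fun z : Z => ux z.1.1)
  let Y : PP := (y, fun z => z.1.2)
  let φL : PP →ₐ[ZMod p] L := AlgHom.fst (ZMod p) L (Z → F)
  let φ : Z → (PP →ₐ[ZMod p] F) := fun z =>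
    (Pi.evalAlgHom (ZMod p) (fun _ : Z => F) z).comp (AlgHom.snd (ZMod p) L (Z → F))
  have hφLX : Units.map (φL : PP →* L) X = x := by ext; rfl
  have hφX : ∀ z, Units.map (φ z : PP →* F) X = ux z.1.1 := by intro z; ext; rfl
  have hφLY : φL Y = y := rfl
  have hφY : ∀ z, φ z Y = z.1.2 := fun z => rfl
  have hβ : ∀ u : Kˣ, algebraMap K F (β u) = a • (ux u : F) + b • (((ux u)⁻¹ : Fˣ) : F) := by
    intro u
    have h1 : ∀ (c : ZMod p) (w : K), algebraMap K F (c • w) = c • algebraMap K F w :=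
      fun c w => map_smul (IsScalarTower.toAlgHom (ZMod p) K F) c w
    simp only [β, map_add, h1]
    rfl
  have hrel : Y ^ p = Y + (a • (X : PP) + b • ((X⁻¹ : PPˣ) : PP)) := by
    refine Prod.ext ?_ (funext fun z => ?_)
    · exact hxy
    · have := z.2.2
      rw [hβ] at this
      exact this
  obtain ⟨c, hc, hH⟩ := exists_aux hrel t r
  have hG : ∑ s ∈ idx p r, c s • gTerm p r X Y s ∈ V (p := p) X Y ((p - 1) * (p ^ r + 1))
      (p * p ^ r * (p ^ r + 3) + (p ^ r - 1) + (p - 1) * (p ^ r + 1)) :=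
    Submodule.sum_mem _ fun s hs => Submodule.smul_mem _ _ (gTerm_mem hrel r hs)
  obtain ⟨g, hg⟩ := exists_coeff hG
  set m : ℤ := (p - 1) * (p ^ r + 1) with hm
  set n : ℤ := p * p ^ r * (p ^ r + 3) + (p ^ r - 1) + (p - 1) * (p ^ r + 1) with hn
  have hGL : ∑ s ∈ box p m n, g s • mono x y s ≠ 0 := by
    have h1 := congrArg φL hg
    simp only [map_sum, map_smul, map_mono, map_gTerm, hφLX, hφLY] at h1
    rw [h1]
    exact sum_gTerm_ne_zero v hvx hvy hvc r c hc
  obtain ⟨⟨i₀, l₀⟩, hs₀, hgs⟩ : ∃ s ∈ box p m n, g s ≠ 0 := by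
    by_contra! h
    exact hGL (Finset.sum_eq_zero fun s hs => by rw [h s hs, zero_smul])
  simp only [box, Finset.mem_product, Finset.mem_range] at hs₀
  have hq : ∀ u : K, u ^ p ^ (2 * (r + 1)) = u := by
    intro u
    rw [← hK]; exact FiniteField.pow_card u
  -- Each point satisfies `x ^ P² = x` and `y ^ P² = y + t`, so the function `∑ c G` vanishes there.
  have hpt : ∀ z : Z, ∑ s ∈ box p m n, g s • mono (ux z.1.1) z.1.2 s = 0 := by
    intro z
    have h1 := congrArg (φ z) hg
    have h2 := congrArg (φ z) hH
    simp only [map_sum, map_smul, map_mono, map_gTerm, map_hTerm, hφX, hφY, map_zero] at h1 h2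
    rw [h1]
    refine sum_gTerm_eq_zero (t := t) ?_ ?_ h2
    · change (algebraMap K F z.1.1) ^ _ = algebraMap K F z.1.1
      rw [← map_pow, hq]
    · obtain ⟨⟨u, y₀⟩, hu, hyu⟩ := z
      simp only at hu hyu ⊢
      rw [pow_p_pow_of hyu, IsScalarTower.algebraMap_apply (ZMod p) K F, ← hu,
        FiniteField.algebraMap_trace_eq_sum_pow, hrank, map_sum]
      simp [Nat.card_eq_fintype_card, ZMod.card]
  -- All `p` points over `u` occur, so the coefficient of each power of `y` vanishes at `u`.
  have hvan : ∀ u : Kˣ, Algebra.trace (ZMod p) K (β u) = t →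
      ∑ i ∈ Finset.Icc (-m) n, g (i, l₀) • ((u ^ i : Kˣ) : K) = 0 := by
    intro u hu
    obtain ⟨y₀, hy₀⟩ : ∃ y₀ : F, y₀ ^ p = y₀ + algebraMap K F (β u) := by
      obtain ⟨y₀, hy₀⟩ := IsAlgClosed.exists_root
        (Polynomial.X ^ p - Polynomial.X - Polynomial.C (algebraMap K F (β u)) : Polynomial F) (by
          have : (Polynomial.X ^ p - Polynomial.X - Polynomial.C (algebraMap K F (β u)) : Polynomial F)
            = Polynomial.X ^ p + (Polynomial.C (-1) * Polynomial.X + Polynomial.C (-algebraMap K F (β u))) := by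
            simp only [Polynomial.C_neg, Polynomial.C_1]; ring
          rw [this, Polynomial.degree_add_eq_left_of_degree_lt
            (Polynomial.degree_linear_le.trans_lt (by
              rw [Polynomial.degree_X_pow]; exact_mod_cast hp)), Polynomial.degree_X_pow]
          exact_mod_cast (by omega : p ≠ 0))
      refine ⟨y₀, ?_⟩
      have : y₀ ^ p - y₀ - algebraMap K F (β u) = 0 := by simpa [Polynomial.IsRoot] using hy₀
      linear_combination this
    have h1 := coeff_vanish (F := F) (x := ux u) (y := y₀) (g := g) (m := m) (n := n) (fun d => by
      refine hpt ⟨(u, y₀ + algebraMap _ F d), hu, ?_⟩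
      simp only
      rw [add_pow_char, hy₀, ← map_pow, ZMod.pow_card]
      ring) hs₀.2
    have h2 : algebraMap K F (∑ i ∈ Finset.Icc (-m) n, g (i, l₀) • ((u ^ i : Kˣ) : K)) = 0 := by
      rw [map_sum, ← h1]
      refine Finset.sum_congr rfl fun i _ => ?_
      exact (map_smul (IsScalarTower.toAlgHom (ZMod p) K F) _ _).trans (by simp [ux])
    exact (map_eq_zero _).1 h2
  have hD : (1 : ℤ) ≤ (p : ℤ) ^ r := by exact_mod_cast Nat.one_le_pow _ _ (by omega)
  have hp' : (2 : ℤ) ≤ p := by exact_mod_cast hp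
  have hfin := card_le_of_vanish (m := m) (n := n) (g := fun i => g (i, l₀)) (by
      have h1 := Finset.mem_Icc.1 hs₀.1
      omega) ⟨i₀, hs₀.1, hgs⟩
    (Finset.univ.filter fun x : Kˣ => Algebra.trace (ZMod p) K (β x) = t)
    (fun u hu => hvan u (Finset.mem_filter.1 hu).2)
  refine hfin.trans ?_
  rw [hm, hn, mul_comm 2 r, pow_mul]
  generalize (p : ℤ) ^ r = D at hD ⊢
  nlinarith [mul_nonneg (by linarith : (0 : ℤ) ≤ (p : ℤ) - 2) (by linarith : (0 : ℤ) ≤ D - 1)]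
end Stepanov

/-! ### The L-function of a Kloosterman sum -/

namespace Stepanov
open Polynomial
variable {p : ℕ} [Fact p.Prime]

/-- The monic polynomial `X ^ n + ∑ v i X ^ i`. -/
noncomputable def monicOf (n : ℕ) (v : Fin n → ZMod p) : (ZMod p)[X] :=
  X ^ n + ∑ i : Fin n, C (v i) * X ^ (i : ℕ)

lemma degree_tail_lt {n : ℕ} (v : Fin n → ZMod p) :
    (∑ i : Fin n, C (v i) * X ^ (i : ℕ) : (ZMod p)[X]).degree < n := by
  refine (degree_sum_le _ _).trans_lt ((Finset.sup_lt_iff (WithBot.bot_lt_coe n)).2 fun i _ => ?_)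
  exact (degree_C_mul_X_pow_le _ _).trans_lt (WithBot.coe_lt_coe.2 i.2)

lemma monicOf_monic {n : ℕ} (v : Fin n → ZMod p) : (monicOf n v).Monic :=
  monic_X_pow_add (degree_tail_lt v)

lemma natDegree_monicOf {n : ℕ} (v : Fin n → ZMod p) : (monicOf n v).natDegree = n := by
  rw [monicOf, natDegree_eq_of_degree_eq_some]
  rw [degree_add_eq_left_of_degree_lt, degree_X_pow]
  rw [degree_X_pow]; exact degree_tail_lt v

lemma coeff_monicOf {n : ℕ} (v : Fin n → ZMod p) (i : Fin n) : (monicOf n v).coeff i = v i := by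
  simp only [monicOf, coeff_add, coeff_X_pow, finsetSum_coeff, coeff_C_mul]
  rw [if_neg i.2.ne, zero_add, Finset.sum_eq_single i]
  · simp
  · intro j _ hj
    rw [if_neg (fun h => hj (Fin.ext h.symm)), mul_zero]
  · simp

lemma monicOf_coeff {n : ℕ} {f : (ZMod p)[X]} (hf : f.Monic) (hn : f.natDegree = n) :
    monicOf n (fun i => f.coeff i) = f := by
  ext m
  rcases lt_trichotomy m n with h | h | h
  · exact coeff_monicOf _ ⟨m, h⟩
  · subst h
    have h1 := (monicOf_monic (fun i : Fin m => f.coeff i)).coeff_natDegree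
    rw [natDegree_monicOf] at h1
    rw [h1, ← hn, hf.coeff_natDegree]
  · rw [coeff_eq_zero_of_natDegree_lt (by rwa [natDegree_monicOf]),
      coeff_eq_zero_of_natDegree_lt (by omega)]

lemma monicOf_injective (n : ℕ) : Function.Injective (monicOf (p := p) n) := by
  intro v w h
  funext i
  rw [← coeff_monicOf v i, h, coeff_monicOf]

open scoped Classical in
/-- The monic polynomials of degree `n` over the prime field. -/
noncomputable def monics (p : ℕ) [Fact p.Prime] (n : ℕ) : Finset (ZMod p)[X] :=
  Finset.univ.image (monicOf n)

lemma mem_monics {n : ℕ} {f : (ZMod p)[X]} : f ∈ monics p n ↔ f.Monic ∧ f.natDegree = n := by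
  classical
  simp only [monics, Finset.mem_image, Finset.mem_univ, true_and]
  constructor
  · rintro ⟨v, rfl⟩
    exact ⟨monicOf_monic v, natDegree_monicOf v⟩
  · rintro ⟨h1, h2⟩
    exact ⟨_, monicOf_coeff h1 h2⟩

lemma sum_monics {n : ℕ} (g : (ZMod p)[X] → ℂ) :
    ∑ f ∈ monics p n, g f = ∑ v : Fin n → ZMod p, g (monicOf n v) := by
  classical
  rw [monics, Finset.sum_image fun v _ w _ h => monicOf_injective n h]

/-- The completely multiplicative function on monic polynomials whose `L`-function is attached to
the Kloosterman sum: it takes the value `ψ (a x + b / x)` at `X - x`. -/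
noncomputable def G (ψ : AddChar (ZMod p) ℂ) (a b : ZMod p) (f : (ZMod p)[X]) : ℂ :=
  if f.coeff 0 = 0 then 0 else ψ (-(a * f.nextCoeff) - b * (f.coeff 1 / f.coeff 0))

variable (ψ : AddChar (ZMod p) ℂ) (a b : ZMod p)

/-- Both the negative of the next-to-leading coefficient (the sum of the roots) and minus the quotient
of the two lowest ones (the sum of the inverses of the roots) are additive under multiplication. -/
lemma G_mul {f g : (ZMod p)[X]} (hf : f.Monic) (hg : g.Monic) :
    G ψ a b (f * g) = G ψ a b f * G ψ a b g := by
  simp only [G, mul_coeff_zero, mul_eq_zero]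
  by_cases h1 : f.coeff 0 = 0
  · simp [h1]
  by_cases h2 : g.coeff 0 = 0
  · simp [h2]
  rw [if_neg (by tauto), if_neg h1, if_neg h2, ← AddChar.map_add_eq_mul, hf.nextCoeff_mul hg,
    mul_coeff_one]
  congr 1
  field_simp
  ring

lemma G_one : G ψ a b 1 = 1 := by
  simp [G, nextCoeff, coeff_one]

lemma G_pow {f : (ZMod p)[X]} (hf : f.Monic) (n : ℕ) : G ψ a b (f ^ n) = G ψ a b f ^ n := by
  induction n with
  | zero => simp [G_one]
  | succ n ih => rw [pow_succ, G_mul _ _ _ (hf.pow n) hf, ih, pow_succ]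

/-- The coefficients of the `L`-function. -/
noncomputable def coeffL (n : ℕ) : ℂ := ∑ f ∈ monics p n, G ψ a b f

lemma coeffL_zero : coeffL ψ a b 0 = 1 := by
  rw [coeffL, sum_monics]
  simp [monicOf, G_one]

lemma sum_units_eq {K : Type*} [Field K] [Fintype K] [DecidableEq K] (f : K → ℂ) :
    ∑ u : Kˣ, f u = ∑ x : K, if x ≠ 0 then f x else 0 := by
  rw [← Finset.sum_filter]
  refine Finset.sum_bij (fun u _ => (u : K)) (by simp) (fun u _ w _ h => Units.ext h) ?_ (by simp)
  intro x hx
  exact ⟨Units.mk0 x (by simpa using hx), Finset.mem_univ _, rfl⟩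

lemma coeffL_one : coeffL ψ a b 1 = ∑ x : (ZMod p)ˣ, ψ (a * x + b * ((x⁻¹ : (ZMod p)ˣ) : ZMod p)) := by
  have e0 : ∑ x : (ZMod p)ˣ, ψ (a * x + b * ((x⁻¹ : (ZMod p)ˣ) : ZMod p)) =
      ∑ x : (ZMod p)ˣ, (fun x => ψ (a * x + b * x⁻¹)) (x : ZMod p) := by
    simp only [Units.val_inv_eq_inv_val]
  rw [e0, sum_units_eq (fun x => ψ (a * x + b * x⁻¹))]
  rw [coeffL, sum_monics]
  have e : ∀ v : Fin 1 → ZMod p, G ψ a b (monicOf 1 v) =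
      if v 0 = 0 then 0 else ψ (-(a * v 0) - b * (1 / v 0)) := by
    intro v
    simp [G, monicOf, nextCoeff, coeff_X]
  simp only [e]
  rw [← (Equiv.funUnique (Fin 1) (ZMod p)).symm.sum_comp]
  simp only [Equiv.funUnique_symm_apply, uniqueElim_const]
  rw [← Equiv.sum_comp (Equiv.neg (ZMod p))]
  refine Finset.sum_congr rfl fun x _ => ?_
  simp only [Equiv.neg_apply, neg_eq_zero]
  rw [ite_not]
  congr 2
  ring

/-- For `X² + u X + v` with `v ≠ 0` the value is `ψ (-(a + b / v) u)`; summing over `u` leaves only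
`v = -b / a`, which contributes `p`. -/
lemma coeffL_two (hψ : ψ ≠ 1) (ha : a ≠ 0) (hb : b ≠ 0) : coeffL ψ a b 2 = p := by
  rw [coeffL, sum_monics]
  have e : ∀ v : Fin 2 → ZMod p, G ψ a b (monicOf 2 v) =
      if v 0 = 0 then 0 else ψ (-(a + b / v 0) * v 1) := by
    intro v
    have h0 := coeff_monicOf v 0
    have h1 := coeff_monicOf v 1
    have h2 : (monicOf 2 v).nextCoeff = v 1 := by
      rw [nextCoeff, natDegree_monicOf]; simpa using h1
    simp only [Fin.val_zero, Fin.val_one] at h0 h1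
    simp only [G, h0, h1, h2]
    congr 2
    ring
  simp only [e]
  rw [← (finTwoArrowEquiv (ZMod p)).symm.sum_comp, Fintype.sum_prod_type]
  simp only [finTwoArrowEquiv_symm_apply, Matrix.cons_val_zero, Matrix.cons_val_one]
  rw [Finset.sum_eq_single (-(b / a))]
  · rw [Finset.sum_congr rfl (g := fun _ => (1 : ℂ))]
    · simp
    · intro y _
      rw [if_neg (by simp [ha, hb])]
      rw [show -(a + b / -(b / a)) * y = 0 by field_simp; ring, AddChar.map_zero_eq_one]
  · intro x _ hx
    split_ifs with h
    · simp
    · have h3 : -(a + b / x) ≠ 0 := by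
        intro h4
        apply hx
        field_simp at h4 ⊢
        linear_combination -h4
      have := AddChar.sum_mulShift (-(a + b / x)) (ψ := ψ) (AddChar.IsPrimitive.of_ne_one hψ)
      rw [if_neg h3, Nat.cast_zero] at this
      rw [← this]
      refine Finset.sum_congr rfl fun y _ => ?_
      rw [mul_comm]
  · simp

/-- From degree `3` on, the next-to-leading coefficient varies independently of the two lowest ones, and
the sum over it vanishes. -/
lemma coeffL_of_three_le (hψ : ψ ≠ 1) (ha : a ≠ 0) {n : ℕ} (hn : 3 ≤ n) : coeffL ψ a b n = 0 := by
  rw [coeffL, sum_monics]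
  obtain ⟨t, ht⟩ : ∃ t, ψ t ≠ 1 := by
    by_contra! h
    exact hψ (by ext t; simp [h t])
  have hn1 : n - 1 < n := by omega
  let w : Fin n → ZMod p := Pi.single ⟨n - 1, hn1⟩ (-(t / a))
  have e : ∀ v : Fin n → ZMod p, G ψ a b (monicOf n (v + w)) = ψ t * G ψ a b (monicOf n v) := by
    intro v
    have h0 : ∀ v : Fin n → ZMod p, (monicOf n v).coeff 0 = v ⟨0, by omega⟩ :=
      fun v => coeff_monicOf v ⟨0, by omega⟩
    have h1 : ∀ v : Fin n → ZMod p, (monicOf n v).coeff 1 = v ⟨1, by omega⟩ :=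
      fun v => coeff_monicOf v ⟨1, by omega⟩
    have h2 : ∀ v : Fin n → ZMod p, (monicOf n v).nextCoeff = v ⟨n - 1, hn1⟩ := by
      intro v
      rw [nextCoeff, natDegree_monicOf, if_neg (by omega)]
      exact coeff_monicOf v ⟨n - 1, hn1⟩
    have w0 : w ⟨0, by omega⟩ = 0 := Pi.single_eq_of_ne (by simp [Fin.ext_iff]; omega) _
    have w1 : w ⟨1, by omega⟩ = 0 := Pi.single_eq_of_ne (by simp [Fin.ext_iff]; omega) _
    have w2 : w ⟨n - 1, hn1⟩ = -(t / a) := Pi.single_eq_same _ _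
    simp only [G, h0, h1, h2, Pi.add_apply, w0, w1, w2, add_zero]
    split_ifs
    · simp
    · rw [← AddChar.map_add_eq_mul]
      congr 1
      field_simp
      ring
  have h := Equiv.sum_comp (Equiv.addRight w) (fun v => G ψ a b (monicOf n v))
  simp only [Equiv.coe_addRight, e, ← Finset.mul_sum] at h
  have : (ψ t - 1) * ∑ v : Fin n → ZMod p, G ψ a b (monicOf n v) = 0 := by
    rw [sub_mul, h, one_mul, sub_self]
  exact (mul_eq_zero.1 this).resolve_left (sub_ne_zero.2 ht)
end Stepanov

/-! ### Monic polynomials and elements of extensions -/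

namespace Stepanov
open Polynomial
variable {p : ℕ} [Fact p.Prime]

section
variable {K : Type*} [Field K] [Fintype K] [Algebra (ZMod p) K]

open scoped Classical in
/-- A monic irreducible polynomial whose degree divides `[K : 𝔽_p]` has all its roots in `K`, and they
are distinct. -/
lemma card_minpoly_eq {P : (ZMod p)[X]} (hm : P.Monic) (hi : Irreducible P)
    (hd : P.natDegree ∣ Module.finrank (ZMod p) K) :
    (Finset.univ.filter fun x : K => minpoly (ZMod p) x = P).card = P.natDegree := by
  have hk : Fintype.card K = p ^ Module.finrank (ZMod p) K := by
    rw [Module.card_eq_pow_finrank (K := ZMod p), ZMod.card]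
  have h0 : Module.finrank (ZMod p) K ≠ 0 := (Module.finrank_pos).ne'
  have hdvd : P ∣ (X ^ Fintype.card K - X : (ZMod p)[X]) := by
    rw [hk]
    have := (hi.natDegree_dvd_iff_dvd_X_pow_card_pow_sub_X (n := Module.finrank (ZMod p) K) ).1 hd
    simpa using this
  have hs : (P.map (algebraMap (ZMod p) K)).Splits := by
    have := FiniteField.isSplittingField_sub K (ZMod p)
    have h1 := IsSplittingField.splits K (X ^ Fintype.card K - X : (ZMod p)[X])
    refine h1.of_dvd ?_ (Polynomial.map_dvd _ hdvd)
    rw [Ne, Polynomial.map_eq_zero]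
    exact FiniteField.X_pow_card_sub_X_ne_zero _ Fintype.one_lt_card
  have hc := Polynomial.card_rootSet_eq_natDegree (K := K)
    (PerfectField.separable_of_irreducible hi) hs
  rw [← hc, ← Set.toFinset_card]
  congr 1
  ext x
  simp only [Finset.mem_filter, Finset.mem_univ, true_and, Set.mem_toFinset, mem_rootSet]
  constructor
  · rintro rfl
    exact ⟨hm.ne_zero, minpoly.aeval _ _⟩
  · rintro ⟨_, h⟩
    exact (minpoly.eq_of_irreducible_of_monic hi h hm).symm

/-- The characteristic polynomial of `x : K` over the prime field, as a power of `minpoly`. -/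
noncomputable def cpoly (x : K) : (ZMod p)[X] :=
  minpoly (ZMod p) x ^ (Module.finrank (ZMod p) K / (minpoly (ZMod p) x).natDegree)

lemma minpoly_monic' (x : K) : (minpoly (ZMod p) x).Monic :=
  minpoly.monic (Algebra.IsIntegral.isIntegral x)

lemma minpoly_dvd' (x : K) : (minpoly (ZMod p) x).natDegree ∣ Module.finrank (ZMod p) K :=
  minpoly.degree_dvd (Algebra.IsIntegral.isIntegral x)

lemma cpoly_monic (x : K) : (cpoly (p := p) x).Monic := (minpoly_monic' x).pow _

lemma natDegree_cpoly (x : K) : (cpoly (p := p) x).natDegree = Module.finrank (ZMod p) K := by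
  rw [cpoly, (minpoly_monic' x).natDegree_pow, Nat.div_mul_cancel (minpoly_dvd' x)]

open UniqueFactorizationMonoid in
open scoped Classical in
/-- An element with minimal polynomial `P` is counted precisely when `P ^ ([K : 𝔽_p] / deg P)` divides
`f`, and each such irreducible `P` belongs to `deg P` elements of `K`. -/
lemma card_cpoly_dvd {f : (ZMod p)[X]} (hf : f.Monic) :
    (Finset.univ.filter fun x : K => cpoly (p := p) x ∣ f).card =
      ∑ P ∈ (normalizedFactors f).toFinset, if P.natDegree ∣ Module.finrank (ZMod p) K ∧
        P ^ (Module.finrank (ZMod p) K / P.natDegree) ∣ f then P.natDegree else 0 := by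
  have h0 : Module.finrank (ZMod p) K ≠ 0 := (Module.finrank_pos).ne'
  rw [Finset.card_eq_sum_card_fiberwise (f := fun x : K => minpoly (ZMod p) x)
    (t := (normalizedFactors f).toFinset)]
  · refine Finset.sum_congr rfl fun P hP => ?_
    rw [Multiset.mem_toFinset, mem_normalizedFactors_iff' hf.ne_zero] at hP
    have hPm : P.Monic := by
      rw [← hP.2.1]; exact Polynomial.monic_normalize hP.1.ne_zero
    rw [Finset.filter_filter]
    split_ifs with h
    · rw [← card_minpoly_eq (K := K) hPm hP.1 h.1]
      congr 1
      ext x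
      simp only [Finset.mem_filter, Finset.mem_univ, true_and, and_iff_right_iff_imp]
      rintro rfl
      exact h.2
    · rw [Finset.card_eq_zero, Finset.filter_eq_empty_iff]
      rintro x - ⟨h1, rfl⟩
      exact h ⟨minpoly_dvd' x, h1⟩
  · intro x hx
    simp only [Finset.coe_filter, Finset.mem_univ, true_and, Set.mem_ofPred_eq] at hx
    rw [Finset.mem_coe, Multiset.mem_toFinset, mem_normalizedFactors_iff' hf.ne_zero]
    have hi := Algebra.IsIntegral.isIntegral (R := ZMod p) x
    refine ⟨minpoly.irreducible hi, (minpoly_monic' x).normalize_eq_self, ?_⟩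
    refine dvd_trans (dvd_pow_self _ ?_) hx
    exact (Nat.div_pos (Nat.le_of_dvd h0.bot_lt (minpoly_dvd' x)) (minpoly.natDegree_pos hi)).ne'
end

open UniqueFactorizationMonoid in
open scoped Classical in
/-- An irreducible factor `P` of multiplicity `e` in `f` is counted `deg P` times for each of the
degrees `k = deg P, 2 deg P, …, e deg P`, so the total is the degree of `f`. -/
lemma sum_card_cpoly_dvd (K : ℕ → Type) [∀ k, Field (K k)] [∀ k, Fintype (K k)]
    [∀ k, Algebra (ZMod p) (K k)] (hK : ∀ k, k ≠ 0 → Module.finrank (ZMod p) (K k) = k)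
    {f : (ZMod p)[X]} {n : ℕ} (hf : f.Monic) (hn : f.natDegree = n) :
    ∑ k ∈ Finset.Icc 1 n, (Finset.univ.filter fun x : K k => cpoly (p := p) x ∣ f).card = n := by
  rw [Finset.sum_congr rfl fun k _ => card_cpoly_dvd hf, Finset.sum_comm]
  have key : ∀ P ∈ (normalizedFactors f).toFinset, (∑ k ∈ Finset.Icc 1 n,
      if P.natDegree ∣ Module.finrank (ZMod p) (K k) ∧
        P ^ (Module.finrank (ZMod p) (K k) / P.natDegree) ∣ f then P.natDegree else 0) =
      (normalizedFactors f).count P • P.natDegree := by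
    intro P hP
    rw [Multiset.mem_toFinset, mem_normalizedFactors_iff' hf.ne_zero] at hP
    have hPm : P.Monic := by
      rw [← hP.2.1]; exact Polynomial.monic_normalize hP.1.ne_zero
    have hd : 0 < P.natDegree := hP.1.natDegree_pos
    have hc : ∀ m, P ^ m ∣ f ↔ m ≤ (normalizedFactors f).count P := by
      intro m
      rw [pow_dvd_iff_le_emultiplicity,
        le_emultiplicity_iff_replicate_le_normalizedFactors hP.1 hf.ne_zero, hP.2.1,
        Multiset.le_count_iff_replicate_le]
    rw [← Finset.sum_filter, Finset.sum_const]
    congr 1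
    trans (Finset.Icc 1 ((normalizedFactors f).count P)).card
    swap
    · rw [Nat.card_Icc, Nat.add_sub_cancel]
    symm
    refine Finset.card_bij (fun m _ => P.natDegree * m) ?_ ?_ ?_
    · intro m hm
      rw [Finset.mem_Icc] at hm
      have h1 := (hc m).2 hm.2
      have h2 := natDegree_le_of_dvd h1 hf.ne_zero
      rw [hPm.natDegree_pow, hn] at h2
      have h3 : 0 < P.natDegree * m := Nat.mul_pos hd hm.1
      rw [Finset.mem_filter, Finset.mem_Icc, hK _ h3.ne', Nat.mul_div_cancel_left _ hd]
      exact ⟨⟨h3, by rw [mul_comm]; exact h2⟩, dvd_mul_right _ _, h1⟩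
    · intro m _ m' _ h
      exact Nat.eq_of_mul_eq_mul_left hd h
    · intro k hk
      rw [Finset.mem_filter, Finset.mem_Icc] at hk
      rw [hK k (by omega)] at hk
      obtain ⟨m, rfl⟩ := hk.2.1
      rw [Nat.mul_div_cancel_left _ hd] at hk
      refine ⟨m, ?_, rfl⟩
      rw [Finset.mem_Icc]
      exact ⟨Nat.pos_of_mul_pos_left hk.1.1 |> fun h => h, (hc m).1 hk.2.2⟩
  rw [Finset.sum_congr rfl key, ← Finset.sum_multiset_map_count]
  have h1 := prod_normalizedFactors_eq hf.ne_zero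
  rw [hf.normalize_eq_self] at h1
  rw [← natDegree_multiset_prod_of_monic, h1, hn]
  intro P hP
  rw [mem_normalizedFactors_iff' hf.ne_zero] at hP
  rw [← hP.2.1]; exact Polynomial.monic_normalize hP.1.ne_zero

end Stepanov

/-! ### Traces via minimal polynomials -/

namespace Stepanov
open Polynomial IntermediateField
variable {p : ℕ} [Fact p.Prime]
variable {K : Type*} [Field K] [Fintype K] [Algebra (ZMod p) K]

lemma minpoly_coeff_zero_ne {x : K} (hx : x ≠ 0) : (minpoly (ZMod p) x).coeff 0 ≠ 0 :=
  minpoly.coeff_zero_ne_zero (Algebra.IsIntegral.isIntegral x) hx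

lemma adjoin_inv_eq (x : K) : (ZMod p)⟮x⁻¹⟯ = (ZMod p)⟮x⟯ := by
  apply le_antisymm
  · rw [adjoin_simple_le_iff]
    exact inv_mem (mem_adjoin_simple_self _ x)
  · rw [adjoin_simple_le_iff]
    simpa using inv_mem (mem_adjoin_simple_self (ZMod p) x⁻¹)

/-- The minimal polynomial of `x⁻¹` is the reversed one, normalised. -/
lemma minpoly_inv {x : K} (hx : x ≠ 0) : minpoly (ZMod p) x⁻¹ =
    C ((minpoly (ZMod p) x).coeff 0)⁻¹ * (minpoly (ZMod p) x).reverse := by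
  set P := minpoly (ZMod p) x with hP
  have hi := Algebra.IsIntegral.isIntegral (R := ZMod p) x
  have hi' := Algebra.IsIntegral.isIntegral (R := ZMod p) x⁻¹
  have h0 : P.coeff 0 ≠ 0 := minpoly_coeff_zero_ne hx
  have ht : P.natTrailingDegree = 0 := natTrailingDegree_eq_zero_of_constantCoeff_ne_zero h0
  have hm : (C (P.coeff 0)⁻¹ * P.reverse).Monic := by
    rw [Monic, leadingCoeff_mul, leadingCoeff_C, reverse_leadingCoeff, trailingCoeff, ht,
      inv_mul_cancel₀ h0]
  have hr : aeval x⁻¹ (C (P.coeff 0)⁻¹ * P.reverse) = 0 := by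
    rw [map_mul]
    have : aeval x⁻¹ P.reverse = 0 := by
      let _ := invertibleOfNonzero hx
      have h := (eval₂_reverse_eq_zero_iff (algebraMap (ZMod p) K) x P).2 (minpoly.aeval _ _)
      rwa [invOf_eq_inv] at h
    rw [this, mul_zero]
  symm
  refine eq_of_monic_of_dvd_of_natDegree_le (minpoly.monic hi') hm (minpoly.dvd _ _ hr) ?_
  rw [← adjoin.finrank hi', adjoin_inv_eq, adjoin.finrank hi]
  refine natDegree_mul_le.trans ?_
  rw [natDegree_C, zero_add, reverse_natDegree]
  exact Nat.sub_le _ _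

lemma nextCoeff_minpoly_inv {x : K} (hx : x ≠ 0) : (minpoly (ZMod p) x⁻¹).nextCoeff =
    (minpoly (ZMod p) x).coeff 1 / (minpoly (ZMod p) x).coeff 0 := by
  have hi := Algebra.IsIntegral.isIntegral (R := ZMod p) x
  have hi' := Algebra.IsIntegral.isIntegral (R := ZMod p) x⁻¹
  have hd : (minpoly (ZMod p) x⁻¹).natDegree = (minpoly (ZMod p) x).natDegree := by
    rw [← adjoin.finrank hi', adjoin_inv_eq, adjoin.finrank hi]
  have hpos := minpoly.natDegree_pos hi
  rw [nextCoeff_of_natDegree_pos (by omega), hd, minpoly_inv hx, coeff_C_mul, coeff_reverse,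
    revAt_le (by omega), Nat.sub_sub_self (by omega)]
  rw [div_eq_inv_mul]

/-- The traces of `x` and `x⁻¹` are read off from the extreme coefficients of the minimal polynomial. -/
lemma trace_formula {x : K} (hx : x ≠ 0) (a b : ZMod p) :
    Algebra.trace (ZMod p) K (a • x + b • x⁻¹) =
    (Module.finrank (ZMod p) K / (minpoly (ZMod p) x).natDegree : ℕ) •
      (-(a * (minpoly (ZMod p) x).nextCoeff) - b * ((minpoly (ZMod p) x).coeff 1 /
        (minpoly (ZMod p) x).coeff 0)) := by
  have hi := Algebra.IsIntegral.isIntegral (R := ZMod p) x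
  have hf : Module.finrank (ZMod p)⟮x⟯ K =
      Module.finrank (ZMod p) K / (minpoly (ZMod p) x).natDegree := by
    rw [← adjoin.finrank hi, ← Module.finrank_mul_finrank (ZMod p) (ZMod p)⟮x⟯ K,
      Nat.mul_div_cancel_left _ Module.finrank_pos]
  rw [map_add, map_smul, map_smul, trace_eq_finrank_mul_minpoly_nextCoeff,
    trace_eq_finrank_mul_minpoly_nextCoeff, adjoin_inv_eq, nextCoeff_minpoly_inv hx, hf]
  simp only [smul_eq_mul, nsmul_eq_mul]
  ring

/-- The function `G` at the characteristic polynomial of `x` is the term at `x` of the Kloosterman sum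
over `K`. -/
lemma G_cpoly (ψ : AddChar (ZMod p) ℂ) (a b : ZMod p) {x : K} (hx : x ≠ 0) :
    G ψ a b (cpoly x) = ψ (Algebra.trace (ZMod p) K (a • x + b • x⁻¹)) := by
  rw [cpoly, G_pow _ _ _ (minpoly_monic' x), trace_formula hx, AddChar.map_nsmul_eq_pow, G,
    if_neg (minpoly_coeff_zero_ne hx)]

lemma G_cpoly_zero (ψ : AddChar (ZMod p) ℂ) (a b : ZMod p) :
    G ψ a b (cpoly (0 : K)) = 0 := by
  have h : Module.finrank (ZMod p) K ≠ 0 := (Module.finrank_pos).ne'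
  rw [cpoly, G_pow _ _ _ (minpoly_monic' _), minpoly.zero]
  simp [G, h]

end Stepanov

/-! ### Weil's bound -/

namespace Stepanov
open Polynomial
variable {p : ℕ} [Fact p.Prime]

/-- The Kloosterman sum over an extension `K` of the prime field; the element `0` contributes nothing,
as `G` vanishes at powers of `X`. -/
noncomputable def extSum (K : Type) [Field K] [Fintype K] [Algebra (ZMod p) K]
    (ψ : AddChar (ZMod p) ℂ) (a b : ZMod p) : ℂ := ∑ x : K, G ψ a b (cpoly x)

open scoped Classical in
lemma sum_monics_dvd (ψ : AddChar (ZMod p) ℂ) (a b : ZMod p) {Q : (ZMod p)[X]} {n k : ℕ}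
    (hQ : Q.Monic) (hk : Q.natDegree = k) (hkn : k ≤ n) :
    ∑ f ∈ (monics p n).filter (Q ∣ ·), G ψ a b f = G ψ a b Q * coeffL ψ a b (n - k) := by
  rw [coeffL, Finset.mul_sum]
  symm
  refine Finset.sum_bij (fun g _ => Q * g) ?_ ?_ ?_ ?_
  · intro g hg
    rw [mem_monics] at hg
    rw [Finset.mem_filter, mem_monics]
    refine ⟨⟨hQ.mul hg.1, ?_⟩, dvd_mul_right _ _⟩
    rw [hQ.natDegree_mul hg.1, hk, hg.2]; omega
  · intro g _ g' _ h
    exact mul_left_cancel₀ hQ.ne_zero h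
  · intro f hf
    rw [Finset.mem_filter, mem_monics] at hf
    obtain ⟨⟨h1, h2⟩, g, rfl⟩ := hf
    have hg : g.Monic := hQ.of_mul_monic_left h1
    refine ⟨g, mem_monics.2 ⟨hg, ?_⟩, rfl⟩
    rw [hQ.natDegree_mul hg, hk] at h2; omega
  · intro g hg
    rw [mem_monics] at hg
    rw [G_mul _ _ _ hQ hg.1]

/-- The relations `n c_n = ∑ S_k c_{n - k}` between the coefficients of the `L`-function and the sums over
the extensions, which amount to its logarithmic derivative. They result from counting, for each monic
`f` of degree `n`, the elements whose characteristic polynomial divides `f`. -/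
lemma newton (K : ℕ → Type) [∀ k, Field (K k)] [∀ k, Fintype (K k)]
    [∀ k, Algebra (ZMod p) (K k)] (hK : ∀ k, k ≠ 0 → Module.finrank (ZMod p) (K k) = k)
    (ψ : AddChar (ZMod p) ℂ) (a b : ZMod p) (n : ℕ) :
    (n : ℂ) * coeffL ψ a b n =
      ∑ k ∈ Finset.Icc 1 n, extSum (K k) ψ a b * coeffL ψ a b (n - k) := by
  classical
  rw [coeffL, Finset.mul_sum]
  have e1 : ∀ f ∈ monics p n, (n : ℂ) * G ψ a b f = ∑ k ∈ Finset.Icc 1 n, ∑ x : K k,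
      if cpoly x ∣ f then G ψ a b f else 0 := by
    intro f hf
    rw [mem_monics] at hf
    rw [← Nat.cast_inj (R := ℂ).2 (sum_card_cpoly_dvd K hK hf.1 hf.2), Nat.cast_sum,
      Finset.sum_mul]
    refine Finset.sum_congr rfl fun k _ => ?_
    rw [← Finset.sum_filter, Finset.sum_const, nsmul_eq_mul]
  rw [Finset.sum_congr rfl e1, Finset.sum_comm]
  refine Finset.sum_congr rfl fun k hk => ?_
  rw [Finset.mem_Icc] at hk
  rw [Finset.sum_comm, extSum, Finset.sum_mul]
  refine Finset.sum_congr rfl fun x _ => ?_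
  rw [← Finset.sum_filter]
  exact sum_monics_dvd ψ a b (cpoly_monic x) ((natDegree_cpoly x).trans (hK k (by omega))) hk.2

/-- The upper bounds for all fibres of the trace, together with the exact total number of points, bound
the fibres from below on average; this suffices since the values of `ψ` sum to zero. -/
lemma extSum_bound {K : Type} [Field K] [Fintype K] [Algebra (ZMod p) K] {r : ℕ}
    (hK : Fintype.card K = p ^ (2 * (r + 1))) {ψ : AddChar (ZMod p) ℂ} (hψ : ψ ≠ 1)
    {a : ZMod p} (b : ZMod p) (ha : a ≠ 0) :
    ‖extSum K ψ a b‖ ≤ 9 * p * (p : ℝ) ^ (r + 1) := by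
  classical
  have h1 : extSum K ψ a b =
      ∑ x : Kˣ, ψ (Algebra.trace (ZMod p) K (a • (x : K) + b • ((x⁻¹ : Kˣ) : K))) := by
    have := sum_units_eq (fun x : K => ψ (Algebra.trace (ZMod p) K (a • x + b • x⁻¹)))
    simp only [Units.val_inv_eq_inv_val]
    rw [this, extSum]
    refine Finset.sum_congr rfl fun x _ => ?_
    split_ifs with h
    · exact G_cpoly ψ a b h
    · rw [not_not] at h; subst h; exact G_cpoly_zero ψ a b
  set N : ZMod p → ℕ := fun t => (Finset.univ.filter fun x : Kˣ =>
    Algebra.trace (ZMod p) K (a • (x : K) + b • ((x⁻¹ : Kˣ) : K)) = t).card with hN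
  set U : ℝ := p * (p : ℝ) ^ (2 * r) + 8 * p * (p : ℝ) ^ r with hU
  have hNU : ∀ t, (N t : ℝ) ≤ U := by
    intro t
    have := point_count hK b ha t
    rw [hU]
    have h2 : ((N t : ℤ) : ℝ) ≤ ((p * (p : ℤ) ^ (2 * r) + 8 * p * (p : ℤ) ^ r : ℤ) : ℝ) := by
      rw [Int.cast_le]; convert this
    push_cast at h2
    exact h2
  have h2 : extSum K ψ a b = ∑ t, ((N t : ℝ) - U : ℝ) * ψ t := by
    have h3 : ∑ t, ψ t = 0 := AddChar.sum_eq_zero_of_ne_one hψ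
    rw [h1, ← Finset.sum_fiberwise (s := Finset.univ)
      (g := fun x : Kˣ => Algebra.trace (ZMod p) K (a • (x : K) + b • ((x⁻¹ : Kˣ) : K)))]
    have : ∑ t, (((N t : ℝ) - U : ℝ) : ℂ) * ψ t = ∑ t, (N t : ℂ) * ψ t - U * ∑ t, ψ t := by
      rw [Finset.mul_sum, ← Finset.sum_sub_distrib]
      refine Finset.sum_congr rfl fun t _ => ?_
      push_cast; ring
    rw [this, h3, mul_zero, sub_zero]
    refine Finset.sum_congr rfl fun t _ => ?_
    rw [hN, ← nsmul_eq_mul, ← Finset.sum_const]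
    refine Finset.sum_congr rfl fun x hx => ?_
    rw [(Finset.mem_filter.1 hx).2]
  have h4 : ∑ t, (N t : ℝ) = (p : ℝ) ^ (2 * (r + 1)) - 1 := by
    rw [← Nat.cast_sum, hN, ← Finset.card_eq_sum_card_fiberwise (fun _ _ => Finset.mem_coe.2 (Finset.mem_univ _)),
      Finset.card_univ, Fintype.card_units, hK, Nat.cast_sub (Nat.one_le_pow _ _ (Nat.Prime.pos Fact.out))]
    push_cast; ring
  have hp : (1 : ℝ) ≤ p := by exact_mod_cast (Nat.Prime.one_lt (Fact.out : p.Prime)).le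
  rw [h2]
  refine (norm_sum_le _ _).trans ?_
  have h5 : ∀ t, ‖(((N t : ℝ) - U : ℝ) : ℂ) * ψ t‖ = U - N t := by
    intro t
    rw [norm_mul, AddChar.norm_apply, mul_one, Complex.norm_real, Real.norm_eq_abs,
      abs_of_nonpos (by linarith [hNU t])]
    ring
  rw [Finset.sum_congr rfl fun t _ => h5 t, Finset.sum_sub_distrib, h4, Finset.sum_const,
    Finset.card_univ, ZMod.card, nsmul_eq_mul, hU]
  have h6 : (1 : ℝ) ≤ p * (p : ℝ) ^ (r + 1) := by
    have := one_le_pow₀ hp (n := r + 1)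
    nlinarith
  have e : (p : ℝ) * (p * (p : ℝ) ^ (2 * r) + 8 * p * (p : ℝ) ^ r) - ((p : ℝ) ^ (2 * (r + 1)) - 1) =
      8 * (p * (p : ℝ) ^ (r + 1)) + 1 := by ring
  rw [e]; linarith

/-- Two complex numbers with product `1` whose power sums are bounded lie in the unit disc. -/
lemma norm_le_one_of_pow_add_pow {u v : ℂ} (huv : u * v = 1) {B : ℝ}
    (h : ∀ m : ℕ, ‖u ^ (m + 1) + v ^ (m + 1)‖ ≤ B) : ‖u‖ ≤ 1 := by
  by_contra! hu
  have hn : ‖u‖ * ‖v‖ = 1 := by rw [← norm_mul, huv, norm_one]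
  have hv : ‖v‖ ≤ 1 := by
    by_contra! hv
    nlinarith
  obtain ⟨m, hm⟩ := pow_unbounded_of_one_lt (B + 1) hu
  have h1 : ‖u‖ ^ m ≤ ‖u‖ ^ (m + 1) := pow_le_pow_right₀ hu.le (by omega)
  have h2 : ‖v‖ ^ (m + 1) ≤ 1 := pow_le_one₀ (norm_nonneg _) hv
  have h3 : ‖u ^ (m + 1)‖ ≤ ‖u ^ (m + 1) + v ^ (m + 1)‖ + ‖v ^ (m + 1)‖ := by
    simpa using norm_sub_le (u ^ (m + 1) + v ^ (m + 1)) (v ^ (m + 1))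
  rw [norm_pow, norm_pow] at h3
  linarith [h m]

/-- **Weil's bound** for Kloosterman sums over a prime field. -/
theorem weil_bound {ψ : AddChar (ZMod p) ℂ} (hψ : ψ ≠ 1) {a b : ZMod p} (ha : a ≠ 0)
    (hb : b ≠ 0) :
    ‖∑ x : (ZMod p)ˣ, ψ (a * x + b * ((x⁻¹ : (ZMod p)ˣ) : ZMod p))‖ ≤ 2 * √p := by
  rw [← coeffL_one ψ a b]
  let K : ℕ → Type := fun k => GaloisField p k
  let _ : ∀ k, Field (K k) := fun k => inferInstanceAs (Field (GaloisField p k))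
  let _ : ∀ k, Algebra (ZMod p) (K k) := fun k => inferInstanceAs (Algebra (ZMod p) (GaloisField p k))
  have : ∀ k, Finite (K k) := fun k => inferInstanceAs (Finite (GaloisField p k))
  let _ : ∀ k, Fintype (K k) := fun k => Fintype.ofFinite _
  have hfr : ∀ k, k ≠ 0 → Module.finrank (ZMod p) (K k) = k := fun k hk => GaloisField.finrank p hk
  have hcard : ∀ k, k ≠ 0 → Fintype.card (K k) = p ^ k := by
    intro k hk
    rw [← Nat.card_eq_fintype_card]; exact GaloisField.card p k hk
  have hN := newton K hfr ψ a b
  set S : ℕ → ℂ := fun k => extSum (K k) ψ a b with hS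
  set c := coeffL ψ a b with hc
  have c0 : c 0 = 1 := coeffL_zero ψ a b
  have c2 : c 2 = p := coeffL_two ψ a b hψ ha hb
  have c3 : ∀ n, 3 ≤ n → c n = 0 := fun n hn => coeffL_of_three_le ψ a b hψ ha hn
  have s1 : S 1 = c 1 := by
    have := hN 1
    simp [c0] at this
    exact this.symm
  have s2 : S 2 = 2 * p - c 1 ^ 2 := by
    have := hN 2
    rw [Finset.sum_Icc_succ_top (by norm_num), Finset.Icc_self, Finset.sum_singleton] at this
    simp only [Nat.sub_self, c0, c2] at this
    have e : extSum (K 1) ψ a b = c 1 := s1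
    rw [e] at this
    have : S 2 = 2 * p - c 1 * c (2 - 1) := by
      rw [hS]; linear_combination -this
    rw [this]; ring
  have s3 : ∀ n, S (n + 3) = - c 1 * S (n + 2) - p * S (n + 1) := by
    intro n
    have h := hN (n + 3)
    rw [c3 _ (by omega), mul_zero, Finset.sum_Icc_succ_top (by omega),
      Finset.sum_Icc_succ_top (by omega), Finset.sum_Icc_succ_top (by omega)] at h
    rw [Finset.sum_eq_zero] at h
    · have e1 : n + 2 + 1 - (n + 2 + 1) = 0 := by omega
      have e2 : n + 2 + 1 - (n + 1 + 1) = 1 := by omega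
      have e3 : n + 2 + 1 - (n + 1) = 2 := by omega
      rw [e1, e2, e3, c0, c2] at h
      simp only [hS]
      linear_combination -h
    · intro k hk
      rw [Finset.mem_Icc] at hk
      rw [c3 _ (by omega), mul_zero]
  -- The inverse roots of the `L`-function `1 + c₁ T + p T²`.
  obtain ⟨α, hα⟩ : ∃ α : ℂ, α ^ 2 + c 1 * α + p = 0 := by
    obtain ⟨d, hd⟩ := IsAlgClosed.exists_pow_nat_eq (c 1 ^ 2 - 4 * (p : ℂ)) (n := 2) (by norm_num)
    exact ⟨(d - c 1) / 2, by linear_combination hd / 4⟩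
  obtain ⟨β, hβ⟩ : ∃ β : ℂ, β = - c 1 - α := ⟨_, rfl⟩
  have hadd : c 1 = -(α + β) := by rw [hβ]; ring
  have hmul : α * β = p := by rw [hβ]; linear_combination -hα
  have hS' : ∀ n, S (n + 1) = -(α ^ (n + 1) + β ^ (n + 1)) ∧
      S (n + 2) = -(α ^ (n + 2) + β ^ (n + 2)) := by
    intro n
    induction n with
    | zero =>
      refine ⟨by rw [zero_add, s1, hadd]; ring, ?_⟩
      rw [zero_add, s2, hadd, ← hmul]; ring
    | succ n ih =>
      refine ⟨ih.2, ?_⟩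
      have := s3 n
      rw [ih.1, ih.2, hadd, ← hmul] at this
      rw [show n + 1 + 2 = n + 3 by ring, this]; ring
  have hp0 : (0 : ℝ) < p := by exact_mod_cast Nat.Prime.pos Fact.out
  have hpc : (p : ℂ) ≠ 0 := by exact_mod_cast ne_of_gt hp0
  -- The numbers `α² / p` and `β² / p` have product `1`, and their power sums are bounded by the
  -- estimate over the extensions of even degree.
  have hB : ∀ m : ℕ, ‖(α ^ 2 / p) ^ (m + 1) + (β ^ 2 / p) ^ (m + 1)‖ ≤ 9 * p := by
    intro m
    have h1 := extSum_bound (K := K (2 * (m + 1))) (hcard _ (by omega)) hψ b ha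
    have h2 : extSum (K (2 * (m + 1))) ψ a b = -(α ^ (2 * (m + 1)) + β ^ (2 * (m + 1))) :=
      (hS' (2 * m)).2
    rw [h2, norm_neg] at h1
    rw [div_pow, div_pow, ← pow_mul, ← pow_mul, ← add_div, norm_div, norm_pow, Complex.norm_natCast,
      div_le_iff₀ (by positivity)]
    exact h1
  have huv : (α ^ 2 / p) * (β ^ 2 / p) = 1 := by
    field_simp
    rw [← mul_pow, hmul]
  have fin : ∀ z : ℂ, ‖z ^ 2 / p‖ ≤ 1 → ‖z‖ ≤ √p := by
    intro z hz
    rw [norm_div, norm_pow, Complex.norm_natCast, div_le_one hp0] at hz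
    exact Real.le_sqrt_of_sq_le hz
  have h1 := fin α (norm_le_one_of_pow_add_pow huv hB)
  have h2 := fin β (norm_le_one_of_pow_add_pow (by rw [mul_comm]; exact huv)
    (fun m => by rw [add_comm]; exact hB m))
  rw [hadd, norm_neg]
  linarith [norm_add_le α β]

end Stepanov

/-! ### Kloosterman sums to composite moduli -/

namespace Stepanov

/-- The Kloosterman sum `∑ e((h u + k / u) / q)` over the units modulo `q`. -/
noncomputable def KS (q : ℕ) [NeZero q] (h k : ℤ) : ℂ :=
  ∑ u : (ZMod q)ˣ, ZMod.stdAddChar ((h : ZMod q) * (u : ZMod q) + (k : ZMod q) * ((u⁻¹ : (ZMod q)ˣ) : ZMod q))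

lemma KS_trivial (q : ℕ) [NeZero q] (h k : ℤ) : ‖KS q h k‖ ≤ q := by
  refine (norm_sum_le _ _).trans ?_
  simp only [AddChar.norm_apply, Finset.sum_const, Finset.card_univ, nsmul_eq_mul, mul_one,
    Nat.cast_le]
  rw [ZMod.card_units_eq_totient]
  exact Nat.totient_le q

lemma KS_comm (q : ℕ) [NeZero q] (h k : ℤ) : KS q h k = KS q k h := by
  refine Fintype.sum_equiv (Equiv.inv _) _ _ fun u => ?_
  simp [add_comm]

/-- The Chinese remainder theorem for additive characters: `z / (m n) = α z / m + β z / n` modulo `1`. -/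
lemma stdAddChar_mul {m n : ℕ} [NeZero m] [NeZero n] {α β : ℤ}
    (h : α * n + β * m = 1) (j : ℤ) :
    (ZMod.stdAddChar ((j : ℤ) : ZMod (m * n)) : ℂ) =
      ZMod.stdAddChar (((α * j : ℤ)) : ZMod m) * ZMod.stdAddChar (((β * j : ℤ)) : ZMod n) := by
  rw [ZMod.stdAddChar_coe, ZMod.stdAddChar_coe, ZMod.stdAddChar_coe, ← Complex.exp_add]
  congr 1
  have hm : (m : ℂ) ≠ 0 := by exact_mod_cast NeZero.ne m
  have hn : (n : ℂ) ≠ 0 := by exact_mod_cast NeZero.ne n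
  have h1 : (α : ℂ) * n + β * m = 1 := by exact_mod_cast h
  push_cast
  field_simp
  linear_combination (-(j:ℂ)) * h1

/-- Twisted multiplicativity of Kloosterman sums. -/
lemma KS_mul {m n : ℕ} [NeZero m] [NeZero n] (hmn : m.Coprime n) {α β : ℤ}
    (hαβ : α * n + β * m = 1) (h k : ℤ) :
    KS (m * n) h k = KS m (α * h) (α * k) * KS n (β * h) (β * k) := by
  rw [KS, KS, KS, Fintype.sum_mul_sum, ← Fintype.sum_prod_type']
  let e : (ZMod (m * n))ˣ ≃* (ZMod m)ˣ × (ZMod n)ˣ :=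
    (Units.mapEquiv (ZMod.chineseRemainder hmn).toMulEquiv).trans MulEquiv.prodUnits
  refine Fintype.sum_equiv e.toEquiv _ _ fun u => ?_
  obtain ⟨x, hx⟩ := ZMod.intCast_surjective (u : ZMod (m * n))
  obtain ⟨y, hy⟩ := ZMod.intCast_surjective ((u⁻¹ : (ZMod (m * n))ˣ) : ZMod (m * n))
  have h1 : ((e u).1 : ZMod m) = x := by
    change (ZMod.chineseRemainder hmn (u : ZMod (m * n))).1 = _
    rw [← hx, map_intCast]; rfl
  have h2 : ((e u).2 : ZMod n) = x := by
    change (ZMod.chineseRemainder hmn (u : ZMod (m * n))).2 = _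
    rw [← hx, map_intCast]; rfl
  have h3 : (((e u).1⁻¹ : (ZMod m)ˣ) : ZMod m) = y := by
    change (ZMod.chineseRemainder hmn ((u⁻¹ : (ZMod (m * n))ˣ) : ZMod (m * n))).1 = _
    rw [← hy, map_intCast]; rfl
  have h4 : (((e u).2⁻¹ : (ZMod n)ˣ) : ZMod n) = y := by
    change (ZMod.chineseRemainder hmn ((u⁻¹ : (ZMod (m * n))ˣ) : ZMod (m * n))).2 = _
    rw [← hy, map_intCast]; rfl
  change _ = ZMod.stdAddChar (((α * h : ℤ) : ZMod m) * ((e u).1 : ZMod m) +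
    ((α * k : ℤ) : ZMod m) * (((e u).1⁻¹ : (ZMod m)ˣ) : ZMod m)) *
    ZMod.stdAddChar (((β * h : ℤ) : ZMod n) * ((e u).2 : ZMod n) +
    ((β * k : ℤ) : ZMod n) * (((e u).2⁻¹ : (ZMod n)ˣ) : ZMod n))
  rw [h1, h2, h3, h4, ← hx, ← hy]
  have := stdAddChar_mul hαβ (h * x + k * y)
  push_cast at this ⊢
  rw [this]
  congr 2 <;> ring

lemma sum_units_char {p : ℕ} [Fact p.Prime] {h : ℤ} (hh : (h : ZMod p) ≠ 0) :
    ∑ u : (ZMod p)ˣ, (ZMod.stdAddChar ((h : ZMod p) * (u : ZMod p)) : ℂ) = -1 := by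
  classical
  rw [sum_units_eq (fun x : ZMod p => (ZMod.stdAddChar ((h : ZMod p) * x) : ℂ))]
  have h1 : ∑ x : ZMod p, (ZMod.stdAddChar ((h : ZMod p) * x) : ℂ) = 0 := by
    have := AddChar.sum_mulShift (R' := ℂ) (h : ZMod p) (ZMod.isPrimitive_stdAddChar p)
    rw [if_neg hh] at this
    simp only [mul_comm]
    simpa using this
  rw [← Finset.sum_filter, Finset.filter_ne', Finset.sum_erase_eq_sub (Finset.mem_univ _), h1]
  simp

/-- Weil's bound, extended to the degenerate sums, where `p` divides `h` or `k`. -/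
lemma KS_prime {p : ℕ} [Fact p.Prime] (h k : ℤ) :
    ‖KS p h k‖ ≤ 2 * √p * √(Int.gcd h p) := by
  have hp : p.Prime := Fact.out
  have hp1 : (1 : ℝ) ≤ p := by exact_mod_cast hp.one_lt.le
  have hs : (1 : ℝ) ≤ √p := by rwa [Real.one_le_sqrt]
  by_cases hh : (h : ZMod p) = 0
  · have : Int.gcd h p = p := by
      rw [ZMod.intCast_zmod_eq_zero_iff_dvd] at hh
      simpa using Int.gcd_eq_right_iff_dvd (by positivity) |>.2 hh
    rw [this]
    refine (KS_trivial p h k).trans ?_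
    rw [mul_assoc, Real.mul_self_sqrt (by positivity)]
    linarith
  · have hg : Int.gcd h p = 1 := by
      rw [ZMod.intCast_zmod_eq_zero_iff_dvd] at hh
      rw [Int.gcd_comm]
      exact Int.isCoprime_iff_gcd_eq_one.1 ((Nat.prime_iff_prime_int.1 hp).coprime_iff_not_dvd.2 hh)
    rw [hg, Nat.cast_one, Real.sqrt_one, mul_one]
    by_cases hk : (k : ZMod p) = 0
    · simp only [KS, hk, zero_mul, add_zero]
      rw [sum_units_char hh]
      simp; linarith
    · refine weil_bound ?_ hh hk
      intro h1
      have := ZMod.isPrimitive_stdAddChar p (one_ne_zero : (1 : ZMod p) ≠ 0)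
      rw [AddChar.mulShift_one] at this
      exact this h1

/-- Bound for Kloosterman sums to an arbitrary modulus `q = s c² d³`: the primes dividing `q` exactly
once are collected in `s` and treated by Weil's bound, whereas the prime powers `p ^ (2 e)` and
`p ^ (2 f + 3)` are estimated trivially. -/
theorem KS_bound (q : ℕ) : ∀ [NeZero q], ∃ s c d : ℕ, 0 < s ∧ 0 < c ∧ 0 < d ∧
    q = s * c ^ 2 * d ^ 3 ∧ ∀ h k : ℤ,
      ‖KS q h k‖ ≤ q.divisors.card * √s * (c ^ 2 * d ^ 3 : ℕ) * √(Int.gcd h q) := by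
  have triv : ∀ (q c d : ℕ) [NeZero q], q = c ^ 2 * d ^ 3 → ∀ h k : ℤ,
      ‖KS q h k‖ ≤ q.divisors.card * √(1 : ℕ) * (c ^ 2 * d ^ 3 : ℕ) * √(Int.gcd h q) := by
    intro q c d _ hq h k
    rw [← hq]
    refine (KS_trivial q h k).trans ?_
    have h1 : (1 : ℝ) ≤ q.divisors.card := by
      exact_mod_cast Finset.card_pos.2 ⟨1, Nat.one_mem_divisors.2 (NeZero.ne q)⟩
    have h2 : (1 : ℝ) ≤ √(Int.gcd h q) := by
      rw [Real.one_le_sqrt]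
      exact_mod_cast Int.gcd_pos_of_ne_zero_right _ (by exact_mod_cast NeZero.ne q)
    have h3 : (0 : ℝ) ≤ q := by positivity
    rw [Nat.cast_one, Real.sqrt_one, mul_one]
    nlinarith [mul_nonneg h3 (sub_nonneg.2 h1), mul_nonneg (mul_nonneg h3 (zero_le_one.trans h1)) (sub_nonneg.2 h2)]
  induction q using Nat.recOnPosPrimePosCoprime with
  | zero => intro h; exact absurd rfl h.out
  | one => intro _; exact ⟨1, 1, 1, one_pos, one_pos, one_pos, rfl, triv 1 1 1 rfl⟩
  | prime_pow p n hp hn =>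
    have : Fact p.Prime := ⟨hp⟩
    intro hne
    rcases Nat.even_or_odd' n with ⟨e, rfl | rfl⟩
    · have h1 : p ^ (2 * e) = (p ^ e) ^ 2 * 1 ^ 3 := by rw [mul_comm, pow_mul]; simp
      exact ⟨1, p ^ e, 1, one_pos, pow_pos hp.pos _, one_pos, by rw [one_mul]; exact h1,
        triv _ (p ^ e) 1 h1⟩
    · rcases Nat.eq_zero_or_pos e with rfl | he
      · refine ⟨p, 1, 1, hp.pos, one_pos, one_pos, by simp, ?_⟩
        intro h k
        have h1 := KS_prime (p := p) h k
        have hd : p.divisors.card = 2 := by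
          rw [hp.divisors, Finset.card_pair hp.one_lt.ne]
        have h2 : ∀ q [NeZero q], q = p → ‖KS q h k‖ ≤
            q.divisors.card * √p * (1 ^ 2 * 1 ^ 3 : ℕ) * √(Int.gcd h q) := by
          rintro q _ rfl
          rw [hd]
          simpa using h1
        exact h2 _ (by simp)
      · obtain ⟨f, rfl⟩ := Nat.exists_eq_add_of_le' he
        have h1 : p ^ (2 * (f + 1) + 1) = (p ^ f) ^ 2 * p ^ 3 := by ring
        exact ⟨1, p ^ f, p, one_pos, pow_pos hp.pos _, hp.pos, by rw [one_mul]; exact h1,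
          triv _ _ _ h1⟩
  | coprime m n hm hn hmn ihm ihn =>
    intro _
    have : NeZero m := ⟨by omega⟩
    have : NeZero n := ⟨by omega⟩
    obtain ⟨s, c, d, hs, hc, hd, hq, H⟩ := @ihm _
    obtain ⟨s', c', d', hs', hc', hd', hq', H'⟩ := @ihn _
    refine ⟨s * s', c * c', d * d', Nat.mul_pos hs hs', Nat.mul_pos hc hc', Nat.mul_pos hd hd',
      by rw [hq, hq']; ring, ?_⟩
    intro h k
    obtain ⟨β, α, hαβ⟩ : IsCoprime (m : ℤ) (n : ℤ) := Nat.isCoprime_iff_coprime.2 hmn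
    have hαβ' : α * n + β * m = 1 := by linarith
    have key := KS_mul hmn hαβ' h k
    have g1 : Int.gcd (α * h) m = Int.gcd h m :=
      Int.gcd_mul_right_left_of_gcd_eq_one (Int.isCoprime_iff_gcd_eq_one.1 ⟨n, β, by linarith⟩)
    have g2 : Int.gcd (β * h) n = Int.gcd h n :=
      Int.gcd_mul_right_left_of_gcd_eq_one (Int.isCoprime_iff_gcd_eq_one.1 ⟨m, α, by linarith⟩)
    have g3 : Int.gcd h (m * n : ℕ) = Int.gcd h m * Int.gcd h n := by
      simp only [Int.gcd, Int.natAbs_natCast]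
      exact hmn.gcd_mul _
    have b1 := H (α * h) (α * k)
    have b2 := H' (β * h) (β * k)
    rw [g1] at b1
    rw [g2] at b2
    have : KS (m * n) h k = KS m (α * h) (α * k) * KS n (β * h) (β * k) := by convert key
    rw [this, norm_mul, g3, hmn.card_divisors_mul]
    refine (mul_le_mul b1 b2 (norm_nonneg _) (by positivity)).trans (le_of_eq ?_)
    push_cast
    rw [Real.sqrt_mul (by positivity), Real.sqrt_mul (by positivity)]
    ring

end Stepanov

/-! ### Completion of Kloosterman sums -/

namespace Stepanov

/-- Partial summation against a sequence in the unit disc with small steps. -/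
lemma abel_bound {u a : ℕ → ℂ} {n : ℕ} {M V : ℝ} (hu : ∀ j < n, ‖u j‖ ≤ 1) (hV : 0 ≤ V)
    (hd : ∀ j, j + 1 < n → ‖u (j + 1) - u j‖ ≤ V)
    (hM : ∀ m ≤ n, ‖∑ j ∈ Finset.range m, a j‖ ≤ M) :
    ‖∑ j ∈ Finset.range n, u j * a j‖ ≤ M * (1 + n * V) := by
  have hM0 : 0 ≤ M := (norm_nonneg _).trans (hM 0 (Nat.zero_le _))
  rcases Nat.eq_zero_or_pos n with rfl | hn
  · simpa using hM0
  have := Finset.sum_range_by_parts u a n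
  simp only [smul_eq_mul] at this
  rw [this]
  refine (norm_sub_le _ _).trans ?_
  have h1 : ‖u (n - 1) * ∑ j ∈ Finset.range n, a j‖ ≤ M := by
    rw [norm_mul]
    calc _ ≤ 1 * M := mul_le_mul (hu _ (by omega)) (hM n le_rfl) (norm_nonneg _) zero_le_one
      _ = M := one_mul _
  have h2 : ‖∑ i ∈ Finset.range (n - 1), (u (i + 1) - u i) * ∑ j ∈ Finset.range (i + 1), a j‖
      ≤ n * (V * M) := by
    refine (norm_sum_le _ _).trans ?_
    calc _ ≤ ∑ i ∈ Finset.range (n - 1), V * M := by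
          refine Finset.sum_le_sum fun i hi => ?_
          rw [Finset.mem_range] at hi
          rw [norm_mul]
          exact mul_le_mul (hd i (by omega)) (hM _ (by omega)) (norm_nonneg _) hV
      _ = ((n - 1 : ℕ) : ℝ) * (V * M) := by simp
      _ ≤ n * (V * M) := by
          refine mul_le_mul_of_nonneg_right ?_ (mul_nonneg hV hM0)
          exact_mod_cast Nat.sub_le _ _
  calc _ ≤ M + n * (V * M) := add_le_add h1 h2
    _ = _ := by ring

/-- `ee t = exp (2 π i t)`. -/
noncomputable def ee (t : ℝ) : ℂ := Complex.exp (2 * Real.pi * Complex.I * t)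

lemma ee_add (s t : ℝ) : ee (s + t) = ee s * ee t := by
  rw [ee, ee, ee, ← Complex.exp_add]; push_cast; ring_nf

lemma ee_eq (t : ℝ) : ee t = Complex.exp ((2 * Real.pi * t : ℝ) * Complex.I) := by
  rw [ee]; push_cast; ring_nf

lemma norm_ee (t : ℝ) : ‖ee t‖ = 1 := by
  rw [ee_eq]; exact Complex.norm_exp_ofReal_mul_I _

lemma ee_int (n : ℤ) : ee n = 1 := by
  rw [ee, Complex.exp_eq_one_iff]
  exact ⟨n, by push_cast; ring⟩

lemma norm_ee_sub_one (t : ℝ) : ‖ee t - 1‖ ≤ 2 * Real.pi * |t| := by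
  rw [ee_eq, mul_comm _ Complex.I]
  refine (Real.norm_exp_I_mul_ofReal_sub_one_le).trans ?_
  rw [Real.norm_eq_abs, abs_mul, abs_of_pos (by positivity)]

lemma norm_ee_sub (s t : ℝ) : ‖ee s - ee t‖ ≤ 2 * Real.pi * |s - t| := by
  have : ee s - ee t = ee t * (ee (s - t) - 1) := by
    rw [mul_sub, ← ee_add]; simp
  rw [this, norm_mul, norm_ee, one_mul]
  exact norm_ee_sub_one _

lemma stdAddChar_eq_ee {q : ℕ} [NeZero q] (j : ℤ) :
    (ZMod.stdAddChar (j : ZMod q) : ℂ) = ee (j / q) := by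
  rw [ZMod.stdAddChar_coe, ee]; push_cast; ring_nf

/-- `|e(v/q) - 1|` is at least four times the distance from `v/q` to the nearest integer. -/
lemma norm_ee_sub_one_ge {q v : ℕ} (h0 : 0 < v) (hv : v < q) :
    2 / ‖ee (-(v / q : ℝ)) - 1‖ ≤ (q / v + q / (q - v : ℕ) : ℝ) / 2 := by
  have hq : (0 : ℝ) < q := by exact_mod_cast h0.trans hv
  have hv' : (0 : ℝ) < v := by exact_mod_cast h0
  have hqv : (0 : ℝ) < (q - v : ℕ) := by exact_mod_cast Nat.sub_pos_of_lt hv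
  have hc : ((q - v : ℕ) : ℝ) = q - v := Nat.cast_sub hv.le
  have hn : ‖ee (-(v / q : ℝ)) - 1‖ = 2 * |Real.sin (Real.pi * (v / q))| := by
    rw [ee_eq, mul_comm _ Complex.I, Complex.norm_exp_I_mul_ofReal_sub_one, Real.norm_eq_abs, abs_mul, abs_two]
    congr 1
    rw [show 2 * Real.pi * -(v / q : ℝ) / 2 = -(Real.pi * (v / q)) by ring, Real.sin_neg, abs_neg]
  have hπ := Real.pi_pos
  rcases le_total ((v : ℝ) / q) (1 / 2) with h | h
  · have h1 := Real.mul_le_sin (x := Real.pi * (v / q)) (by positivity) (by nlinarith)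
    have e : 2 / Real.pi * (Real.pi * (v / q)) = 2 * (v / q) := by field_simp
    rw [e] at h1
    have h2 : 4 * (v / q : ℝ) ≤ ‖ee (-(v / q : ℝ)) - 1‖ := by
      rw [hn]; linarith [le_abs_self (Real.sin (Real.pi * (v / q)))]
    calc 2 / ‖ee (-(v / q : ℝ)) - 1‖ ≤ 2 / (4 * (v / q : ℝ)) := by gcongr
      _ = (q / v : ℝ) / 2 := by field_simp; norm_num
      _ ≤ _ := by
        have : (0 : ℝ) ≤ q / (q - v : ℕ) := by positivity
        linarith
  · have e0 : Real.sin (Real.pi * (v / q)) = Real.sin (Real.pi * ((q - v : ℕ) / q)) := by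
      rw [hc, sub_div, div_self hq.ne', mul_sub, mul_one, Real.sin_pi_sub]
    have h' : ((q - v : ℕ) / q : ℝ) ≤ 1 / 2 := by
      rw [hc, sub_div, div_self hq.ne']; linarith
    have h1 := Real.mul_le_sin (x := Real.pi * ((q - v : ℕ) / q)) (by positivity) (by nlinarith)
    have e : 2 / Real.pi * (Real.pi * ((q - v : ℕ) / q)) = 2 * ((q - v : ℕ) / q : ℝ) := by
      field_simp
    rw [e] at h1
    have h2 : 4 * ((q - v : ℕ) / q : ℝ) ≤ ‖ee (-(v / q : ℝ)) - 1‖ := by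
      rw [hn, e0]; linarith [le_abs_self (Real.sin (Real.pi * ((q - v : ℕ) / q)))]
    calc 2 / ‖ee (-(v / q : ℝ)) - 1‖ ≤ 2 / (4 * ((q - v : ℕ) / q : ℝ)) := by gcongr
      _ = (q / (q - v : ℕ) : ℝ) / 2 := by field_simp; norm_num
      _ ≤ _ := by
        have : (0 : ℝ) ≤ q / v := by positivity
        linarith

/-- The term `e((k c - h / c) / q)`, supported on `c` prime to `q`. -/
noncomputable def kterm (q : ℕ) [NeZero q] (k h : ℤ) (c : ℕ) : ℂ :=
  if c.Coprime q then ZMod.stdAddChar ((k : ZMod q) * (c : ZMod q) - (h : ZMod q) * (c : ZMod q)⁻¹)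
  else 0

/-- The finite Fourier expansion modulo `q`, whose coefficients are complete Kloosterman sums. -/
lemma kterm_expand (q : ℕ) [NeZero q] (k h : ℤ) (c : ℕ) :
    kterm q k h c = (q : ℂ)⁻¹ * ∑ y : ZMod q, ZMod.stdAddChar (-(y * (c : ZMod q))) *
      KS q (k + y.val) (-h) := by
  have h1 : ∀ u : (ZMod q)ˣ, (∑ y : ZMod q, ZMod.stdAddChar (y * ((u : ZMod q) - (c : ZMod q))) : ℂ) =
      if (u : ZMod q) = c then (q : ℂ) else 0 := by
    intro u
    have := AddChar.sum_mulShift (R' := ℂ) ((u : ZMod q) - (c : ZMod q)) (ZMod.isPrimitive_stdAddChar q)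
    rw [this, ZMod.card]
    simp [sub_eq_zero]
  have h2 : ∀ y : ZMod q, (ZMod.stdAddChar (-(y * (c : ZMod q))) * KS q (k + y.val) (-h) : ℂ) =
      ∑ u : (ZMod q)ˣ, ZMod.stdAddChar ((k : ZMod q) * (u : ZMod q) -
        (h : ZMod q) * ((u⁻¹ : (ZMod q)ˣ) : ZMod q)) * ZMod.stdAddChar (y * ((u : ZMod q) - (c : ZMod q))) := by
    intro y
    rw [KS, Finset.mul_sum]
    refine Finset.sum_congr rfl fun u _ => ?_
    rw [← AddChar.map_add_eq_mul, ← AddChar.map_add_eq_mul]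
    congr 1
    push_cast
    rw [ZMod.natCast_zmod_val]
    ring
  rw [Finset.sum_congr rfl fun y _ => h2 y, Finset.sum_comm]
  simp only [← Finset.mul_sum, h1]
  have hq : (q : ℂ) ≠ 0 := by exact_mod_cast NeZero.ne q
  rw [kterm]
  split_ifs with hc
  · rw [Finset.sum_eq_single (ZMod.unitOfCoprime c hc)]
    · rw [ZMod.coe_unitOfCoprime, if_pos rfl, ← ZMod.inv_coe_unit, ZMod.coe_unitOfCoprime]
      field_simp
    · intro u _ hu
      rw [if_neg, mul_zero]
      intro h
      exact hu (Units.ext h)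
    · simp
  · rw [Finset.sum_eq_zero, mul_zero]
    intro u _
    rw [if_neg, mul_zero]
    intro h
    apply hc
    rw [← ZMod.isUnit_iff_coprime, ← h]
    exact u.isUnit

/-- A geometric sum with ratio `e(-v / q)`; the bound is symmetric under `v ↦ q - v`. -/
lemma norm_geom_le {q : ℕ} [NeZero q] (N m : ℕ) {v : ℕ} (h0 : 0 < v) (hv : v < q) :
    ‖∑ j ∈ Finset.range m, (ZMod.stdAddChar (-((v : ZMod q) * ((N + j : ℕ) : ZMod q))) : ℂ)‖ ≤
      (q / v + q / (q - v : ℕ) : ℝ) / 2 := by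
  have e : ∀ j : ℕ, (ZMod.stdAddChar (-((v : ZMod q) * ((N + j : ℕ) : ZMod q))) : ℂ) =
      ZMod.stdAddChar (-((v : ZMod q) * (N : ZMod q))) * ZMod.stdAddChar (-(v : ZMod q)) ^ j := by
    intro j
    rw [← AddChar.map_nsmul_eq_pow, ← AddChar.map_add_eq_mul]
    congr 1
    push_cast
    rw [nsmul_eq_mul]; ring
  have e2 : (ZMod.stdAddChar (-(v : ZMod q)) : ℂ) = ee (-(v / q : ℝ)) := by
    have := stdAddChar_eq_ee (q := q) (-(v : ℤ))
    push_cast at this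
    rw [this]; congr 1; ring
  have hge := norm_ee_sub_one_ge h0 hv
  have hne : ee (-(v / q : ℝ)) ≠ 1 := by
    rw [← e2]
    intro h
    have := (ZMod.isPrimitive_stdAddChar q).zmod_char_eq_one_iff q (-(v : ZMod q)) |>.1 h
    rw [neg_eq_zero, ZMod.natCast_eq_zero_iff] at this
    exact absurd (Nat.le_of_dvd h0 this) (by omega)
  rw [Finset.sum_congr rfl fun j _ => e j, ← Finset.mul_sum, norm_mul, AddChar.norm_apply, one_mul,
    e2, geom_sum_eq hne, norm_div]
  refine le_trans ?_ hge
  have : 0 < ‖ee (-(v / q : ℝ)) - 1‖ := norm_pos_iff.2 (sub_ne_zero.2 hne)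
  gcongr
  refine (norm_sub_le _ _).trans ?_
  rw [norm_pow, norm_ee, one_pow, norm_one]; norm_num

/-- Incomplete Kloosterman sums over at most a full period, by completion. -/
lemma incomplete_bound {q : ℕ} [NeZero q] (k h : ℤ) {W : ℝ}
    (hW : ∀ k' : ℤ, ‖KS q k' (-h)‖ ≤ W) (N : ℕ) {m : ℕ} (hm : m ≤ q) :
    ‖∑ j ∈ Finset.range m, kterm q k h (N + j)‖ ≤ W * (2 + Real.log q) := by
  have hq : (0 : ℝ) < q := by exact_mod_cast Nat.pos_of_ne_zero (NeZero.ne q)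
  have hW0 : 0 ≤ W := (norm_nonneg _).trans (hW 0)
  simp only [kterm_expand]
  rw [← Finset.mul_sum, Finset.sum_comm]
  simp only [← Finset.sum_mul]
  rw [norm_mul, norm_inv, Complex.norm_natCast, inv_mul_le_iff₀ hq]
  set D : ZMod q → ℝ := fun y =>
    ‖∑ j ∈ Finset.range m, (ZMod.stdAddChar (-(y * ((N + j : ℕ) : ZMod q))) : ℂ)‖ with hD
  have h1 : ∑ y : ZMod q, D y ≤ q * (2 + Real.log q) := by
    have e1 : ∑ y : ZMod q, D y = ∑ v ∈ Finset.range q, D (v : ZMod q) := by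
      symm
      refine Finset.sum_bij (fun v _ => (v : ZMod q)) (by simp) ?_ ?_ (by simp)
      · intro v hv w hw h
        rw [Finset.mem_range] at hv hw
        rw [ZMod.natCast_eq_natCast_iff'] at h
        rwa [Nat.mod_eq_of_lt hv, Nat.mod_eq_of_lt hw] at h
      · intro y _
        exact ⟨y.val, Finset.mem_range.2 (ZMod.val_lt y), ZMod.natCast_zmod_val y⟩
    obtain ⟨r, hr⟩ : ∃ r, q = r + 1 := ⟨q - 1, by have := NeZero.ne q; omega⟩
    have hb : ∀ v ∈ Finset.range r, D ((v + 1 : ℕ) : ZMod q) ≤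
        (q / (v + 1 : ℕ) + q / (r - 1 - v + 1 : ℕ) : ℝ) / 2 := by
      intro v hv
      rw [Finset.mem_range] at hv
      have := norm_geom_le (q := q) N m (v := v + 1) (by omega) (by omega)
      rwa [show q - (v + 1) = r - 1 - v + 1 by omega] at this
    have h0 : D ((0 : ℕ) : ZMod q) ≤ q := by
      rw [hD]
      simp only [Nat.cast_zero, zero_mul, neg_zero, AddChar.map_zero_eq_one, Finset.sum_const,
        Finset.card_range, nsmul_eq_mul, mul_one, Complex.norm_natCast]
      exact_mod_cast hm
    have hH : ∑ v ∈ Finset.range r, (q / (v + 1 : ℕ) : ℝ) ≤ q * (1 + Real.log q) := by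
      have : ∑ v ∈ Finset.range r, (q / (v + 1 : ℕ) : ℝ) = q * (harmonic r : ℝ) := by
        rw [harmonic, Rat.cast_sum, Finset.mul_sum]
        refine Finset.sum_congr rfl fun v _ => ?_
        push_cast; rw [div_eq_mul_inv]
      rw [this]
      gcongr
      refine (harmonic_le_one_add_log r).trans ?_
      rcases Nat.eq_zero_or_pos r with rfl | hr0
      · simp [hr]
      have hr0' : (0 : ℝ) < r := by exact_mod_cast hr0
      gcongr
      rw [hr]; linarith
    have hH2 : ∑ v ∈ Finset.range r, (q / (r - 1 - v + 1 : ℕ) : ℝ) ≤ q * (1 + Real.log q) := by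
      rw [Finset.sum_range_reflect (fun v => (q / (v + 1 : ℕ) : ℝ)) r]
      exact hH
    rw [e1, show Finset.range q = Finset.range (r + 1) by rw [hr], Finset.sum_range_succ']
    have := Finset.sum_le_sum hb
    rw [← Finset.sum_div, Finset.sum_add_distrib] at this
    linarith
  calc _ ≤ ∑ y : ZMod q, D y * W := by
        refine (norm_sum_le _ _).trans (Finset.sum_le_sum fun y _ => ?_)
        rw [norm_mul]
        exact mul_le_mul_of_nonneg_left (hW _) (norm_nonneg _)
    _ = (∑ y : ZMod q, D y) * W := by rw [Finset.sum_mul]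
    _ ≤ q * (2 + Real.log q) * W := mul_le_mul_of_nonneg_right h1 hW0
    _ = _ := by ring

end Stepanov

/-! ### Exponential sums over dyadic ranges -/

namespace Stepanov

/-- A linear phase with denominator `q` is absorbed in the first argument of the Kloosterman sum. -/
lemma kterm_twist (q : ℕ) [NeZero q] (k h : ℤ) (c : ℕ) :
    kterm q k h c = ee (k * c / q) * kterm q 0 h c := by
  rw [kterm, kterm]
  split_ifs
  · have := stdAddChar_eq_ee (q := q) (k * c)
    push_cast at this
    rw [← this, ← AddChar.map_add_eq_mul]
    congr 1
    push_cast; ring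
  · simp

lemma norm_kterm_le (q : ℕ) [NeZero q] (k h : ℤ) (c : ℕ) : ‖kterm q k h c‖ ≤ 1 := by
  rw [kterm]
  split_ifs
  · rw [AddChar.norm_apply]
  · simp

/-- On a short block the phase `A / c` is linear up to a bounded total variation, so the block is
controlled by incomplete Kloosterman sums. -/
lemma block_bound {q : ℕ} [NeZero q] (h : ℤ) {W : ℝ} (hW : ∀ k' : ℤ, ‖KS q k' (-h)‖ ≤ W)
    {A : ℝ} (hA : 0 ≤ A) {C c₀ l : ℕ} (hC : 0 < C) (hc : C ≤ c₀) (hl : l ≤ q)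
    (hAl : l ≤ 1 ∨ A * l ^ 2 ≤ C ^ 3) :
    ‖∑ j ∈ Finset.range l, ee (A / (c₀ + j : ℕ)) * kterm q 0 h (c₀ + j)‖ ≤
      17 * (W * (2 + Real.log q)) := by
  have hq : (0 : ℝ) < q := by exact_mod_cast Nat.pos_of_ne_zero (NeZero.ne q)
  have hC' : (0 : ℝ) < C := by exact_mod_cast hC
  have hc' : (C : ℝ) ≤ c₀ := by exact_mod_cast hc
  have hc0 : (0 : ℝ) < c₀ := by linarith only [hC', hc']
  -- The slope of `A / c` at the beginning of the block, rounded to a multiple of `1 / q`.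
  set θ : ℝ := -A / c₀ ^ 2 with hθ
  set k₀ : ℤ := round (θ * q) with hk₀
  have hk : |θ - k₀ / q| ≤ 1 / (2 * q) := by
    have h1 := abs_sub_round (θ * q)
    have e : θ - k₀ / q = (θ * q - k₀) / q := by field_simp
    rw [e, abs_div, abs_of_pos hq, div_le_div_iff₀ hq (by positivity)]
    nlinarith
  have e1 : ∀ j : ℕ, ee (A / (c₀ + j : ℕ)) * kterm q 0 h (c₀ + j) =
      ee (A / (c₀ + j : ℕ) - k₀ * (c₀ + j : ℕ) / q) * kterm q k₀ h (c₀ + j) := by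
    intro j
    rw [kterm_twist q k₀ h, ← mul_assoc, ← ee_add, sub_add_cancel]
  rw [Finset.sum_congr rfl fun j _ => e1 j]
  have hM : ∀ m ≤ l, ‖∑ j ∈ Finset.range m, kterm q k₀ h (c₀ + j)‖ ≤ W * (2 + Real.log q) :=
    fun m hm => incomplete_bound k₀ h hW c₀ (hm.trans hl)
  have hM0 : 0 ≤ W * (2 + Real.log q) := (norm_nonneg _).trans (hM 0 (Nat.zero_le _))
  rcases hAl with hl1 | hAl
  · refine (abel_bound (V := 0) (fun j _ => (norm_ee _).le) le_rfl
      (fun j hj => absurd hj (by omega)) hM).trans ?_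
    rw [mul_zero, add_zero]; linarith
  -- The steps of the remaining phase are at most `V`, and `1 + l V ≤ 1 + 5 π < 17`.
  set V : ℝ := 2 * Real.pi * (1 / (2 * q) + 2 * A * l / C ^ 3) with hV
  have hV0 : 0 ≤ V := by positivity
  refine (abel_bound (V := V) (fun j _ => (norm_ee _).le) hV0 ?_ hM).trans ?_
  · intro j hj
    refine (norm_ee_sub _ _).trans ?_
    rw [hV]
    refine mul_le_mul_of_nonneg_left ?_ (by positivity)
    have hj' : ((j : ℝ)) + 1 ≤ l := by exact_mod_cast hj.le
    have hj0 : (0 : ℝ) ≤ j := by positivity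
    have e : A / (c₀ + (j + 1) : ℕ) - k₀ * (c₀ + (j + 1) : ℕ) / q -
        (A / (c₀ + j : ℕ) - k₀ * (c₀ + j : ℕ) / q) =
        (θ - k₀ / q) + A * (1 / (c₀ : ℝ) ^ 2 - 1 / ((c₀ + j) * (c₀ + j + 1))) := by
      rw [hθ]; push_cast
      have : (c₀ : ℝ) + j ≠ 0 := by positivity
      have : (c₀ : ℝ) + j + 1 ≠ 0 := by positivity
      rw [← add_assoc (c₀ : ℝ) j 1]
      field_simp; ring
    rw [e]
    refine (abs_add_le _ _).trans (add_le_add hk ?_)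
    rw [abs_mul, abs_of_nonneg hA]
    have h2 : |1 / (c₀ : ℝ) ^ 2 - 1 / ((c₀ + j) * (c₀ + j + 1))| ≤ 2 * (l : ℝ) / (C : ℝ) ^ 3 := by
      have e2 : 1 / (c₀ : ℝ) ^ 2 - 1 / ((c₀ + j) * (c₀ + j + 1)) =
          (c₀ * (2 * j + 1) + j * (j + 1)) / (c₀ ^ 2 * ((c₀ + j) * (c₀ + j + 1))) := by
        have : (c₀ : ℝ) + j ≠ 0 := by positivity
        have : (c₀ : ℝ) + j + 1 ≠ 0 := by positivity
        field_simp; ring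
      rw [e2, abs_of_nonneg (by positivity)]
      calc _ ≤ (2 * (l : ℝ) * (c₀ + j + 1)) / ((c₀ : ℝ) ^ 2 * ((c₀ + j) * (c₀ + j + 1))) := by
            gcongr
            nlinarith
        _ = 2 * (l : ℝ) / ((c₀ : ℝ) ^ 2 * (c₀ + j)) := by
            have : (c₀ : ℝ) + j ≠ 0 := by positivity
            have : (c₀ : ℝ) + j + 1 ≠ 0 := by positivity
            field_simp
        _ ≤ 2 * (l : ℝ) / (C : ℝ) ^ 3 := by
            have : (C : ℝ) ^ 3 ≤ c₀ ^ 2 * (c₀ + j) := by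
              calc (C : ℝ) ^ 3 = C ^ 2 * C := by ring
                _ ≤ _ := by gcongr; linarith
            gcongr
    calc A * |1 / (c₀ : ℝ) ^ 2 - 1 / ((c₀ + j) * (c₀ + j + 1))| ≤ A * (2 * (l : ℝ) / (C : ℝ) ^ 3) := by gcongr
      _ = _ := by ring
  · have h3 : l * V ≤ 16 := by
      have h4 : (l : ℝ) * (1 / (2 * q)) ≤ 1 / 2 := by
        have : (l : ℝ) ≤ q := by exact_mod_cast hl
        rw [mul_one_div, div_le_div_iff₀ (by positivity) (by norm_num)]; linarith
      have h5 : (l : ℝ) * (2 * A * l / C ^ 3) ≤ 2 := by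
        rw [mul_div_assoc', div_le_iff₀ (by positivity)]; nlinarith
      have hπ := Real.pi_lt_d2
      have hπ0 := Real.pi_pos
      have : l * V = 2 * Real.pi * (l * (1 / (2 * q)) + l * (2 * A * l / C ^ 3)) := by
        rw [hV]; ring
      rw [this]
      nlinarith
    nlinarith

lemma blocks_sum {f : ℕ → ℂ} {N₀ l : ℕ} (hl : 0 < l) {B : ℝ}
    (hB : ∀ N ≥ N₀, ∀ m ≤ l, ‖∑ j ∈ Finset.range m, f (N + j)‖ ≤ B) (n : ℕ) :
    ∀ N ≥ N₀, ‖∑ j ∈ Finset.range n, f (N + j)‖ ≤ B * (1 + n / l) := by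
  have hB0 : 0 ≤ B := (norm_nonneg _).trans (hB N₀ le_rfl 0 (Nat.zero_le _))
  have hl' : (0 : ℝ) < l := by exact_mod_cast hl
  induction n using Nat.strong_induction_on with
  | _ n ih =>
    intro N hN
    rcases le_or_gt n l with h | h
    · refine (hB N hN n h).trans ?_
      have : (0 : ℝ) ≤ n / l := by positivity
      nlinarith
    · obtain ⟨m, rfl⟩ := Nat.exists_eq_add_of_le h.le
      rw [Finset.sum_range_add]
      have h1 := ih m (by omega) (N + l) (by omega)
      simp only [← add_assoc] at h1 ⊢
      refine (norm_add_le _ _).trans ?_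
      have h2 := hB N hN l le_rfl
      have e : B * (1 + ((l + m : ℕ) : ℝ) / l) = B + B * (1 + m / l) := by
        push_cast; field_simp
      rw [e]
      exact add_le_add h2 h1

/-- The block length is the smaller of `q` and roughly `√(C³ / A)`, but at least `1`; the last inequality
bounds the number of blocks in a dyadic range. -/
lemma exists_block_length {A : ℝ} (hA : 0 ≤ A) {C q : ℕ} (hC : 0 < C) (hq : 0 < q) :
    ∃ l : ℕ, 0 < l ∧ l ≤ q ∧ (l ≤ 1 ∨ A * l ^ 2 ≤ (C : ℝ) ^ 3) ∧
      (C : ℝ) / l ≤ C / q + 2 * √(A / C) := by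
  have hC' : (0 : ℝ) < C := by exact_mod_cast hC
  by_cases h : A * (q : ℝ) ^ 2 ≤ (C : ℝ) ^ 3
  · exact ⟨q, hq, le_rfl, Or.inr h, by have := Real.sqrt_nonneg (A / C); linarith⟩
  have hA0 : 0 < A := by
    rcases hA.eq_or_lt with rfl | h'
    · exact absurd (by rw [zero_mul]; positivity) h
    · exact h'
  rw [not_le] at h
  have hCq : (0 : ℝ) ≤ C / q := by positivity
  by_cases h1 : A ≤ (C : ℝ) ^ 3
  · set y : ℝ := √((C : ℝ) ^ 3 / A) with hy
    have hy2 : y ^ 2 = (C : ℝ) ^ 3 / A := Real.sq_sqrt (by positivity)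
    have hy1 : 1 ≤ y := by
      rw [hy, Real.one_le_sqrt, le_div_iff₀ hA0]; linarith
    have hyq : y ≤ q := by
      rw [hy]
      apply Real.sqrt_le_iff.2
      refine ⟨by positivity, ?_⟩
      rw [div_le_iff₀ hA0]; linarith
    have hf1 : 1 ≤ ⌊y⌋₊ := Nat.le_floor (by simpa using hy1)
    have hf2 : (⌊y⌋₊ : ℝ) ≤ y := Nat.floor_le (by linarith)
    have hf3 : y < ⌊y⌋₊ + 1 := Nat.lt_floor_add_one y
    have hf1' : (1 : ℝ) ≤ ⌊y⌋₊ := by exact_mod_cast hf1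
    refine ⟨⌊y⌋₊, hf1, Nat.floor_le_of_le hyq, Or.inr ?_, ?_⟩
    · calc A * (⌊y⌋₊ : ℝ) ^ 2 ≤ A * y ^ 2 := by gcongr
        _ = (C : ℝ) ^ 3 := by rw [hy2]; field_simp
    · have e : (C : ℝ) / y = √(A / C) := by
        symm
        rw [Real.sqrt_eq_iff_mul_self_eq (by positivity) (by positivity)]
        rw [← sq, div_pow, hy2]; field_simp
      have : (C : ℝ) / ⌊y⌋₊ ≤ 2 * (C / y) := by
        rw [mul_div_assoc', div_le_div_iff₀ (by linarith) (by linarith)]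
        nlinarith
      rw [e] at this
      linarith
  · rw [not_le] at h1
    refine ⟨1, one_pos, hq, Or.inl le_rfl, ?_⟩
    have : (C : ℝ) ≤ √(A / C) := by
      apply Real.le_sqrt_of_sq_le
      rw [le_div_iff₀ hC']; nlinarith
    rw [Nat.cast_one, div_one]
    linarith [Real.sqrt_nonneg (A / C)]

/-- Exponential sum over a dyadic range. -/
lemma dyadic_exp_bound {q : ℕ} [NeZero q] (h : ℤ) {W : ℝ} (hW : ∀ k' : ℤ, ‖KS q k' (-h)‖ ≤ W)
    {A : ℝ} (hA : 0 ≤ A) {C n : ℕ} (hC : 0 < C) (hn : n ≤ 2 * C) :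
    ‖∑ j ∈ Finset.range n, ee (A / (C + 1 + j : ℕ)) * kterm q 0 h (C + 1 + j)‖ ≤
      17 * (W * (2 + Real.log q)) * (1 + 2 * (C / q + 2 * √(A / C))) := by
  obtain ⟨l, hl0, hlq, hl, hCl⟩ := exists_block_length hA hC (Nat.pos_of_ne_zero (NeZero.ne q))
  have hB : ∀ N ≥ C, ∀ m ≤ l, ‖∑ j ∈ Finset.range m, ee (A / (N + j : ℕ)) * kterm q 0 h (N + j)‖ ≤
      17 * (W * (2 + Real.log q)) := by
    intro N hN m hm
    refine block_bound h hW hA hC hN (hm.trans hlq) ?_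
    rcases hl with h1 | h1
    · exact Or.inl (hm.trans h1)
    · refine Or.inr (le_trans ?_ h1)
      have : (m : ℝ) ≤ l := by exact_mod_cast hm
      gcongr
  have hB0 := (norm_nonneg _).trans (hB C le_rfl 0 (Nat.zero_le _))
  refine (blocks_sum (f := fun c => ee (A / (c : ℕ)) * kterm q 0 h c) hl0 hB n (C + 1) (by simp)).trans ?_
  refine mul_le_mul_of_nonneg_left ?_ hB0
  have : (n : ℝ) / l ≤ 2 * (C / l) := by
    have : (n : ℝ) ≤ 2 * C := by exact_mod_cast hn
    rw [mul_div_assoc']; gcongr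
  linarith

end Stepanov

/-! ### The sawtooth function -/

namespace Stepanov

/-- The sawtooth function `{t} - 1/2`. -/
noncomputable def saw (t : ℝ) : ℝ := Int.fract t - 1 / 2

lemma abs_saw_le (t : ℝ) : |saw t| ≤ 1 := by
  rw [saw, abs_le]
  constructor <;> linarith [Int.fract_nonneg t, Int.fract_lt_one t]

/-- A continuous periodic primitive of the sawtooth function. -/
noncomputable def sawInt (t : ℝ) : ℝ := (Int.fract t ^ 2 - Int.fract t) / 2

/-- The sawtooth function has slope `1` and jumps only downwards, so it exceeds its average over the
preceding interval of length `δ` by at most `δ / 2`. -/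
lemma saw_le {t δ : ℝ} (h0 : 0 < δ) (h1 : δ < 1) :
    saw t ≤ (sawInt t - sawInt (t - δ)) / δ + δ / 2 := by
  have hf0 := Int.fract_nonneg t
  have hf1 := Int.fract_lt_one t
  rw [← sub_le_iff_le_add, le_div_iff₀ h0, saw, sawInt, sawInt]
  rcases le_or_gt δ (Int.fract t) with h | h
  · have e : Int.fract (t - δ) = Int.fract t - δ := by
      rw [Int.fract_eq_iff]
      refine ⟨by linarith, by linarith, ⌊t⌋, ?_⟩
      rw [← Int.self_sub_floor]; ring
    rw [e]; nlinarith
  · have e : Int.fract (t - δ) = Int.fract t - δ + 1 := by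
      rw [Int.fract_eq_iff]
      refine ⟨by linarith, by linarith, ⌊t⌋ - 1, ?_⟩
      rw [← Int.self_sub_floor]; push_cast; ring
    rw [e]; nlinarith

/-- The counterpart of `saw_le` for the average over the following interval. -/
lemma saw_ge {t δ : ℝ} (h0 : 0 < δ) (h1 : δ < 1) :
    (sawInt (t + δ) - sawInt t) / δ - δ / 2 ≤ saw t := by
  have hf0 := Int.fract_nonneg t
  have hf1 := Int.fract_lt_one t
  rw [sub_le_iff_le_add, div_le_iff₀ h0, saw, sawInt, sawInt]
  rcases lt_or_ge (Int.fract t + δ) 1 with h | h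
  · have e : Int.fract (t + δ) = Int.fract t + δ := by
      rw [Int.fract_eq_iff]
      refine ⟨by linarith, by linarith, ⌊t⌋, ?_⟩
      rw [← Int.self_sub_floor]; ring
    rw [e]; nlinarith
  · have e : Int.fract (t + δ) = Int.fract t + δ - 1 := by
      rw [Int.fract_eq_iff]
      refine ⟨by linarith, by linarith, ⌊t⌋ + 1, ?_⟩
      rw [← Int.self_sub_floor]; push_cast; ring
    rw [e]; nlinarith

lemma ee_re (t : ℝ) : (ee t).re = Real.cos (2 * Real.pi * t) := by
  rw [ee_eq, Complex.exp_ofReal_mul_I_re]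

/-- The Fourier series of the second Bernoulli polynomial. -/
lemma hasSum_sawInt (t : ℝ) :
    HasSum (fun n : ℕ => (ee (n * t)).re / (2 * Real.pi ^ 2 * (n : ℝ) ^ 2)) (sawInt t + 1 / 12) := by
  have h := hasSum_one_div_nat_pow_mul_cos (k := 1) one_ne_zero (x := Int.fract t)
    ⟨Int.fract_nonneg t, (Int.fract_lt_one t).le⟩
  have h2 := h.mul_left (1 / (2 * Real.pi ^ 2))
  have hπ : Real.pi ≠ 0 := Real.pi_ne_zero
  have e1 : (fun n : ℕ => (ee (n * t)).re / (2 * Real.pi ^ 2 * (n : ℝ) ^ 2)) =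
      fun n : ℕ => 1 / (2 * Real.pi ^ 2) * (1 / (n : ℝ) ^ (2 * 1) *
        Real.cos (2 * Real.pi * n * Int.fract t)) := by
    funext n
    rw [ee_re]
    have : Real.cos (2 * Real.pi * (n * t)) = Real.cos (2 * Real.pi * n * Int.fract t) := by
      rw [← Int.self_sub_floor, mul_sub, ← Real.cos_sub_int_mul_two_pi _ (n * ⌊t⌋)]
      congr 1; push_cast; ring
    rw [this]
    simp only [mul_one]
    ring
  rw [e1]
  suffices e2 : sawInt t + 1 / 12 = 1 / (2 * Real.pi ^ 2) * ((-1) ^ (1 + 1) *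
      (2 * Real.pi) ^ (2 * 1) / 2 / (2 * 1).factorial * (Polynomial.map (algebraMap ℚ ℝ)
        (Polynomial.bernoulli (2 * 1))).eval (Int.fract t)) by rw [e2]; exact h2
  have : (Polynomial.map (algebraMap ℚ ℝ) (Polynomial.bernoulli 2)).eval (Int.fract t) =
      Int.fract t ^ 2 - Int.fract t + 1 / 6 := by
    simp [Polynomial.bernoulli, Finset.sum_range_succ, bernoulli_eq_bernoulli'_of_ne_one,
      Polynomial.eval_add]
    ring
  simp only [mul_one]
  rw [this, sawInt]
  simp
  field_simp
  ring

/-- Fourier bound for the averages of the sawtooth function. -/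
lemma sawInt_diff_bound {ι : Type*} (I : Finset ι) (t : ι → ℝ) {δ : ℝ} (h0 : δ ≠ 0)
    {g : ℕ → ℝ} (hg : Summable g) (hg0 : ∀ h, 0 ≤ g h)
    (hM : ∀ h : ℕ, 0 < h → (1 / h) * min 1 (1 / (h * |δ|)) * ‖∑ c ∈ I, ee (h * t c)‖ ≤ g h) :
    |∑ c ∈ I, (sawInt (t c) - sawInt (t c - δ)) / δ| ≤ ∑' h, g h := by
  have hs : HasSum (fun n : ℕ => ((1 - ee (-(n * δ))) * ∑ c ∈ I, ee (n * t c)).re /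
      (2 * Real.pi ^ 2 * (n : ℝ) ^ 2) / δ) (∑ c ∈ I, (sawInt (t c) - sawInt (t c - δ)) / δ) := by
    have h1 : HasSum (fun n : ℕ => ∑ c ∈ I, ((ee (n * t c)).re / (2 * Real.pi ^ 2 * (n : ℝ) ^ 2) -
        (ee (n * (t c - δ))).re / (2 * Real.pi ^ 2 * (n : ℝ) ^ 2)) / δ)
        (∑ c ∈ I, (sawInt (t c) - sawInt (t c - δ)) / δ) := by
      refine hasSum_sum fun c _ => ?_
      have := ((hasSum_sawInt (t c)).sub (hasSum_sawInt (t c - δ))).div_const δ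
      rwa [add_sub_add_right_eq_sub] at this
    have e : ∀ n : ℕ, ((1 - ee (-(n * δ))) * ∑ c ∈ I, ee (n * t c)).re /
        (2 * Real.pi ^ 2 * (n : ℝ) ^ 2) / δ =
        ∑ c ∈ I, ((ee (n * t c)).re / (2 * Real.pi ^ 2 * (n : ℝ) ^ 2) -
        (ee (n * (t c - δ))).re / (2 * Real.pi ^ 2 * (n : ℝ) ^ 2)) / δ := by
      intro n
      rw [Finset.mul_sum, Complex.re_sum, Finset.sum_div, Finset.sum_div]
      refine Finset.sum_congr rfl fun c _ => ?_
      have : (1 - ee (-(n * δ))) * ee (n * t c) = ee (n * t c) - ee (n * (t c - δ)) := by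
        rw [sub_mul, one_mul, ← ee_add]; congr 2; ring
      rw [this, Complex.sub_re]; ring
    simp only [e]
    exact h1
  rw [← hs.tsum_eq]
  have hb : ∀ n : ℕ, |((1 - ee (-(n * δ))) * ∑ c ∈ I, ee (n * t c)).re /
      (2 * Real.pi ^ 2 * (n : ℝ) ^ 2) / δ| ≤ g n := by
    intro n
    rcases Nat.eq_zero_or_pos n with rfl | hn
    · simpa using hg0 0
    refine le_trans ?_ (hM n hn)
    have hn' : (0 : ℝ) < n := by exact_mod_cast hn
    have hδ : 0 < |δ| := abs_pos.2 h0
    have hπ3 := Real.pi_gt_three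
    rw [abs_div, abs_div, abs_of_nonneg (by positivity : 0 ≤ 2 * Real.pi ^ 2 * (n : ℝ) ^ 2)]
    have h2 : |((1 - ee (-(n * δ))) * ∑ c ∈ I, ee (n * t c)).re| ≤
        ‖1 - ee (-(n * δ))‖ * ‖∑ c ∈ I, ee (n * t c)‖ := by
      rw [← norm_mul]; exact Complex.abs_re_le_norm _
    have h3 : ‖1 - ee (-(n * δ))‖ / (2 * Real.pi ^ 2 * (n : ℝ) ^ 2) / |δ| ≤
        (1 / n) * min 1 (1 / (n * |δ|)) := by
      rw [mul_min_of_nonneg _ _ (by positivity)]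
      apply le_min
      · have : ‖1 - ee (-(n * δ))‖ ≤ 2 * Real.pi * (n * |δ|) := by
          rw [norm_sub_rev]
          refine (norm_ee_sub_one _).trans (le_of_eq ?_)
          rw [abs_neg, abs_mul, abs_of_pos hn']
        rw [div_div, div_le_iff₀ (by positivity)]
        refine this.trans ?_
        have e : 1 / (n : ℝ) * 1 * (2 * Real.pi ^ 2 * n ^ 2 * |δ|) =
            Real.pi * (2 * Real.pi * (n * |δ|)) := by field_simp
        rw [e]
        have : 0 ≤ 2 * Real.pi * (n * |δ|) := by positivity
        nlinarith
      · have : ‖1 - ee (-(n * δ))‖ ≤ 2 := by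
          refine (norm_sub_le _ _).trans ?_
          rw [norm_ee, norm_one]; norm_num
        rw [div_div, div_le_iff₀ (by positivity)]
        refine this.trans ?_
        have e : 1 / (n : ℝ) * (1 / (n * |δ|)) * (2 * Real.pi ^ 2 * n ^ 2 * |δ|) =
            2 * Real.pi ^ 2 := by field_simp
        rw [e]; nlinarith
    calc _ ≤ ‖1 - ee (-(n * δ))‖ * ‖∑ c ∈ I, ee (n * t c)‖ / (2 * Real.pi ^ 2 * (n : ℝ) ^ 2) / |δ| := by
          gcongr
      _ = ‖1 - ee (-(n * δ))‖ / (2 * Real.pi ^ 2 * (n : ℝ) ^ 2) / |δ| * ‖∑ c ∈ I, ee (n * t c)‖ := by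
          ring
      _ ≤ _ := mul_le_mul_of_nonneg_right h3 (norm_nonneg _)
  have hsum : Summable fun n : ℕ => ‖((1 - ee (-(n * δ))) * ∑ c ∈ I, ee (n * t c)).re /
      (2 * Real.pi ^ 2 * (n : ℝ) ^ 2) / δ‖ :=
    Summable.of_nonneg_of_le (fun _ => norm_nonneg _) hb hg
  rw [← Real.norm_eq_abs]
  exact (norm_tsum_le_tsum_norm hsum).trans (hsum.tsum_le_tsum hb hg)

/-- Sums of the sawtooth function in terms of exponential sums. -/
lemma saw_fourier {ι : Type*} (I : Finset ι) (t : ι → ℝ) {δ : ℝ} (h0 : 0 < δ) (h1 : δ < 1)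
    {g : ℕ → ℝ} (hg : Summable g) (hg0 : ∀ h, 0 ≤ g h)
    (hM : ∀ h : ℕ, 0 < h → (1 / h) * min 1 (1 / (h * δ)) * ‖∑ c ∈ I, ee (h * t c)‖ ≤ g h) :
    |∑ c ∈ I, saw (t c)| ≤ I.card * δ + ∑' h, g h := by
  have b1 := sawInt_diff_bound I t h0.ne' hg hg0 (by rwa [abs_of_pos h0])
  have b2 := sawInt_diff_bound I t (neg_ne_zero.2 h0.ne') hg hg0 (by rwa [abs_neg, abs_of_pos h0])
  rw [abs_le] at b1 b2 ⊢
  have c1 : ∑ c ∈ I, saw (t c) ≤ ∑ c ∈ I, ((sawInt (t c) - sawInt (t c - δ)) / δ + δ / 2) :=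
    Finset.sum_le_sum fun c _ => saw_le h0 h1
  have c2 : ∑ c ∈ I, ((sawInt (t c) - sawInt (t c - -δ)) / -δ - δ / 2) ≤ ∑ c ∈ I, saw (t c) := by
    refine Finset.sum_le_sum fun c _ => ?_
    have := saw_ge (t := t c) h0 h1
    rw [sub_neg_eq_add, div_neg, ← neg_div, neg_sub]
    exact this
  rw [Finset.sum_add_distrib, Finset.sum_const, nsmul_eq_mul] at c1
  rw [Finset.sum_sub_distrib, Finset.sum_const, nsmul_eq_mul] at c2
  have : (0 : ℝ) ≤ I.card * δ := by positivity
  constructor <;> linarith [b1.1, b1.2, b2.1, b2.2]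

end Stepanov

/-! ### Divisor bounds and averages of the weight -/

namespace Stepanov

lemma succ_le_mul_rpow {ε : ℝ} (hε : 0 < ε) :
    ∃ M : ℝ, 1 ≤ M ∧ ∀ p v : ℕ, 2 ≤ p → (v : ℝ) + 1 ≤ M * ((p : ℝ) ^ v) ^ ε := by
  have hl : 0 < ε * Real.log 2 := mul_pos hε (Real.log_pos (by norm_num))
  refine ⟨1 + 1 / (ε * Real.log 2), by linarith [one_div_pos.2 hl], fun p v hp => ?_⟩
  have h1 : ((2 : ℝ) ^ v) ^ ε ≤ ((p : ℝ) ^ v) ^ ε := by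
    have : (2 : ℝ) ≤ p := by exact_mod_cast hp
    gcongr
  have h2 : 1 + v * (ε * Real.log 2) ≤ ((2 : ℝ) ^ v) ^ ε := by
    rw [Real.rpow_def_of_pos (by positivity), Real.log_pow]
    have := Real.add_one_le_exp (v * Real.log 2 * ε)
    linarith [this]
  have h3 : 0 < 1 / (ε * Real.log 2) := one_div_pos.2 hl
  have h4 : 1 / (ε * Real.log 2) * (v * (ε * Real.log 2)) = v := by field_simp
  have h5 : (0 : ℝ) ≤ v * (ε * Real.log 2) := by positivity
  nlinarith [mul_le_mul_of_nonneg_left (h2.trans h1)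
    (by linarith : 0 ≤ 1 + 1 / (ε * Real.log 2))]

/-- The divisor bound: `τ(n) ≪ n^ε`. -/
lemma card_divisors_le {ε : ℝ} (hε : 0 < ε) :
    ∃ K : ℝ, 1 ≤ K ∧ ∀ n : ℕ, n ≠ 0 → (n.divisors.card : ℝ) ≤ K * (n : ℝ) ^ ε := by
  obtain ⟨M, hM1, hM⟩ := succ_le_mul_rpow hε
  obtain ⟨P, hP⟩ := exists_nat_ge ((2 : ℝ) ^ (1 / ε))
  refine ⟨M ^ P, one_le_pow₀ hM1, fun n hn => ?_⟩
  have hfac : (n : ℝ) ^ ε = ∏ p ∈ n.primeFactors, ((p : ℝ) ^ (n.factorization p)) ^ ε := by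
    rw [Real.finsetProd_rpow _ _ (fun _ _ => by positivity)]
    congr 1
    conv_lhs => rw [← Nat.prod_factorization_pow_eq_self hn]
    rw [Finsupp.prod]; push_cast; rfl
  rw [Nat.card_divisors hn, hfac]
  push_cast
  have h1 : ∏ p ∈ n.primeFactors, ((n.factorization p : ℝ) + 1) ≤
      ∏ p ∈ n.primeFactors, (if p < P then M else 1) * ((p : ℝ) ^ (n.factorization p)) ^ ε := by
    refine Finset.prod_le_prod (fun _ _ => by positivity) fun p hp => ?_
    have hp2 := (Nat.prime_of_mem_primeFactors hp).two_le
    split_ifs with h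
    · exact hM p _ hp2
    · rw [one_mul]
      push Not at h
      have h2 : (2 : ℝ) ≤ (p : ℝ) ^ ε := by
        have h3 : (2 : ℝ) ^ (1 / ε) ≤ p := hP.trans (by exact_mod_cast h)
        calc (2 : ℝ) = ((2 : ℝ) ^ (1 / ε)) ^ ε := by
              rw [← Real.rpow_mul (by norm_num), one_div, inv_mul_cancel₀ hε.ne', Real.rpow_one]
          _ ≤ _ := by gcongr
      rw [← Real.rpow_natCast, ← Real.rpow_mul (by positivity), mul_comm,
        Real.rpow_mul (by positivity), Real.rpow_natCast]
      calc (n.factorization p : ℝ) + 1 ≤ (2 : ℝ) ^ (n.factorization p) := by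
            exact_mod_cast Nat.lt_two_pow_self
        _ ≤ _ := by gcongr
  refine h1.trans ?_
  rw [Finset.prod_mul_distrib]
  refine mul_le_mul_of_nonneg_right ?_ (by positivity)
  rw [Finset.prod_ite, Finset.prod_const, Finset.prod_const_one, mul_one]
  refine pow_le_pow_right₀ hM1 ?_
  calc _ ≤ (Finset.range P).card := by
        refine Finset.card_le_card fun p hp => ?_
        simpa using (Finset.mem_filter.1 hp).2
    _ = P := Finset.card_range P

lemma log_le_rpow {ε : ℝ} (hε : 0 < ε) {x : ℝ} (hx : 1 ≤ x) : Real.log x ≤ 1 / ε * x ^ ε := by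
  have := Real.log_le_rpow_div (by linarith : 0 ≤ x) hε
  rwa [one_div, inv_mul_eq_div]

lemma harmonic_le_rpow {ε : ℝ} (hε : 0 < ε) {n : ℕ} (hn : 1 ≤ n) :
    ∑ i ∈ Finset.Icc 1 n, 1 / (i : ℝ) ≤ (1 + 1 / ε) * (n : ℝ) ^ ε := by
  have h1 := harmonic_le_one_add_log n
  have h2 : ∑ i ∈ Finset.Icc 1 n, 1 / (i : ℝ) = (harmonic n : ℝ) := by
    rw [harmonic_eq_sum_Icc]; push_cast; simp
  have hn' : (1 : ℝ) ≤ n := by exact_mod_cast hn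
  have h3 := log_le_rpow hε hn'
  have h4 : (1 : ℝ) ≤ (n : ℝ) ^ ε := Real.one_le_rpow hn' hε.le
  rw [h2, add_mul]; linarith

/-- A weight `u` with Kloosterman sums modulo `q` at most `u(q) √q √(h,q)`, small on average. -/
lemma exists_weight : ∃ u : ℕ → ℝ, (∀ q, q ≠ 0 → 1 ≤ u q) ∧
    (∀ q [NeZero q] (h k : ℤ), ‖KS q h k‖ ≤ u q * √q * √(Int.gcd h q)) ∧
    ∀ ε : ℝ, 0 < ε → ∃ K : ℝ, 0 ≤ K ∧ ∀ Y : ℕ, 1 ≤ Y →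
      ∑ q ∈ Finset.Icc 1 Y, u q / q ≤ K * (Y : ℝ) ^ ε := by
  have H : ∀ q : ℕ, ∃ v : ℕ × ℕ × ℕ, q ≠ 0 → 0 < v.1 ∧ 0 < v.2.1 ∧ 0 < v.2.2 ∧
      q = v.1 * v.2.1 ^ 2 * v.2.2 ^ 3 ∧ ∀ [NeZero q] (h k : ℤ),
      ‖KS q h k‖ ≤ q.divisors.card * √v.1 * (v.2.1 ^ 2 * v.2.2 ^ 3 : ℕ) * √(Int.gcd h q) := by
    intro q
    by_cases hq : q = 0
    · exact ⟨(0, 0, 0), fun h => absurd hq h⟩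
    · have : NeZero q := ⟨hq⟩
      obtain ⟨s, c, d, h1, h2, h3, h4, h5⟩ := KS_bound q
      exact ⟨(s, c, d), fun _ => ⟨h1, h2, h3, h4, fun h k => h5 h k⟩⟩
  choose v hv using H
  refine ⟨fun q => q.divisors.card * ((v q).2.1 * (v q).2.2 * √(v q).2.2), ?_, ?_, ?_⟩
  · intro q hq
    obtain ⟨h1, h2, h3, -, -⟩ := hv q hq
    have a1 : (1 : ℝ) ≤ q.divisors.card := by
      exact_mod_cast Finset.card_pos.2 (Nat.nonempty_divisors.2 hq)
    have a2 : (1 : ℝ) ≤ (v q).2.1 := by exact_mod_cast h2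
    have a3 : (1 : ℝ) ≤ (v q).2.2 := by exact_mod_cast h3
    have a4 : (1 : ℝ) ≤ √(v q).2.2 := Real.one_le_sqrt.2 a3
    exact one_le_mul_of_one_le_of_one_le a1
      (one_le_mul_of_one_le_of_one_le (one_le_mul_of_one_le_of_one_le a2 a3) a4)
  · intro q _ h k
    obtain ⟨h1, h2, h3, h4, h5⟩ := hv q (NeZero.ne q)
    refine (h5 h k).trans (le_of_eq ?_)
    congr 1
    rw [mul_assoc, mul_assoc]
    congr 1
    have : √(q : ℝ) = √(v q).1 * (v q).2.1 * ((v q).2.2 * √(v q).2.2) := by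
      conv_lhs => rw [h4]
      push_cast
      rw [show ((v q).1 : ℝ) * (v q).2.1 ^ 2 * (v q).2.2 ^ 3 =
        (v q).1 * ((v q).2.1 * (v q).2.2) ^ 2 * (v q).2.2 by ring,
        Real.sqrt_mul (by positivity), Real.sqrt_mul (by positivity),
        Real.sqrt_sq (by positivity)]
      ring
    rw [this]; push_cast
    have e := Real.mul_self_sqrt (Nat.cast_nonneg (α := ℝ) (v q).2.2)
    linear_combination -√((v q).1 : ℝ) * (v q).2.1 ^ 2 * (v q).2.2 ^ 2 * e
  · intro ε hε
    obtain ⟨K, hK1, hK⟩ := card_divisors_le (half_pos hε)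
    have hε6 : 0 < ε / 6 := by positivity
    refine ⟨K * (1 + 1 / (ε / 6)) ^ 3, by positivity, fun Y hY => ?_⟩
    have hY' : (1 : ℝ) ≤ Y := by exact_mod_cast hY
    have h1 : ∀ q ∈ Finset.Icc 1 Y, (q.divisors.card * ((v q).2.1 * (v q).2.2 * √(v q).2.2) : ℝ) / q
        ≤ K * (Y : ℝ) ^ (ε / 2) * (1 / ((v q).1 : ℝ) * (1 / ((v q).2.1 : ℝ) * (1 / (v q).2.2))) := by
      intro q hq
      rw [Finset.mem_Icc] at hq
      obtain ⟨h1, h2, h3, h4, -⟩ := hv q (by lia)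
      have a0 : (0 : ℝ) < (v q).1 := by exact_mod_cast h1
      have a2 : (0 : ℝ) < (v q).2.1 := by exact_mod_cast h2
      have a3 : (1 : ℝ) ≤ (v q).2.2 := by exact_mod_cast h3
      have a4 : √((v q).2.2 : ℝ) ≤ (v q).2.2 := by
        rw [Real.sqrt_le_left (by positivity)]; nlinarith
      have b1 : (q.divisors.card : ℝ) ≤ K * (Y : ℝ) ^ (ε / 2) := by
        refine (hK q (by lia)).trans ?_
        have : (q : ℝ) ≤ Y := by exact_mod_cast hq.2
        gcongr
      have hq' : (q : ℝ) = (v q).1 * (v q).2.1 ^ 2 * (v q).2.2 ^ 3 := by exact_mod_cast h4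
      rw [mul_div_assoc]
      refine mul_le_mul b1 ?_ (by positivity) (by positivity)
      rw [hq', div_le_iff₀ (by positivity)]
      have : 1 / ((v q).1 : ℝ) * (1 / ((v q).2.1 : ℝ) * (1 / (v q).2.2)) *
          ((v q).1 * (v q).2.1 ^ 2 * (v q).2.2 ^ 3) = (v q).2.1 * (v q).2.2 * (v q).2.2 := by
        field_simp
      rw [this]; gcongr
    refine (Finset.sum_le_sum h1).trans ?_
    rw [← Finset.mul_sum]
    have h2 : ∑ q ∈ Finset.Icc 1 Y, (1 / ((v q).1 : ℝ) * (1 / ((v q).2.1 : ℝ) * (1 / (v q).2.2))) ≤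
        ∑ w ∈ Finset.Icc 1 Y ×ˢ (Finset.Icc 1 Y ×ˢ Finset.Icc 1 Y),
          (1 / (w.1 : ℝ) * (1 / (w.2.1 : ℝ) * (1 / w.2.2))) := by
      rw [← Finset.sum_image (f := fun w : ℕ × ℕ × ℕ => (1 / (w.1 : ℝ) *
        (1 / (w.2.1 : ℝ) * (1 / w.2.2)))) (g := v)]
      · refine Finset.sum_le_sum_of_subset_of_nonneg ?_ fun _ _ _ => by positivity
        intro w hw
        obtain ⟨q, hq, rfl⟩ := Finset.mem_image.1 hw
        rw [Finset.mem_Icc] at hq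
        obtain ⟨h1, h2, h3, h4, -⟩ := hv q (by lia)
        have d1 : (v q).1 ∣ q := ⟨(v q).2.1 ^ 2 * (v q).2.2 ^ 3, by rw [← mul_assoc]; exact h4⟩
        have d2 : (v q).2.1 ∣ q := ⟨(v q).1 * (v q).2.1 * (v q).2.2 ^ 3, h4.trans (by ring)⟩
        have d3 : (v q).2.2 ∣ q := ⟨(v q).1 * (v q).2.1 ^ 2 * (v q).2.2 ^ 2, h4.trans (by ring)⟩
        have := Nat.le_of_dvd (by lia) d1
        have := Nat.le_of_dvd (by lia) d2
        have := Nat.le_of_dvd (by lia) d3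
        simp only [Finset.mem_product, Finset.mem_Icc]
        lia
      · intro a ha b hb hab
        simp only [Finset.coe_Icc, Set.mem_Icc] at ha hb
        rw [(hv a (by lia)).2.2.2.1, (hv b (by lia)).2.2.2.1, hab]
    have h3 : ∑ w ∈ Finset.Icc 1 Y ×ˢ (Finset.Icc 1 Y ×ˢ Finset.Icc 1 Y),
          (1 / (w.1 : ℝ) * (1 / (w.2.1 : ℝ) * (1 / w.2.2))) =
          (∑ i ∈ Finset.Icc 1 Y, 1 / (i : ℝ)) ^ 3 := by
      rw [Finset.sum_product]
      simp only [Finset.sum_product, ← Finset.mul_sum, ← Finset.sum_mul]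
      ring
    have h4 : (∑ i ∈ Finset.Icc 1 Y, 1 / (i : ℝ)) ^ 3 ≤
        ((1 + 1 / (ε / 6)) * (Y : ℝ) ^ (ε / 6)) ^ 3 :=
      pow_le_pow_left₀ (Finset.sum_nonneg fun _ _ => by positivity) (harmonic_le_rpow hε6 hY) 3
    have h5 : ((Y : ℝ) ^ (ε / 6)) ^ 3 = (Y : ℝ) ^ (ε / 2) := by
      rw [← Real.rpow_natCast, ← Real.rpow_mul (by positivity)]; congr 1; push_cast; ring
    have h6 : (Y : ℝ) ^ ε = (Y : ℝ) ^ (ε / 2) * (Y : ℝ) ^ (ε / 2) := by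
      rw [← Real.rpow_add (by positivity)]; congr 1; ring
    calc _ ≤ K * (Y : ℝ) ^ (ε / 2) * ((1 + 1 / (ε / 6)) * (Y : ℝ) ^ (ε / 6)) ^ 3 :=
          mul_le_mul_of_nonneg_left (h2.trans (h3.le.trans h4)) (by positivity)
      _ = _ := by rw [mul_pow, h5, h6]; ring

/-- `Σ_h h^{-1-ε} √(h,q) ≪ τ(q)`. -/
lemma sum_gcd {ε : ℝ} (hε : 0 < ε) : ∃ K : ℝ, 0 ≤ K ∧ ∀ q : ℕ, q ≠ 0 →
    Summable (fun h : ℕ => (h : ℝ) ^ (-1 - ε) * √(Nat.gcd h q)) ∧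
    ∑' h : ℕ, (h : ℝ) ^ (-1 - ε) * √(Nat.gcd h q) ≤ K * q.divisors.card := by
  have hz : Summable (fun m : ℕ => (m : ℝ) ^ (-1 - ε)) := Real.summable_nat_rpow.2 (by linarith)
  refine ⟨∑' m : ℕ, (m : ℝ) ^ (-1 - ε), tsum_nonneg fun _ => by positivity, fun q hq => ?_⟩
  have h1 : ∀ d ∈ q.divisors, HasSum (fun h : ℕ => if d ∣ h then √(d : ℝ) * (h : ℝ) ^ (-1 - ε) else 0)
      (√(d : ℝ) * (d : ℝ) ^ (-1 - ε) * ∑' m : ℕ, (m : ℝ) ^ (-1 - ε)) := by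
    intro d hd
    have hd0 : 0 < d := Nat.pos_of_mem_divisors hd
    have hinj : Function.Injective (fun m : ℕ => d * m) := fun a b h => Nat.eq_of_mul_eq_mul_left hd0 h
    rw [← hinj.hasSum_iff]
    · have e : ((fun h : ℕ => if d ∣ h then √(d : ℝ) * (h : ℝ) ^ (-1 - ε) else 0) ∘ fun m : ℕ => d * m)
          = fun m : ℕ => √(d : ℝ) * (d : ℝ) ^ (-1 - ε) * (m : ℝ) ^ (-1 - ε) := by
        funext m
        simp only [Function.comp, dvd_mul_right, if_true]
        push_cast
        rw [Real.mul_rpow (by positivity) (by positivity), mul_assoc]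
      rw [e]
      exact hz.hasSum.mul_left _
    · intro h hh
      rw [if_neg]
      rintro ⟨m, rfl⟩
      exact hh ⟨m, rfl⟩
  have h2 := hasSum_sum h1
  have h3 : ∀ h : ℕ, (h : ℝ) ^ (-1 - ε) * √(Nat.gcd h q) ≤
      ∑ d ∈ q.divisors, if d ∣ h then √(d : ℝ) * (h : ℝ) ^ (-1 - ε) else 0 := by
    intro h
    have hm : Nat.gcd h q ∈ q.divisors := Nat.mem_divisors.2 ⟨Nat.gcd_dvd_right _ _, hq⟩
    have := Finset.single_le_sum (f := fun d : ℕ => if d ∣ h then √(d : ℝ) * (h : ℝ) ^ (-1 - ε) else 0)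
      (fun d _ => by split_ifs <;> positivity) hm
    simp only [Nat.gcd_dvd_left, if_true] at this
    rwa [mul_comm]
  have hs := Summable.of_nonneg_of_le (fun h => by positivity) h3 h2.summable
  refine ⟨hs, (hs.tsum_le_tsum h3 h2.summable).trans ?_⟩
  rw [h2.tsum_eq, ← Finset.sum_mul, mul_comm]
  refine mul_le_mul_of_nonneg_left ?_ (tsum_nonneg fun _ => by positivity)
  rw [Finset.card_eq_sum_ones]; push_cast
  refine Finset.sum_le_sum fun d hd => ?_
  have hd1 : (1 : ℝ) ≤ d := by exact_mod_cast Nat.pos_of_mem_divisors hd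
  rw [Real.sqrt_eq_rpow, ← Real.rpow_add (by positivity)]
  exact Real.rpow_le_one_of_one_le_of_nonpos hd1 (by linarith)

end Stepanov

/-! ### Sawtooth sums over inverses -/

namespace Stepanov

/-- The inverse of `c` modulo `q`, as a natural number below `q`. -/
noncomputable def cinv (q c : ℕ) : ℕ := ((c : ZMod q)⁻¹).val

lemma ee_cinv {q : ℕ} [NeZero q] (h c : ℕ) (hc : c.Coprime q) (ξ η : ℝ) :
    ee (h * ((ξ / c + η - cinv q c) / q)) =
      ee (h * η / q) * (ee (h * ξ / q / c) * kterm q 0 h c) := by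
  have e1 : ((h : ℤ) : ZMod q) * (c : ZMod q)⁻¹ = ((h * cinv q c : ℤ) : ZMod q) := by
    push_cast
    rw [cinv, ZMod.natCast_val, ZMod.cast_id]
  rw [kterm, if_pos hc]
  have e2 : ((0 : ℤ) : ZMod q) * (c : ZMod q) - ((h : ℤ) : ZMod q) * (c : ZMod q)⁻¹ =
      ((-(h * cinv q c) : ℤ) : ZMod q) := by
    rw [e1]; push_cast; ring
  rw [e2, stdAddChar_eq_ee, ← ee_add, ← ee_add]
  congr 1; push_cast; ring

lemma ee_block {q : ℕ} [NeZero q] (h C n : ℕ) (ξ η : ℝ) :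
    ∑ j ∈ Finset.range n with (C + 1 + j).Coprime q,
      ee (h * ((ξ / (C + 1 + j : ℕ) + η - cinv q (C + 1 + j)) / q)) =
    ee (h * η / q) * ∑ j ∈ Finset.range n, ee (h * ξ / q / (C + 1 + j : ℕ)) *
      kterm q 0 h (C + 1 + j) := by
  rw [Finset.sum_filter, Finset.mul_sum]
  refine Finset.sum_congr rfl fun j _ => ?_
  split_ifs with hc
  · exact ee_cinv h _ hc ξ η
  · rw [kterm, if_neg hc]; simp

lemma min_le_rpow {y θ : ℝ} (hy : 0 < y) (h0 : 0 ≤ θ) (h1 : θ ≤ 1) : min 1 (1 / y) ≤ y ^ (-θ) := by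
  rcases le_or_gt y 1 with h | h
  · exact (min_le_left _ _).trans (Real.one_le_rpow_of_pos_of_le_one_of_nonpos hy h (by linarith))
  · refine (min_le_right _ _).trans ?_
    rw [one_div, ← Real.rpow_neg_one]
    exact Real.rpow_le_rpow_of_exponent_le h.le (by linarith)

/-- Interpolating in `min 1 (1 / (h δ))` makes a factor `h ^ (-e)` available for the convergence of the
sum over the frequencies `h`. -/
lemma term_bound {e h δ a b : ℝ} (he : 0 < e) (he2 : e ≤ 1 / 2) (hh : 0 < h) (hδ : 0 < δ)
    (ha : 0 ≤ a) :
    1 / h * min 1 (1 / (h * δ)) * (a + b * √h) ≤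
      h ^ (-1 - e) * (δ ^ (-e) * (a + |b| * √(1 / δ))) := by
  have m1 := min_le_rpow (mul_pos hh hδ) he.le (by linarith)
  have m2 := min_le_rpow (θ := 1 / 2 + e) (mul_pos hh hδ) (by linarith) (by linarith)
  have hm : 0 ≤ min 1 (1 / (h * δ)) := by positivity
  have e0 : h ^ (-1 - e) = 1 / h * h ^ (-e) := by
    rw [sub_eq_add_neg, Real.rpow_add hh, Real.rpow_neg_one, one_div]
  rw [Real.mul_rpow hh.le hδ.le] at m1
  have e1 : (h * δ) ^ (-(1 / 2 + e)) = h ^ (-e) * δ ^ (-e) * √(1 / δ) * √(1 / h) := by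
    have e3 : (h * δ) ^ (-(1 / 2) : ℝ) = √(1 / δ) * √(1 / h) := by
      rw [Real.rpow_neg (by positivity), ← Real.sqrt_eq_rpow, ← Real.sqrt_inv,
        ← Real.sqrt_mul (by positivity)]
      congr 1; field_simp
    rw [neg_add, add_comm, Real.rpow_add (by positivity), Real.mul_rpow hh.le hδ.le, e3]
    ring
  have e2 : √(1 / h) * √h = 1 := by
    rw [← Real.sqrt_mul (by positivity), one_div_mul_cancel hh.ne', Real.sqrt_one]
  have b1 : min 1 (1 / (h * δ)) * a ≤ h ^ (-e) * δ ^ (-e) * a := mul_le_mul_of_nonneg_right m1 ha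
  have b2 : min 1 (1 / (h * δ)) * (b * √h) ≤ h ^ (-e) * δ ^ (-e) * (|b| * √(1 / δ)) := by
    calc min 1 (1 / (h * δ)) * (b * √h) ≤ min 1 (1 / (h * δ)) * (|b| * √h) := by
          gcongr; exact le_abs_self b
      _ ≤ (h * δ) ^ (-(1 / 2 + e)) * (|b| * √h) := by gcongr
      _ = h ^ (-e) * δ ^ (-e) * (|b| * √(1 / δ)) := by
          rw [e1]; linear_combination h ^ (-e) * δ ^ (-e) * √(1 / δ) * |b| * e2
  rw [e0]
  have : 1 / h * (min 1 (1 / (h * δ)) * a + min 1 (1 / (h * δ)) * (b * √h)) ≤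
      1 / h * (h ^ (-e) * δ ^ (-e) * a + h ^ (-e) * δ ^ (-e) * (|b| * √(1 / δ))) := by
    gcongr
  linarith

set_option maxHeartbeats 1000000 in
/-- The contribution of a dyadic range `C < c ≤ 3 C`, with `x = y³`. For `C ≤ y` it is estimated trivially;
otherwise the sawtooth function is averaged over intervals of length `δ = y / C`, so that the
error `C δ` from averaging is `y = x ^ (1/3)`. -/
lemma saw_block {u : ℕ → ℝ} (hu1 : ∀ q, q ≠ 0 → 1 ≤ u q)
    (hu : ∀ q [NeZero q] (h k : ℤ), ‖KS q h k‖ ≤ u q * √q * √(Int.gcd h q))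
    {ε : ℝ} (hε : 0 < ε) : ∃ K : ℝ, 2 ≤ K ∧ ∀ (q : ℕ) [NeZero q] (y ξ η : ℝ) (C n : ℕ), 1 ≤ y →
      0 ≤ ξ → ξ ≤ y ^ 3 → 1 ≤ C → n ≤ 2 * C → (C : ℝ) ^ 2 ≤ y ^ 3 → (q : ℝ) ^ 2 ≤ y ^ 3 →
      |∑ j ∈ Finset.range n with (C + 1 + j).Coprime q,
        saw ((ξ / (C + 1 + j : ℕ) + η - cinv q (C + 1 + j)) / q)| ≤
      K * (y ^ 3) ^ ε * u q * (y + √(y ^ 3) / √q) := by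
  obtain ⟨e, he, he2, he3⟩ : ∃ e : ℝ, 0 < e ∧ e ≤ 1 / 2 ∧ 3 * e ≤ ε :=
    ⟨min (ε / 3) (1 / 2), by positivity, min_le_right _ _, by linarith [min_le_left (ε / 3) (1 / 2)]⟩
  obtain ⟨K0, hK0, hg⟩ := sum_gcd he
  obtain ⟨K1, hK1, ht⟩ := card_divisors_le he
  refine ⟨2 + 17 * (2 + 1 / e) * K1 * K0 * 5, ?_, ?_⟩
  · have : 0 ≤ 17 * (2 + 1 / e) * K1 * K0 * 5 := by positivity
    linarith
  intro q _ y ξ η C n hy hξ0 hξ hC hn hCy hqy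
  have hq0 : q ≠ 0 := NeZero.ne q
  have hq1 : (1 : ℝ) ≤ q := by exact_mod_cast Nat.one_le_iff_ne_zero.2 hq0
  have hx1 : 1 ≤ y ^ 3 := one_le_pow₀ hy
  have hC1 : (1 : ℝ) ≤ C := by exact_mod_cast hC
  have hn' : (n : ℝ) ≤ 2 * C := by exact_mod_cast hn
  have huq := hu1 q hq0
  have hxε : 1 ≤ (y ^ 3) ^ ε := Real.one_le_rpow hx1 hε.le
  have hF : y ≤ y + √(y ^ 3) / √q := by
    have : 0 ≤ √(y ^ 3) / √q := by positivity
    linarith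
  have hcard : ((Finset.range n).filter fun j => (C + 1 + j).Coprime q).card ≤ n := by
    simpa using Finset.card_filter_le (Finset.range n) fun j => (C + 1 + j).Coprime q
  have hcard' : (((Finset.range n).filter fun j => (C + 1 + j).Coprime q).card : ℝ) ≤ n := by
    exact_mod_cast hcard
  have hmain : ∀ t : ℝ, t ≤ 2 * y → t ≤ 2 * ((y ^ 3) ^ ε * u q * (y + √(y ^ 3) / √q)) := by
    intro t h
    have a1 : 1 ≤ (y ^ 3) ^ ε * u q := one_le_mul_of_one_le_of_one_le hxε huq
    have a2 : y + √(y ^ 3) / √q ≤ (y ^ 3) ^ ε * u q * (y + √(y ^ 3) / √q) :=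
      le_mul_of_one_le_left (by positivity) a1
    linarith
  have hPnn : 0 ≤ (y ^ 3) ^ ε * u q * (y + √(y ^ 3) / √q) := by positivity
  rcases le_or_gt (C : ℝ) y with hCy' | hCy'
  · have h1 := Finset.abs_sum_le_sum_abs (fun j => saw ((ξ / (C + 1 + j : ℕ) + η -
      cinv q (C + 1 + j)) / q)) ((Finset.range n).filter fun j => (C + 1 + j).Coprime q)
    have h2 := Finset.sum_le_card_nsmul ((Finset.range n).filter fun j => (C + 1 + j).Coprime q)
      (fun j => |saw ((ξ / (C + 1 + j : ℕ) + η - cinv q (C + 1 + j)) / q)|) 1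
      fun j _ => abs_saw_le _
    rw [nsmul_eq_mul, mul_one] at h2
    have h3 := hmain _ (h1.trans (h2.trans (hcard'.trans (hn'.trans (by linarith)))))
    have : 0 ≤ 17 * (2 + 1 / e) * K1 * K0 * 5 * ((y ^ 3) ^ ε * u q * (y + √(y ^ 3) / √q)) := by
      positivity
    linarith
  have hy0 : 0 < y := by linarith
  have hδ0 : 0 < y / C := by positivity
  have hδ1 : y / C < 1 := by rwa [div_lt_one (by positivity)]
  obtain ⟨hgs, hgt⟩ := hg q hq0
  set G : ℝ := 17 * (u q * √q * (2 + Real.log q)) *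
    ((y / C) ^ (-e) * ((1 + 2 * (C / q)) + |4 * √(ξ / q / C)| * √(1 / (y / C)))) with hG
  have hlog : 0 ≤ Real.log q := Real.log_nonneg hq1
  have hG0 : 0 ≤ G := by positivity
  have key := saw_fourier ((Finset.range n).filter fun j => (C + 1 + j).Coprime q)
    (fun j => (ξ / (C + 1 + j : ℕ) + η - cinv q (C + 1 + j)) / q) hδ0 hδ1 (hgs.mul_left G)
    (fun h => by positivity) ?_
  · refine key.trans ?_
    rw [tsum_mul_left]
    have b1 := hmain (n * (y / C)) (by
      calc n * (y / C) ≤ 2 * C * (y / C) := by gcongr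
        _ = 2 * y := by field_simp)
    have hqx : (q : ℝ) ≤ y ^ 3 := by nlinarith
    have b2 : (q.divisors.card : ℝ) ≤ K1 * (y ^ 3) ^ e := by
      refine (ht q hq0).trans ?_
      gcongr
    have hxe : 1 ≤ (y ^ 3) ^ e := Real.one_le_rpow hx1 he.le
    have b3 : 2 + Real.log q ≤ (2 + 1 / e) * (y ^ 3) ^ e := by
      have : Real.log q ≤ 1 / e * (y ^ 3) ^ e := by
        refine (log_le_rpow he hq1).trans ?_
        gcongr
      linarith
    have b4 : (y / C) ^ (-e) ≤ (y ^ 3) ^ e := by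
      rw [Real.rpow_neg hδ0.le, ← Real.inv_rpow hδ0.le, inv_div]
      gcongr
      calc (C : ℝ) / y ≤ C := div_le_self (by positivity) hy
        _ ≤ y ^ 3 := by nlinarith
    have sq : 0 < √(q : ℝ) := Real.sqrt_pos.2 (by linarith)
    have b5 : √q * ((1 + 2 * (C / q)) + |4 * √(ξ / q / C)| * √(1 / (y / C))) ≤
        5 * (y + √(y ^ 3) / √q) := by
      have c1 : √(q : ℝ) ≤ y := by
        rw [Real.sqrt_le_left hy0.le]
        have h1 : (q : ℝ) ^ 2 ≤ (y ^ 2) ^ 2 := hqy.trans (by nlinarith [pow_le_pow_right₀ hy (show 3 ≤ 4 by norm_num)])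
        exact (pow_le_pow_iff_left₀ (by positivity) (by positivity) two_ne_zero).1 h1
      have c2 : √q * (C / q) ≤ √(y ^ 3) / √q := by
        have h1 : (C : ℝ) ≤ √(y ^ 3) := Real.le_sqrt_of_sq_le hCy
        calc √q * (C / q) = C * (√q / q) := by ring
          _ = C / √q := by rw [Real.sqrt_div_self']; ring
          _ ≤ _ := by gcongr
      have c3 : √q * (√(ξ / q / C) * √(1 / (y / C))) ≤ y := by
        rw [← Real.sqrt_mul (by positivity), ← Real.sqrt_mul (by positivity), Real.sqrt_le_left hy0.le]
        have : q * (ξ / q / C * (1 / (y / C))) = ξ / y := by field_simp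
        rw [this, div_le_iff₀ hy0]
        linarith
      rw [abs_of_nonneg (by positivity)]
      have : 0 ≤ √(y ^ 3) / √q := by positivity
      nlinarith
    have b6 : G * ∑' h : ℕ, (h : ℝ) ^ (-1 - e) * √(Nat.gcd h q) ≤
        17 * (2 + 1 / e) * K1 * K0 * 5 * ((y ^ 3) ^ ε * u q * (y + √(y ^ 3) / √q)) := by
      have h1 : G * ∑' h : ℕ, (h : ℝ) ^ (-1 - e) * √(Nat.gcd h q) ≤ G * (K0 * (K1 * (y ^ 3) ^ e)) := by
        gcongr
        exact hgt.trans (by gcongr)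
      have h2 : G = 17 * u q * (2 + Real.log q) * (y / C) ^ (-e) *
          (√q * ((1 + 2 * (C / q)) + |4 * √(ξ / q / C)| * √(1 / (y / C)))) := by rw [hG]; ring
      have h3 : G ≤ 17 * u q * ((2 + 1 / e) * (y ^ 3) ^ e) * (y ^ 3) ^ e *
          (5 * (y + √(y ^ 3) / √q)) := by
        rw [h2]; gcongr
      have h4 : (y ^ 3) ^ e * (y ^ 3) ^ e * (y ^ 3) ^ e ≤ (y ^ 3) ^ ε := by
        rw [← Real.rpow_add (by positivity), ← Real.rpow_add (by positivity)]
        exact Real.rpow_le_rpow_of_exponent_le hx1 (by linarith)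
      calc _ ≤ G * (K0 * (K1 * (y ^ 3) ^ e)) := h1
        _ ≤ 17 * u q * ((2 + 1 / e) * (y ^ 3) ^ e) * (y ^ 3) ^ e *
          (5 * (y + √(y ^ 3) / √q)) * (K0 * (K1 * (y ^ 3) ^ e)) := by gcongr
        _ = 17 * (2 + 1 / e) * K1 * K0 * 5 * ((y ^ 3) ^ e * (y ^ 3) ^ e * (y ^ 3) ^ e * u q *
          (y + √(y ^ 3) / √q)) := by ring
        _ ≤ _ := by gcongr
    have b7 : (((Finset.range n).filter fun j => (C + 1 + j).Coprime q).card : ℝ) * (y / C) ≤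
        n * (y / C) := by gcongr
    linarith
  · intro h hh
    have hh' : (0 : ℝ) < h := by exact_mod_cast hh
    rw [ee_block, norm_mul, norm_ee, one_mul]
    have hW : ∀ k' : ℤ, ‖KS q k' (-(h : ℤ))‖ ≤ u q * √q * √(Nat.gcd h q) := by
      intro k'
      rw [KS_comm]
      refine (hu q _ _).trans (le_of_eq ?_)
      rw [Int.neg_gcd, Int.gcd_natCast_natCast]
    have h1 := dyadic_exp_bound (h : ℤ) hW (A := h * ξ / q) (by positivity) hC hn
    have h2 := term_bound (b := 4 * √(ξ / q / C)) he he2 hh' hδ0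
      (by positivity : (0 : ℝ) ≤ 1 + 2 * (C / q))
    have h3 : √(h * ξ / q / C) = √(ξ / q / C) * √h := by
      rw [← Real.sqrt_mul (by positivity)]; congr 1; ring
    rw [h3] at h1
    have hm : 0 ≤ 1 / (h : ℝ) * min 1 (1 / (h * (y / C))) := by positivity
    calc _ ≤ 1 / (h : ℝ) * min 1 (1 / (h * (y / C))) *
        (17 * (u q * √q * √(Nat.gcd h q) * (2 + Real.log q)) *
          (1 + 2 * (C / q + 2 * (√(ξ / q / C) * √h)))) := mul_le_mul_of_nonneg_left h1 hm
      _ = 17 * (u q * √q * √(Nat.gcd h q) * (2 + Real.log q)) * (1 / (h : ℝ) *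
          min 1 (1 / (h * (y / C))) * ((1 + 2 * (C / q)) + 4 * √(ξ / q / C) * √h)) := by ring
      _ ≤ 17 * (u q * √q * √(Nat.gcd h q) * (2 + Real.log q)) * _ :=
          mul_le_mul_of_nonneg_left h2 (by positivity)
      _ = G * ((h : ℝ) ^ (-1 - e) * √(Nat.gcd h q)) := by rw [hG]; ring

/-- The sum over `c ≤ s` prime to `q` of the sawtooth function at `(ξ/c + η - c⁻¹)/q`. -/
noncomputable def sawSum (q : ℕ) (ξ η : ℝ) (s : ℕ) : ℝ :=
  ∑ j ∈ Finset.range s with (1 + j).Coprime q, saw ((ξ / (1 + j : ℕ) + η - cinv q (1 + j)) / q)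

lemma sawSum_add (q : ℕ) (ξ η : ℝ) (C n : ℕ) :
    sawSum q ξ η (C + n) = sawSum q ξ η C + ∑ j ∈ Finset.range n with (C + 1 + j).Coprime q,
        saw ((ξ / (C + 1 + j : ℕ) + η - cinv q (C + 1 + j)) / q) := by
  rw [sawSum, sawSum, Finset.sum_filter, Finset.sum_filter, Finset.sum_filter,
    Finset.sum_range_add]
  congr 1
  refine Finset.sum_congr rfl fun j _ => ?_
  rw [show 1 + (C + j) = C + 1 + j by ring]

/-- Halving the range repeatedly reduces to `saw_block`, at the cost of a logarithm. -/
lemma sawSum_le {u : ℕ → ℝ} (hu1 : ∀ q, q ≠ 0 → 1 ≤ u q)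
    (hu : ∀ q [NeZero q] (h k : ℤ), ‖KS q h k‖ ≤ u q * √q * √(Int.gcd h q))
    {ε : ℝ} (hε : 0 < ε) : ∃ K : ℝ, 0 ≤ K ∧ ∀ (q s : ℕ) (x ξ η : ℝ), q ≠ 0 → 1 ≤ x →
      0 ≤ ξ → ξ ≤ x → (s : ℝ) ^ 2 ≤ x → (q : ℝ) ^ 2 ≤ x →
      |sawSum q ξ η s| ≤ K * x ^ ε * u q * (x ^ (1 / 3 : ℝ) + √x / √q) := by
  obtain ⟨K, hK, H⟩ := saw_block hu1 hu (half_pos hε)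
  refine ⟨K * (1 + 2 * (1 / (ε / 2))), by positivity, fun q s x ξ η hq hx hξ0 hξ hs hqx => ?_⟩
  have : NeZero q := ⟨hq⟩
  set y := x ^ (1 / 3 : ℝ) with hy
  have hyx : y ^ 3 = x := by
    rw [hy, ← Real.rpow_natCast, ← Real.rpow_mul (by positivity)]; norm_num
  have hy1 : 1 ≤ y := Real.one_le_rpow hx (by norm_num)
  have huq := hu1 q hq
  set B := K * x ^ (ε / 2) * u q * (y + √x / √q) with hB
  have hxe : 1 ≤ x ^ (ε / 2) := Real.one_le_rpow hx (by linarith)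
  have hB1 : 1 ≤ B := by
    have h1 : 1 ≤ y + √x / √q := by
      have : 0 ≤ √x / √q := by positivity
      linarith
    rw [hB]
    exact one_le_mul_of_one_le_of_one_le (one_le_mul_of_one_le_of_one_le
      (one_le_mul_of_one_le_of_one_le (by linarith) hxe) huq) h1
  have key : ∀ s : ℕ, 1 ≤ s → (s : ℝ) ^ 2 ≤ x → |sawSum q ξ η s| ≤ B * (1 + 2 * Real.log s) := by
    intro s
    induction s using Nat.strong_induction_on with
    | _ s ih =>
    intro hs1 hsx
    rcases Nat.lt_or_ge s 2 with h2 | h2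
    · obtain rfl : s = 1 := by lia
      rw [sawSum, Nat.cast_one, Real.log_one, mul_zero, add_zero, mul_one]
      refine le_trans ?_ hB1
      rw [Finset.sum_filter, Finset.sum_range_one]
      split_ifs
      · exact abs_saw_le _
      · simp
    · obtain ⟨C, n, hC, hn, rfl, hlt⟩ : ∃ C n, 1 ≤ C ∧ n ≤ 2 * C ∧ s = C + n ∧ C ≤ n :=
        ⟨s / 2, s - s / 2, by lia, by lia, by lia, by lia⟩
      have hC1 : (1 : ℝ) ≤ C := by exact_mod_cast hC
      have hCn : 2 * (C : ℝ) ≤ ((C + n : ℕ) : ℝ) := by exact_mod_cast (by lia : 2 * C ≤ C + n)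
      have hCx : (C : ℝ) ^ 2 ≤ x := le_trans (by gcongr; linarith) hsx
      have h3 := ih C (by lia) hC hCx
      have h4 := H q y ξ η C n hy1 hξ0 (by rwa [hyx]) hC hn (by rwa [hyx]) (by rwa [hyx])
      rw [hyx, ← hB] at h4
      rw [sawSum_add]
      have h5 : Real.log 2 + Real.log C ≤ Real.log (C + n : ℕ) := by
        rw [← Real.log_mul (by norm_num) (by positivity)]
        exact Real.log_le_log (by positivity) hCn
      have h6 := Real.log_two_gt_d9
      calc _ ≤ B * (1 + 2 * Real.log C) + B := (abs_add_le _ _).trans (add_le_add h3 h4)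
        _ = B * (1 + 2 * (Real.log C + 1 / 2)) := by ring
        _ ≤ _ := by gcongr; linarith
  rcases Nat.eq_zero_or_pos s with rfl | hs1
  · rw [sawSum, Finset.range_zero, Finset.filter_empty, Finset.sum_empty, abs_zero]; positivity
  · have hs1' : (1 : ℝ) ≤ s := by exact_mod_cast hs1
    have h1 := log_le_rpow (half_pos hε) hs1'
    have h2 : (s : ℝ) ^ (ε / 2) ≤ x ^ (ε / 2) := by
      gcongr; nlinarith
    have h3 : 1 + 2 * Real.log s ≤ (1 + 2 * (1 / (ε / 2))) * x ^ (ε / 2) := by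
      have : 1 / (ε / 2) * (s : ℝ) ^ (ε / 2) ≤ 1 / (ε / 2) * x ^ (ε / 2) := by gcongr
      linarith
    have h4 : x ^ ε = x ^ (ε / 2) * x ^ (ε / 2) := by
      rw [← Real.rpow_add (by positivity)]; congr 1; ring
    calc _ ≤ B * (1 + 2 * Real.log s) := key s hs1 hs
      _ ≤ B * ((1 + 2 * (1 / (ε / 2))) * x ^ (ε / 2)) := by gcongr
      _ = _ := by rw [hB, h4]; ring

end Stepanov

/-! ### The hyperbola method in progressions -/

namespace Stepanov

/-- The pairs of positive integers with product at most `X`. -/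
def hpairs (X : ℕ) : Finset (ℕ × ℕ) :=
  (Finset.Icc 1 X ×ˢ Finset.Icc 1 X).filter fun p => p.1 * p.2 ≤ X

lemma mem_hpairs {X : ℕ} {p : ℕ × ℕ} : p ∈ hpairs X ↔ 1 ≤ p.1 ∧ 1 ≤ p.2 ∧ p.1 * p.2 ≤ X := by
  rw [hpairs, Finset.mem_filter, Finset.mem_product, Finset.mem_Icc, Finset.mem_Icc]
  constructor
  · rintro ⟨⟨h1, h2⟩, h3⟩; exact ⟨h1.1, h2.1, h3⟩
  · rintro ⟨h1, h2, h3⟩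
    exact ⟨⟨⟨h1, (Nat.le_mul_of_pos_right _ h2).trans h3⟩, h2, (Nat.le_mul_of_pos_left _ h1).trans h3⟩, h3⟩

lemma sum_tau_eq (f : ℕ → ℝ) (X : ℕ) :
    ∑ n ∈ Finset.Icc 1 X, (n.divisors.card : ℝ) * f n = ∑ p ∈ hpairs X, f (p.1 * p.2) := by
  rw [← Finset.sum_fiberwise_of_maps_to (s := hpairs X) (t := Finset.Icc 1 X) (g := fun p => p.1 * p.2)]
  · refine Finset.sum_congr rfl fun n hn => ?_
    rw [Finset.mem_Icc] at hn
    have h : (hpairs X).filter (fun p => p.1 * p.2 = n) = n.divisorsAntidiagonal := by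
      ext p
      rw [Finset.mem_filter, mem_hpairs, Nat.mem_divisorsAntidiagonal]
      constructor
      · rintro ⟨-, h⟩; exact ⟨h, by lia⟩
      · rintro ⟨h1, h2⟩
        rw [← h1] at h2
        exact ⟨⟨Nat.pos_of_ne_zero (left_ne_zero_of_mul h2), Nat.pos_of_ne_zero
          (right_ne_zero_of_mul h2), by lia⟩, h1⟩
    have h2 : ∀ p ∈ (hpairs X).filter (fun p => p.1 * p.2 = n), f (p.1 * p.2) = f n := by
      intro p hp; rw [(Finset.mem_filter.1 hp).2]
    rw [Finset.sum_congr rfl h2, Finset.sum_const, nsmul_eq_mul, h, ← Nat.map_div_right_divisors,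
      Finset.card_map]
  · intro p hp
    rw [mem_hpairs] at hp
    rw [Finset.mem_Icc]
    exact ⟨Nat.mul_pos hp.1 hp.2.1, hp.2.2⟩

/-- The hyperbola method. -/
lemma hyperbola (f : ℕ → ℝ) (X : ℕ) :
    ∑ n ∈ Finset.Icc 1 X, (n.divisors.card : ℝ) * f n =
      2 * ∑ a ∈ Finset.Icc 1 X.sqrt, ∑ b ∈ Finset.Icc 1 (X / a), f (a * b) -
      ∑ a ∈ Finset.Icc 1 X.sqrt, ∑ b ∈ Finset.Icc 1 X.sqrt, f (a * b) := by
  set s := X.sqrt with hs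
  have hs1 : s * s ≤ X := Nat.sqrt_le X
  have hs2 : X < (s + 1) * (s + 1) := Nat.lt_succ_sqrt X
  rw [sum_tau_eq]
  have hA : ∑ p ∈ (hpairs X).filter (fun p => p.1 ≤ s), f (p.1 * p.2) =
      ∑ a ∈ Finset.Icc 1 s, ∑ b ∈ Finset.Icc 1 (X / a), f (a * b) := by
    rw [Finset.sum_sigma']
    refine Finset.sum_bij' (fun p _ => ⟨p.1, p.2⟩) (fun p _ => (p.1, p.2)) ?_ ?_ ?_ ?_ ?_
    · intro p hp
      rw [Finset.mem_filter, mem_hpairs] at hp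
      rw [Finset.mem_sigma, Finset.mem_Icc, Finset.mem_Icc, Nat.le_div_iff_mul_le (by lia)]
      exact ⟨⟨hp.1.1, hp.2⟩, hp.1.2.1, by rw [mul_comm]; exact hp.1.2.2⟩
    · rintro ⟨a, b⟩ hp
      rw [Finset.mem_sigma, Finset.mem_Icc, Finset.mem_Icc] at hp
      have := hp.2.2
      rw [Nat.le_div_iff_mul_le (by exact hp.1.1)] at this
      rw [Finset.mem_filter, mem_hpairs]
      exact ⟨⟨hp.1.1, hp.2.1, by rw [mul_comm]; exact this⟩, hp.1.2⟩
    · intro p _; rfl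
    · intro p _; rfl
    · intro p _; rfl
  have hB : ∑ p ∈ (hpairs X).filter (fun p => p.2 ≤ s), f (p.1 * p.2) =
      ∑ p ∈ (hpairs X).filter (fun p => p.1 ≤ s), f (p.1 * p.2) := by
    refine Finset.sum_bij' (fun p _ => (p.2, p.1)) (fun p _ => (p.2, p.1)) ?_ ?_ ?_ ?_ ?_
    · intro p hp
      rw [Finset.mem_filter, mem_hpairs] at hp ⊢
      exact ⟨⟨hp.1.2.1, hp.1.1, by rw [mul_comm]; exact hp.1.2.2⟩, hp.2⟩
    · intro p hp
      rw [Finset.mem_filter, mem_hpairs] at hp ⊢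
      exact ⟨⟨hp.1.2.1, hp.1.1, by rw [mul_comm]; exact hp.1.2.2⟩, hp.2⟩
    · intro p _; rfl
    · intro p _; rfl
    · intro p _; rw [mul_comm]
  have hU : (hpairs X).filter (fun p => p.1 ≤ s) ∪ (hpairs X).filter (fun p => p.2 ≤ s) =
      hpairs X := by
    rw [← Finset.filter_or, Finset.filter_eq_self]
    intro p hp
    rw [mem_hpairs] at hp
    by_contra h
    push Not at h
    have := Nat.mul_le_mul (show s + 1 ≤ p.1 from h.1) (show s + 1 ≤ p.2 from h.2)
    lia
  have hI : (hpairs X).filter (fun p => p.1 ≤ s) ∩ (hpairs X).filter (fun p => p.2 ≤ s) =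
      Finset.Icc 1 s ×ˢ Finset.Icc 1 s := by
    ext p
    rw [← Finset.filter_and, Finset.mem_filter, mem_hpairs, Finset.mem_product, Finset.mem_Icc,
      Finset.mem_Icc]
    constructor
    · rintro ⟨⟨h1, h2, h3⟩, h4, h5⟩; exact ⟨⟨h1, h4⟩, h2, h5⟩
    · rintro ⟨⟨h1, h4⟩, h2, h5⟩
      exact ⟨⟨h1, h2, (Nat.mul_le_mul h4 h5).trans hs1⟩, h4, h5⟩
  have := Finset.sum_union_inter (s₁ := (hpairs X).filter (fun p => p.1 ≤ s))
    (s₂ := (hpairs X).filter (fun p => p.2 ≤ s)) (f := fun p => f (p.1 * p.2))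
  rw [hU, hI, hA, hB, hA, Finset.sum_product] at this
  linarith

lemma cast_mul_eq_one_iff {q : ℕ} [NeZero q] (a b : ℕ) :
    ((a * b : ℕ) : ZMod q) = 1 ↔ a.Coprime q ∧ b ≡ cinv q a [MOD q] := by
  rw [← ZMod.natCast_eq_natCast_iff, cinv, ZMod.natCast_val, ZMod.cast_id]
  push_cast
  constructor
  · intro h
    have hu : IsUnit (a : ZMod q) := IsUnit.of_mul_eq_one _ h
    have hc : a.Coprime q := (ZMod.isUnit_iff_coprime _ _).1 hu
    refine ⟨hc, ?_⟩
    have := ZMod.coe_mul_inv_eq_one a hc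
    calc (b : ZMod q) = (a * (a : ZMod q)⁻¹) * b := by rw [this, one_mul]
      _ = (a * b) * (a : ZMod q)⁻¹ := by ring
      _ = _ := by rw [h, one_mul]
  · rintro ⟨hc, h⟩
    rw [h]; exact ZMod.coe_mul_inv_eq_one a hc

/-- The number of `d ≤ z` in a residue class, with the fractional parts made explicit. -/
lemma card_modEq {q : ℕ} (hq : 0 < q) (r : ℕ) {z : ℝ} (hz : 0 ≤ z) :
    (((Finset.Icc 1 ⌊z⌋₊).filter fun d => d ≡ r [MOD q]).card : ℝ) =
      z / q - saw ((z - r) / q) + saw ((0 - r) / q) := by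
  have h := Nat.Ioc_filter_modEq_card 0 ⌊z⌋₊ hq r
  have hI : Finset.Ioc 0 ⌊z⌋₊ = Finset.Icc 1 ⌊z⌋₊ := rfl
  rw [hI] at h
  have e1 : ⌊(((⌊z⌋₊ : ℕ) : ℚ) - r) / q⌋ = ⌊(z - r) / q⌋ := by
    rw [Int.floor_div_natCast, Int.floor_div_natCast, Int.floor_sub_natCast, Int.floor_sub_natCast,
      Int.floor_natCast, Int.natCast_floor_eq_floor hz]
  have e2 : ⌊(((0 : ℕ) : ℚ) - r) / q⌋ = ⌊((0 : ℝ) - r) / q⌋ := by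
    rw [Int.floor_div_natCast, Int.floor_div_natCast, Int.floor_sub_natCast, Int.floor_sub_natCast]
    simp
  rw [e1, e2, max_eq_left] at h
  · have h' : (((Finset.Icc 1 ⌊z⌋₊).filter fun d => d ≡ r [MOD q]).card : ℝ) =
        ((⌊(z - r) / q⌋ - ⌊((0 : ℝ) - r) / q⌋ : ℤ) : ℝ) := by exact_mod_cast h
    rw [h', saw, saw, Int.fract, Int.fract]
    push_cast
    ring
  · have hq' : (0 : ℝ) < q := by exact_mod_cast hq
    rw [sub_nonneg]
    apply Int.floor_le_floor
    gcongr

/-- The divisor function summed over the progression `1 mod q`, before evaluating the main term. -/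
lemma tau_progression {q : ℕ} (hq : 0 < q) (B : ℕ) :
    ∑ b ∈ Finset.range (B + 1), ((q * b + 1).divisors.card : ℝ) =
      ∑ c ∈ Finset.Icc 1 (q * B + 1).sqrt with c.Coprime q,
        (2 * ((q * B + 1 : ℕ) / (c * q) : ℝ) - (q * B + 1).sqrt / q) +
      (-2 * sawSum q (q * B + 1 : ℕ) 0 (q * B + 1).sqrt + sawSum q 0 (q * B + 1).sqrt (q * B + 1).sqrt
        + sawSum q 0 0 (q * B + 1).sqrt) := by
  have : NeZero q := ⟨hq.ne'⟩
  set x := q * B + 1 with hx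
  set s := x.sqrt with hs
  have h1 : ∑ b ∈ Finset.range (B + 1), ((q * b + 1).divisors.card : ℝ) =
      ∑ n ∈ Finset.Icc 1 x, (n.divisors.card : ℝ) * (if (n : ZMod q) = 1 then 1 else 0) := by
    simp only [mul_ite, mul_one, mul_zero]
    rw [← Finset.sum_filter]
    refine Finset.sum_bij (fun b _ => q * b + 1) ?_ ?_ ?_ ?_
    · intro b hb
      rw [Finset.mem_range] at hb
      rw [Finset.mem_filter, Finset.mem_Icc]
      refine ⟨⟨by lia, ?_⟩, by push_cast; simp⟩
      rw [hx]; gcongr; lia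
    · intro a _ b _ h
      exact Nat.eq_of_mul_eq_mul_left hq (by simpa using h)
    · intro n hn
      rw [Finset.mem_filter, Finset.mem_Icc] at hn
      obtain ⟨⟨h1, h2⟩, h3⟩ := hn
      obtain ⟨m, rfl⟩ : ∃ m, n = m + 1 := ⟨n - 1, by lia⟩
      have h4 : ((m : ℕ) : ZMod q) = 0 := by push_cast at h3; simpa using h3
      rw [ZMod.natCast_eq_zero_iff] at h4
      obtain ⟨b, rfl⟩ := h4
      refine ⟨b, ?_, rfl⟩
      rw [Finset.mem_range]
      have : q * b ≤ q * B := by lia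
      have := Nat.le_of_mul_le_mul_left this hq
      lia
    · intro b _; rfl
  have h2 : ∀ a N : ℕ, ∑ b ∈ Finset.Icc 1 N, (if ((a * b : ℕ) : ZMod q) = 1 then (1 : ℝ) else 0) =
      if a.Coprime q then (((Finset.Icc 1 N).filter fun d => d ≡ cinv q a [MOD q]).card : ℝ) else 0 := by
    intro a N
    simp only [cast_mul_eq_one_iff]
    split_ifs with h
    · rw [Finset.sum_boole]
      congr 2
      exact Finset.filter_congr fun d _ => and_iff_right h
    · simp [h]
  rw [h1, hyperbola]
  simp only [h2]
  rw [← Finset.sum_filter, ← Finset.sum_filter]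
  have h3 : ∀ (ξ η : ℝ), sawSum q ξ η s = ∑ c ∈ Finset.Icc 1 s with c.Coprime q,
      saw ((ξ / c + η - cinv q c) / q) := by
    intro ξ η
    have e := Finset.sum_Ico_add' (fun c : ℕ => if c.Coprime q then
      saw ((ξ / (c : ℕ) + η - cinv q c) / q) else 0) 0 s 1
    rw [sawSum, Finset.sum_filter, Finset.sum_filter, Finset.range_eq_Ico]
    simp only [add_comm 1]
    rw [e]
    rfl
  rw [h3, h3, h3, Finset.mul_sum, Finset.mul_sum, ← Finset.sum_sub_distrib, ← Finset.sum_add_distrib,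
    ← Finset.sum_add_distrib, ← Finset.sum_add_distrib]
  refine Finset.sum_congr rfl fun c _ => ?_
  have e1 := card_modEq hq (cinv q c) (z := (x : ℝ) / c) (by positivity)
  have e2 := card_modEq hq (cinv q c) (z := (s : ℝ)) (by positivity)
  rw [Nat.floor_div_natCast, Nat.floor_natCast] at e1
  rw [Nat.floor_natCast] at e2
  rw [e1, e2, zero_div, zero_add, add_zero, zero_add, div_div]
  ring

end Stepanov

/-! ### The main term in a progression -/

namespace Stepanov

/-- The Möbius function with real values. -/
def mu (d : ℕ) : ℝ := ((ArithmeticFunction.moebius d : ℤ) : ℝ)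

lemma abs_mu_le (d : ℕ) : |mu d| ≤ 1 := by
  rw [mu]; exact_mod_cast ArithmeticFunction.abs_moebius_le_one

lemma sum_mu (n : ℕ) : ∑ d ∈ n.divisors, mu d = if n = 1 then 1 else 0 := by
  have h := congrArg (fun f : ArithmeticFunction ℤ => f n) ArithmeticFunction.moebius_mul_coe_zeta
  simp only [ArithmeticFunction.coe_mul_zeta_apply, ArithmeticFunction.one_apply] at h
  simp only [mu]
  exact_mod_cast h

/-- The coprimality condition is removed by `∑_{d ∣ (c, q)} μ(d)`. -/
lemma coprime_sum {q : ℕ} (hq : q ≠ 0) (s : ℕ) (g : ℕ → ℝ) :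
    ∑ c ∈ Finset.Icc 1 s with c.Coprime q, g c =
      ∑ d ∈ q.divisors, mu d * ∑ m ∈ Finset.Icc 1 (s / d), g (d * m) := by
  have h1 : ∀ c ∈ Finset.Icc 1 s, (if c.Coprime q then g c else 0) =
      ∑ d ∈ q.divisors, if d ∣ c then mu d * g c else 0 := by
    intro c hc
    rw [Finset.mem_Icc] at hc
    have hg : Nat.gcd c q ≠ 0 := (Nat.gcd_pos_of_pos_left _ (by lia)).ne'
    have e : (Nat.gcd c q).divisors = q.divisors.filter (· ∣ c) := by
      ext d
      simp only [Nat.mem_divisors, Finset.mem_filter, Nat.dvd_gcd_iff]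
      tauto
    have := sum_mu (Nat.gcd c q)
    simp only [Nat.coprime_iff_gcd_eq_one]
    rw [e, Finset.sum_filter] at this
    rw [show (if Nat.gcd c q = 1 then g c else 0) =
      (if Nat.gcd c q = 1 then 1 else 0) * g c by split_ifs <;> simp, ← this, Finset.sum_mul]
    refine Finset.sum_congr rfl fun d _ => ?_
    split_ifs <;> simp
  rw [Finset.sum_filter, Finset.sum_congr rfl h1, Finset.sum_comm]
  refine Finset.sum_congr rfl fun d hd => ?_
  have hd0 : 0 < d := Nat.pos_of_mem_divisors hd
  rw [← Finset.sum_filter, Finset.mul_sum]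
  symm
  refine Finset.sum_bij (fun m _ => d * m) ?_ ?_ ?_ ?_
  · intro m hm
    rw [Finset.mem_Icc, Nat.le_div_iff_mul_le hd0] at hm
    rw [Finset.mem_filter, Finset.mem_Icc]
    exact ⟨⟨Nat.mul_pos hd0 hm.1, by rw [mul_comm]; exact hm.2⟩, dvd_mul_right _ _⟩
  · intro a _ b _ h; exact Nat.eq_of_mul_eq_mul_left hd0 h
  · intro c hc
    rw [Finset.mem_filter, Finset.mem_Icc] at hc
    obtain ⟨⟨h1, h2⟩, m, rfl⟩ := hc
    refine ⟨m, ?_, rfl⟩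
    rw [Finset.mem_Icc, Nat.le_div_iff_mul_le hd0]
    exact ⟨Nat.pos_of_mul_pos_left h1, by rw [mul_comm]; exact h2⟩
  · intro m _; rfl

lemma harmonic_bounds {N : ℕ} (hN : 0 < N) :
    Real.log N + Real.eulerMascheroniConstant ≤ harmonic N ∧
    (harmonic N : ℝ) ≤ Real.log N + Real.eulerMascheroniConstant + 1 / N := by
  have hN' : (0 : ℝ) < N := by exact_mod_cast hN
  have h1 := Real.eulerMascheroniConstant_lt_eulerMascheroniSeq' N
  have h2 := Real.eulerMascheroniSeq_lt_eulerMascheroniConstant N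
  rw [Real.eulerMascheroniSeq', if_neg hN.ne'] at h1
  rw [Real.eulerMascheroniSeq] at h2
  have h3 : Real.log (N + 1) ≤ Real.log N + 1 / N := by
    have : Real.log (N + 1) - Real.log N ≤ 1 / N := by
      rw [← Real.log_div (by positivity) (by positivity)]
      refine (Real.log_le_sub_one_of_pos (by positivity)).trans (le_of_eq ?_)
      field_simp; ring
    linarith
  constructor <;> linarith

lemma harmonic_floor_bound {z : ℝ} (hz : 1 ≤ z) :
    |(harmonic ⌊z⌋₊ : ℝ) - (Real.log z + Real.eulerMascheroniConstant)| ≤ 2 / z := by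
  have hN : 0 < ⌊z⌋₊ := Nat.floor_pos.2 hz
  have hN' : (1 : ℝ) ≤ ⌊z⌋₊ := by exact_mod_cast hN
  obtain ⟨h1, h2⟩ := harmonic_bounds hN
  have h3 := Nat.floor_le (by linarith : 0 ≤ z)
  have h4 := Nat.lt_floor_add_one z
  have h5 : Real.log ⌊z⌋₊ ≤ Real.log z := Real.log_le_log (by linarith) h3
  have h6 : Real.log z - Real.log ⌊z⌋₊ ≤ 1 / ⌊z⌋₊ := by
    rw [← Real.log_div (by linarith) (by linarith)]
    refine (Real.log_le_sub_one_of_pos (by positivity)).trans ?_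
    rw [div_sub_one (by linarith)]
    gcongr; linarith
  have h7 : 1 / (⌊z⌋₊ : ℝ) ≤ 2 / z := by
    rw [div_le_div_iff₀ (by linarith) (by linarith)]; linarith
  rw [abs_le]; constructor <;> linarith

/-- The main term for the divisor function on the progression `1 mod q`. -/
noncomputable def mainq (q : ℕ) (z : ℝ) : ℝ :=
  z / q * ∑ d ∈ q.divisors, mu d / d *
    (Real.log z - 2 * Real.log d + 2 * Real.eulerMascheroniConstant - 1)

/-- The contribution of a single divisor `d` of `q` to the main term. -/
lemma main_aux {x s d : ℕ} (hs : s = x.sqrt) (hd : 0 < d) (hds : d ≤ s) :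
    |2 * (x : ℝ) / d * harmonic (s / d) - s * (s / d : ℕ) - x / d *
      (Real.log x - 2 * Real.log d + 2 * Real.eulerMascheroniConstant - 1)| ≤ 15 * √x := by
  have hs1 : (s : ℝ) * s ≤ x := by exact_mod_cast hs ▸ Nat.sqrt_le x
  have hs2 : (x : ℝ) ≤ s * s + 2 * s := by
    have : x < (x.sqrt + 1) * (x.sqrt + 1) := Nat.lt_succ_sqrt x
    rw [← hs] at this
    have : x ≤ s * s + 2 * s := by lia
    exact_mod_cast this
  have hd1 : (1 : ℝ) ≤ d := by exact_mod_cast hd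
  have hsd : (d : ℝ) ≤ s := by exact_mod_cast hds
  have hs0 : (1 : ℝ) ≤ s := by linarith
  have hx0 : (0 : ℝ) < x := by nlinarith
  have r1 : (s : ℝ) ≤ √x := Real.le_sqrt_of_sq_le (by nlinarith)
  have r2 : √(x : ℝ) ≤ 2 * s := by
    rw [Real.sqrt_le_left (by positivity)]; nlinarith
  have r3 := Real.mul_self_sqrt hx0.le
  have hz : 1 ≤ (s : ℝ) / d := by rwa [one_le_div (by linarith)]
  have h1 := harmonic_floor_bound hz
  have hfl : ⌊(s : ℝ) / d⌋₊ = s / d := by rw [Nat.floor_div_natCast, Nat.floor_natCast]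
  rw [hfl, Real.log_div (by linarith) (by linarith)] at h1
  have h3 := Nat.floor_le (by linarith : 0 ≤ (s : ℝ) / d)
  have h4 := Nat.lt_floor_add_one ((s : ℝ) / d)
  rw [hfl] at h3 h4
  have h5 : |Real.log x - 2 * Real.log s| ≤ 2 / s := by
    have e : Real.log x - 2 * Real.log s = Real.log (x / s ^ 2) := by
      rw [Real.log_div hx0.ne' (by positivity), Real.log_pow]; push_cast; ring
    rw [e, abs_of_nonneg (Real.log_nonneg (by rw [one_le_div (by positivity)]; nlinarith))]
    refine (Real.log_le_sub_one_of_pos (by positivity)).trans ?_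
    rw [div_sub_one (by positivity), div_le_div_iff₀ (by positivity) (by positivity)]
    nlinarith
  set H : ℝ := (harmonic (s / d) : ℝ)
  set N : ℝ := ((s / d : ℕ) : ℝ)
  set γ := Real.eulerMascheroniConstant
  have key : 2 * (x : ℝ) / d * H - s * N - x / d *
      (Real.log x - 2 * Real.log d + 2 * γ - 1) =
      2 * x / d * (H - (Real.log s - Real.log d + γ)) - x / d * (Real.log x - 2 * Real.log s) +
      (x / d - s * N) := by ring
  have a1 : |2 * x / d * (H - (Real.log s - Real.log d + γ))| ≤ 8 * √x := by
    rw [abs_mul, abs_of_nonneg (by positivity)]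
    calc 2 * x / d * |H - (Real.log s - Real.log d + γ)| ≤ 2 * x / d * (2 / (s / d)) := by gcongr
      _ = 4 * x / s := by field_simp; norm_num
      _ ≤ 8 * √x := by
          rw [div_le_iff₀ (by linarith)]
          nlinarith
  have a2 : |x / d * (Real.log x - 2 * Real.log s)| ≤ 4 * √x := by
    rw [abs_mul, abs_of_nonneg (by positivity)]
    calc x / d * |Real.log x - 2 * Real.log s| ≤ x / 1 * (2 / s) := by gcongr
      _ = 2 * x / s := by ring
      _ ≤ 4 * √x := by
          rw [div_le_iff₀ (by linarith)]
          nlinarith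
  have a3 : |x / d - s * N| ≤ 3 * √x := by
    have e1 : s * ((s : ℝ) / d) ≤ x / d := by
      rw [← mul_div_assoc]; gcongr
    have e2 : (x : ℝ) / d ≤ s * (s / d) + 2 * s := by
      rw [div_le_iff₀ (by linarith)]
      have : (s * ((s : ℝ) / d) + 2 * s) * d = s * s + 2 * s * d := by field_simp
      rw [this]; nlinarith
    rw [abs_le]; constructor <;> nlinarith
  rw [key]
  calc _ ≤ |2 * x / d * (H - (Real.log s - Real.log d + γ))| +
        |x / d * (Real.log x - 2 * Real.log s)| + |x / d - s * N| :=
        (abs_add_le _ _).trans (add_le_add_left (abs_sub _ _) _)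
    _ ≤ _ := by linarith

/-- Evaluation of the main term in `tau_progression`. The assumption `q ≤ B` ensures that the divisors
of `q` do not exceed `√(q B + 1)`. -/
lemma tau_main {q : ℕ} (hq : 0 < q) {B : ℕ} (hB : q ≤ B) :
    |∑ c ∈ Finset.Icc 1 (q * B + 1).sqrt with c.Coprime q,
        (2 * ((q * B + 1 : ℕ) / (c * q) : ℝ) - (q * B + 1).sqrt / q) - mainq q (q * B + 1 : ℕ)| ≤
      15 * q.divisors.card * √(q * B + 1 : ℕ) / q := by
  set x := q * B + 1
  set s := x.sqrt with hs
  have hqs : q ≤ s := Nat.le_sqrt.2 ((Nat.mul_le_mul_left q hB).trans (Nat.le_succ _))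
  have hq' : (0 : ℝ) < q := by exact_mod_cast hq
  rw [coprime_sum hq.ne' s (fun c => 2 * ((x : ℝ) / (c * q)) - s / q), mainq, Finset.mul_sum,
    ← Finset.sum_sub_distrib]
  have key : ∀ d ∈ q.divisors, |mu d * ∑ m ∈ Finset.Icc 1 (s / d), (2 * ((x : ℝ) / ((d * m : ℕ) * q)) -
      s / q) - x / q * (mu d / d * (Real.log x - 2 * Real.log d + 2 * Real.eulerMascheroniConstant - 1))|
      ≤ 15 * √x / q := by
    intro d hd
    have hd0 : 0 < d := Nat.pos_of_mem_divisors hd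
    have hd0' : (0 : ℝ) < d := by exact_mod_cast hd0
    have hdq : d ≤ q := Nat.divisor_le hd
    have h := main_aux hs hd0 (hdq.trans hqs)
    have e : ∑ m ∈ Finset.Icc 1 (s / d), (2 * ((x : ℝ) / ((d * m : ℕ) * q)) - s / q) =
        (2 * (x : ℝ) / d * harmonic (s / d) - s * (s / d : ℕ)) / q := by
      rw [Finset.sum_sub_distrib, Finset.sum_const, Nat.card_Icc, nsmul_eq_mul, harmonic_eq_sum_Icc]
      push_cast
      rw [Finset.mul_sum, sub_div, Finset.sum_div]
      congr 1
      · refine Finset.sum_congr rfl fun m hm => ?_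
        field_simp
      · ring
    rw [e, show mu d * ((2 * (x : ℝ) / d * harmonic (s / d) - s * (s / d : ℕ)) / q) - x / q *
      (mu d / d * (Real.log x - 2 * Real.log d + 2 * Real.eulerMascheroniConstant - 1)) =
      mu d * (2 * (x : ℝ) / d * harmonic (s / d) - s * (s / d : ℕ) - x / d *
      (Real.log x - 2 * Real.log d + 2 * Real.eulerMascheroniConstant - 1)) / q by ring,
      abs_div, abs_mul, abs_of_pos hq']
    refine div_le_div_of_nonneg_right ?_ hq'.le
    calc _ ≤ 1 * (15 * √(x : ℝ)) := mul_le_mul (abs_mu_le d) h (abs_nonneg _) zero_le_one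
      _ = _ := one_mul _
  refine (Finset.abs_sum_le_sum_abs _ _).trans ((Finset.sum_le_card_nsmul _ _ _ key).trans ?_)
  rw [nsmul_eq_mul]
  apply le_of_eq; ring

lemma mul_log_diff {a b κ k : ℝ} (ha : 1 ≤ a) (hab : a ≤ b) (hκ : |κ| ≤ k) :
    |b * (Real.log b + κ) - a * (Real.log a + κ)| ≤ (b - a) * (Real.log b + 1 + k) := by
  have h1 : Real.log a ≤ Real.log b := Real.log_le_log (by linarith) hab
  have h2 : a * (Real.log b - Real.log a) ≤ b - a := by
    rw [← Real.log_div (by linarith) (by linarith)]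
    have := Real.log_le_sub_one_of_pos (div_pos (by linarith) (by linarith) : 0 < b / a)
    calc a * Real.log (b / a) ≤ a * (b / a - 1) := by gcongr
      _ = b - a := by field_simp
  have h3 : 0 ≤ Real.log b := Real.log_nonneg (by linarith)
  have h4 : 0 ≤ a * (Real.log b - Real.log a) := mul_nonneg (by linarith) (by linarith)
  have e : b * (Real.log b + κ) - a * (Real.log a + κ) =
      ((b - a) * Real.log b + a * (Real.log b - Real.log a)) + (b - a) * κ := by ring
  rw [e]
  refine (abs_add_le _ _).trans ?_
  rw [abs_mul, abs_of_nonneg (by linarith : 0 ≤ b - a),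
    abs_of_nonneg (by nlinarith [mul_nonneg (by linarith : 0 ≤ b - a) h3])]
  nlinarith [mul_le_mul_of_nonneg_left hκ (by linarith : 0 ≤ b - a)]

lemma mainq_diff {q : ℕ} (hq : 0 < q) {a b : ℝ} (ha : 1 ≤ a) (hab : a ≤ b) :
    |mainq q b - mainq q a| ≤
      (b - a) * q.divisors.card / q * (Real.log b + 2 * Real.log q + 4) := by
  have hq' : (1 : ℝ) ≤ q := by exact_mod_cast hq
  rw [mainq, mainq, Finset.mul_sum, Finset.mul_sum, ← Finset.sum_sub_distrib]
  have g1 := Real.one_half_lt_eulerMascheroniConstant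
  have g2 := Real.eulerMascheroniConstant_lt_two_thirds
  have key : ∀ d ∈ q.divisors, |b / q * (mu d / d * (Real.log b - 2 * Real.log d +
      2 * Real.eulerMascheroniConstant - 1)) - a / q * (mu d / d * (Real.log a - 2 * Real.log d +
      2 * Real.eulerMascheroniConstant - 1))| ≤ (b - a) / q * (Real.log b + 2 * Real.log q + 4) := by
    intro d hd
    have hd1 : (1 : ℝ) ≤ d := by exact_mod_cast Nat.pos_of_mem_divisors hd
    have hdq : (d : ℝ) ≤ q := by exact_mod_cast Nat.divisor_le hd
    have l1 := Real.log_le_log (by linarith) hdq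
    have l2 := Real.log_nonneg hd1
    have h := mul_log_diff (κ := - 2 * Real.log d + 2 * Real.eulerMascheroniConstant - 1)
      (k := 2 * Real.log q + 3) ha hab (by rw [abs_le]; constructor <;> linarith)
    have e : b / q * (mu d / d * (Real.log b - 2 * Real.log d +
      2 * Real.eulerMascheroniConstant - 1)) - a / q * (mu d / d * (Real.log a - 2 * Real.log d +
      2 * Real.eulerMascheroniConstant - 1)) = mu d / d / q * (b * (Real.log b + (- 2 * Real.log d +
      2 * Real.eulerMascheroniConstant - 1)) - a * (Real.log a + (- 2 * Real.log d +
      2 * Real.eulerMascheroniConstant - 1))) := by ring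
    rw [e, abs_mul, abs_div, abs_div, abs_of_nonneg (by linarith : (0 : ℝ) ≤ q),
      abs_of_nonneg (by linarith : (0 : ℝ) ≤ d)]
    have m : |mu d| / d / q ≤ 1 / q := by
      gcongr
      rw [div_le_one (by linarith)]
      exact (abs_mu_le d).trans hd1
    calc _ ≤ 1 / (q : ℝ) * _ := mul_le_mul m h (abs_nonneg _) (by positivity)
      _ = _ := by ring
  refine (Finset.abs_sum_le_sum_abs _ _).trans ((Finset.sum_le_card_nsmul _ _ _ key).trans ?_)
  rw [nsmul_eq_mul]
  apply le_of_eq; ring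

end Stepanov

/-! ### Summing the main terms -/

namespace Stepanov

lemma log_succ_bounds {N : ℕ} (hN : 0 < N) :
    (N : ℝ) * (Real.log (N + 1 : ℕ) - Real.log N) ≤ 1 ∧
    1 ≤ ((N : ℝ) + 1) * (Real.log (N + 1 : ℕ) - Real.log N) := by
  have hN' : (0 : ℝ) < N := by exact_mod_cast hN
  have e : Real.log (N + 1 : ℕ) - Real.log N = Real.log ((N + 1) / N) := by
    rw [Real.log_div (by positivity) (by positivity)]; push_cast; rfl
  have h1 := Real.log_le_sub_one_of_pos (show (0 : ℝ) < (N + 1) / N by positivity)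
  have h2 := Real.one_sub_inv_le_log_of_pos (show (0 : ℝ) < (N + 1) / N by positivity)
  rw [e]
  constructor
  · calc (N : ℝ) * Real.log ((N + 1) / N) ≤ N * ((N + 1) / N - 1) := by gcongr
      _ = 1 := by field_simp; ring
  · calc (1 : ℝ) = (N + 1) * (1 - ((N + 1 : ℝ) / N)⁻¹) := by field_simp; ring
      _ ≤ _ := by gcongr

/-- A weak form of Stirling's formula, by induction. -/
lemma log_factorial_bounds {N : ℕ} (hN : 0 < N) :
    (N : ℝ) * Real.log N - N + 1 ≤ Real.log N.factorial ∧
    Real.log N.factorial ≤ (N + 1) * Real.log N - N + 1 := by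
  induction N, hN using Nat.le_induction with
  | base => simp
  | succ N hN ih =>
    have hN' : (0 : ℝ) < N := by exact_mod_cast hN
    obtain ⟨h1, h2⟩ := log_succ_bounds hN
    rw [Nat.factorial_succ, Nat.cast_mul, Real.log_mul (by positivity) (by positivity)]
    have e : ((N + 1 : ℕ) : ℝ) = N + 1 := by push_cast; rfl
    constructor
    · rw [show ((N + 1 : ℕ) : ℝ) * Real.log (N + 1 : ℕ) - (N + 1 : ℕ) + 1 =
        (N + 1) * Real.log (N + 1 : ℕ) - N by rw [e]; ring]
      linarith [ih.1]
    · rw [show (((N + 1 : ℕ) : ℝ) + 1) * Real.log (N + 1 : ℕ) - (N + 1 : ℕ) + 1 =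
        (N + 2) * Real.log (N + 1 : ℕ) - N by rw [e]; ring]
      linarith [ih.2]

/-- The contribution of a single `d` to the main term, as a function of `z = Y / d`. -/
noncomputable def mainP (z : ℝ) : ℝ :=
  2 * z ^ 2 * (2 * Real.log z + (2 * Real.eulerMascheroniConstant - 1)) * harmonic ⌊z⌋₊ -
    z * (Real.log ⌊z⌋₊.factorial + ⌊z⌋₊ * Real.log z +
      ⌊z⌋₊ * (2 * Real.eulerMascheroniConstant - 1))

/-- The sums over `m ≤ z` in `mainP` evaluated by the asymptotics of the harmonic numbers and of
`log N!`. -/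
lemma mainP_bound {z : ℝ} (hz : 1 ≤ z) :
    |mainP z - z ^ 2 * ((2 * Real.log z + 2 * Real.eulerMascheroniConstant) ^ 2 -
      2 * (2 * Real.log z + 2 * Real.eulerMascheroniConstant) + 2)| ≤ 11 * z * (Real.log z + 1) := by
  have g1 := Real.one_half_lt_eulerMascheroniConstant
  have g2 := Real.eulerMascheroniConstant_lt_two_thirds
  have hN : 0 < ⌊z⌋₊ := Nat.floor_pos.2 hz
  have hN' : (1 : ℝ) ≤ ⌊z⌋₊ := by exact_mod_cast hN
  have h3 := Nat.floor_le (by linarith : 0 ≤ z)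
  have h4 := Nat.lt_floor_add_one z
  have hl := Real.log_nonneg hz
  have hH := harmonic_floor_bound hz
  obtain ⟨f1, f2⟩ := log_factorial_bounds hN
  have h5 := mul_log_diff (κ := -1) (k := 1) hN' h3 (by norm_num)
  have hlN : Real.log ⌊z⌋₊ ≤ Real.log z := Real.log_le_log (by linarith) h3
  rw [mainP]
  set N : ℝ := (⌊z⌋₊ : ℝ)
  set F : ℝ := Real.log ⌊z⌋₊.factorial
  set H : ℝ := (harmonic ⌊z⌋₊ : ℝ)
  set l := Real.log z
  set γ := Real.eulerMascheroniConstant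
  have e : 2 * z ^ 2 * (2 * l + (2 * γ - 1)) * H - z * (F + N * l + N * (2 * γ - 1)) -
      z ^ 2 * ((2 * l + 2 * γ) ^ 2 - 2 * (2 * l + 2 * γ) + 2) =
      2 * z ^ 2 * (2 * l + (2 * γ - 1)) * (H - (l + γ)) - z * (F - (z * l - z)) +
        z * (z - N) * (l + (2 * γ - 1)) := by ring
  rw [e]
  have b1 : |2 * z ^ 2 * (2 * l + (2 * γ - 1)) * (H - (l + γ))| ≤ z * (8 * l + 4) := by
    rw [abs_mul, abs_of_nonneg (mul_nonneg (by positivity) (by linarith))]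
    calc 2 * z ^ 2 * (2 * l + (2 * γ - 1)) * |H - (l + γ)| ≤ 2 * z ^ 2 * (2 * l + 1) * (2 / z) := by
          gcongr
          · linarith
      _ = z * (8 * l + 4) := by field_simp; ring
  have b2 : |z * (F - (z * l - z))| ≤ z * (2 * l + 3) := by
    rw [abs_mul, abs_of_nonneg (by linarith)]
    have : |F - (z * l - z)| ≤ 2 * l + 3 := by
      rw [abs_le] at h5 ⊢
      have : (z - N) * (l + 1 + 1) ≤ l + 2 := by nlinarith
      constructor <;> nlinarith [h5.1, h5.2]
    gcongr
  have b3 : |z * (z - N) * (l + (2 * γ - 1))| ≤ z * (l + 1) := by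
    rw [abs_of_nonneg (mul_nonneg (mul_nonneg (by linarith) (by linarith)) (by linarith)), mul_assoc]
    gcongr
    nlinarith
  calc _ ≤ |2 * z ^ 2 * (2 * l + (2 * γ - 1)) * (H - (l + γ))| + |z * (F - (z * l - z))| +
        |z * (z - N) * (l + (2 * γ - 1))| := (abs_add_le _ _).trans (add_le_add_left (abs_sub _ _) _)
    _ ≤ _ := by nlinarith

lemma sum_divisors_swap (Y : ℕ) (F : ℕ → ℕ → ℝ) :
    ∑ q ∈ Finset.Icc 1 Y, ∑ d ∈ q.divisors, F d q =
      ∑ d ∈ Finset.Icc 1 Y, ∑ m ∈ Finset.Icc 1 (Y / d), F d (d * m) := by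
  rw [Finset.sum_sigma', Finset.sum_sigma']
  refine Finset.sum_bij' (fun p _ => ⟨p.2, p.1 / p.2⟩) (fun p _ => ⟨p.1 * p.2, p.1⟩) ?_ ?_ ?_ ?_ ?_
  · rintro ⟨q, d⟩ h
    simp only [Finset.mem_sigma, Finset.mem_Icc, Nat.mem_divisors] at h ⊢
    obtain ⟨⟨h1, h2⟩, h3, h4⟩ := h
    have hd := Nat.pos_of_dvd_of_pos h3 h1
    exact ⟨⟨hd, (Nat.le_of_dvd h1 h3).trans h2⟩, Nat.div_pos (Nat.le_of_dvd h1 h3) hd,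
      Nat.div_le_div_right h2⟩
  · rintro ⟨d, m⟩ h
    simp only [Finset.mem_sigma, Finset.mem_Icc, Nat.mem_divisors] at h ⊢
    obtain ⟨⟨h1, h2⟩, h3, h4⟩ := h
    rw [Nat.le_div_iff_mul_le h1] at h4
    have := Nat.mul_pos h1 h3
    exact ⟨⟨this, by rw [mul_comm]; exact h4⟩, dvd_mul_right _ _, this.ne'⟩
  · rintro ⟨q, d⟩ h
    simp only [Finset.mem_sigma, Finset.mem_Icc, Nat.mem_divisors] at h
    simp [Nat.mul_div_cancel' h.2.1]
  · rintro ⟨d, m⟩ h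
    simp only [Finset.mem_sigma, Finset.mem_Icc] at h
    simp [Nat.mul_div_cancel_left _ (show 0 < d from h.1.1)]
  · rintro ⟨q, d⟩ h
    simp only [Finset.mem_sigma, Finset.mem_Icc, Nat.mem_divisors] at h
    simp [Nat.mul_div_cancel' h.2.1]

/-- Writing `q = d m` for each divisor `d` of `q` and summing over `m` first. -/
lemma sum_mainq {Y : ℕ} :
    ∑ q ∈ Finset.Icc 1 Y, (2 * mainq q ((Y : ℝ) ^ 2) - mainq q (q * Y)) =
      ∑ d ∈ Finset.Icc 1 Y, mu d * mainP (Y / d) := by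
  set κ := 2 * Real.eulerMascheroniConstant - 1 with hκ
  have h1 : ∀ q ∈ Finset.Icc 1 Y, 2 * mainq q ((Y : ℝ) ^ 2) - mainq q (q * Y) =
      ∑ d ∈ q.divisors, mu d / d * (2 * (Y : ℝ) ^ 2 / q * (2 * Real.log Y - 2 * Real.log d + κ) -
        Y * (Real.log q + Real.log Y - 2 * Real.log d + κ)) := by
    intro q hq
    rw [Finset.mem_Icc] at hq
    have hq0 : (0 : ℝ) < q := by exact_mod_cast hq.1
    have hY0 : (0 : ℝ) < Y := by exact_mod_cast hq.1.trans hq.2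
    rw [mainq, mainq, Finset.mul_sum, Finset.mul_sum, Finset.mul_sum, ← Finset.sum_sub_distrib]
    refine Finset.sum_congr rfl fun d _ => ?_
    rw [Real.log_pow, Real.log_mul hq0.ne' hY0.ne', hκ, mul_div_cancel_left₀ _ hq0.ne']
    push_cast; ring
  rw [Finset.sum_congr rfl h1, sum_divisors_swap Y (fun d q => mu d / d *
    (2 * (Y : ℝ) ^ 2 / q * (2 * Real.log Y - 2 * Real.log d + κ) -
        Y * (Real.log q + Real.log Y - 2 * Real.log d + κ)))]
  refine Finset.sum_congr rfl fun d hd => ?_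
  rw [Finset.mem_Icc] at hd
  have hd0 : (0 : ℝ) < d := by exact_mod_cast hd.1
  have hY0 : (0 : ℝ) < Y := by exact_mod_cast hd.1.trans hd.2
  rw [mainP, Nat.floor_div_natCast, Nat.floor_natCast, ← hκ, Real.log_div hY0.ne' hd0.ne']
  have h2 : ∀ m ∈ Finset.Icc 1 (Y / d), mu d / d * (2 * (Y : ℝ) ^ 2 / (d * m : ℕ) *
      (2 * Real.log Y - 2 * Real.log d + κ) -
        Y * (Real.log (d * m : ℕ) + Real.log Y - 2 * Real.log d + κ)) =
      mu d * (2 * (Y / d) ^ 2 * (2 * (Real.log Y - Real.log d) + κ)) * (m : ℝ)⁻¹ -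
        mu d * (Y / d) * Real.log m - mu d * (Y / d) * (Real.log Y - Real.log d + κ) := by
    intro m hm
    rw [Finset.mem_Icc] at hm
    have hm0 : (0 : ℝ) < m := by exact_mod_cast hm.1
    rw [Nat.cast_mul, Real.log_mul hd0.ne' hm0.ne']
    field_simp
    ring
  have h3 : ∑ m ∈ Finset.Icc 1 (Y / d), Real.log m = Real.log (Y / d).factorial := by
    generalize Y / d = N
    induction N with
    | zero => simp
    | succ N ih =>
      rw [Finset.sum_Icc_succ_top (by lia), ih, Nat.factorial_succ, Nat.cast_mul, Real.log_mul
        (by positivity) (by positivity), add_comm]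
  rw [Finset.sum_congr rfl h2, Finset.sum_sub_distrib, Finset.sum_sub_distrib, ← Finset.mul_sum,
    ← Finset.mul_sum, h3, Finset.sum_const, Nat.card_Icc, nsmul_eq_mul, harmonic_eq_sum_Icc,
    Nat.add_sub_cancel]
  push_cast
  ring

/-- The three sawtooth sums in `tau_progression` are all instances of `sawSum_le`, since the phases
`ξ / c + η` have `ξ = 0` or `ξ = q B + 1`. The term `b = 0` is removed. -/
lemma tau_prog_bound {u : ℕ → ℝ} (hu1 : ∀ q, q ≠ 0 → 1 ≤ u q)
    (hu : ∀ q [NeZero q] (h k : ℤ), ‖KS q h k‖ ≤ u q * √q * √(Int.gcd h q))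
    {ε : ℝ} (hε : 0 < ε) : ∃ K : ℝ, 0 ≤ K ∧ ∀ Y q B : ℕ, 1 ≤ q → q ≤ Y → q ≤ B → q * B ≤ Y ^ 2 →
      |∑ b ∈ Finset.Icc 1 B, ((q * b + 1).divisors.card : ℝ) - mainq q (q * B + 1 : ℕ)| ≤
        K * (Y : ℝ) ^ (5 / 3 + ε) * (u q / q) := by
  obtain ⟨K0, hK0, hS⟩ := sawSum_le hu1 hu (half_pos hε)
  obtain ⟨K1, hK1, ht⟩ := card_divisors_le hε
  refine ⟨1 + 30 * K1 + 4 * K0 * (2 : ℝ) ^ (ε / 2) * 4, by positivity, fun Y q B hq hqY hqB hqBY => ?_⟩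
  have hq' : (1 : ℝ) ≤ q := by exact_mod_cast hq
  have hqY' : (q : ℝ) ≤ Y := by exact_mod_cast hqY
  have hY : (1 : ℝ) ≤ Y := by linarith
  have hu1q := hu1 q (by lia)
  have h1 := tau_progression hq B
  have h2 := tau_main hq hqB
  have h0 : ∑ b ∈ Finset.range (B + 1), ((q * b + 1).divisors.card : ℝ) =
      1 + ∑ b ∈ Finset.Icc 1 B, ((q * b + 1).divisors.card : ℝ) := by
    rw [Finset.range_eq_Ico, Finset.sum_eq_sum_Ico_succ_bot (by lia)]
    simp only [mul_zero, zero_add, Nat.divisors_one, Finset.card_singleton, Nat.cast_one]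
    rfl
  set x := q * B + 1 with hx
  set s := x.sqrt with hs
  have hx1 : (1 : ℝ) ≤ x := by exact_mod_cast (by lia : 1 ≤ x)
  have hxY : (x : ℝ) ≤ 2 * (Y : ℝ) ^ 2 := by
    have : x ≤ Y ^ 2 + 1 := by lia
    have : (x : ℝ) ≤ (Y : ℝ) ^ 2 + 1 := by exact_mod_cast this
    nlinarith
  have hsx : (s : ℝ) ^ 2 ≤ x := by
    have := Nat.sqrt_le x
    rw [pow_two]; exact_mod_cast this
  have hsx' : (s : ℝ) ≤ x := by
    rcases Nat.eq_zero_or_pos s with h | h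
    · rw [h]; push_cast; linarith
    · have : (1 : ℝ) ≤ s := by exact_mod_cast h
      nlinarith
  have hqx : (q : ℝ) ^ 2 ≤ x := by
    have : q ^ 2 ≤ x := by
      rw [hx, pow_two]; exact (Nat.mul_le_mul_left q hqB).trans (Nat.le_succ _)
    exact_mod_cast this
  have s1 := hS q s x x 0 (by lia) hx1 (by linarith) le_rfl hsx hqx
  have s2 := hS q s x 0 s (by lia) hx1 le_rfl (by linarith) hsx hqx
  have s3 := hS q s x 0 0 (by lia) hx1 le_rfl (by linarith) hsx hqx
  set E := K0 * (x : ℝ) ^ (ε / 2) * u q * ((x : ℝ) ^ (1 / 3 : ℝ) + √x / √q) with hE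
  have b0 : |∑ b ∈ Finset.Icc 1 B, ((q * b + 1).divisors.card : ℝ) - mainq q x| ≤
      1 + 15 * q.divisors.card * √x / q + 4 * E := by
    have e : ∑ b ∈ Finset.Icc 1 B, ((q * b + 1).divisors.card : ℝ) =
        (∑ c ∈ Finset.Icc 1 s with c.Coprime q, (2 * ((x : ℕ) / (c * q) : ℝ) - s / q)) +
        (-2 * sawSum q x 0 s + sawSum q 0 s s + sawSum q 0 0 s) - 1 := by
      rw [← h1, h0]; ring
    rw [e]
    rw [abs_le] at h2 s1 s2 s3 ⊢
    constructor <;> linarith [h2.1, h2.2, s1.1, s1.2, s2.1, s2.2, s3.1, s3.2]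
  refine b0.trans ?_
  have hsqx : √(x : ℝ) ≤ 2 * Y := by
    rw [Real.sqrt_le_left (by positivity)]; nlinarith
  have hY0 : (0 : ℝ) < Y := by linarith
  have hYe : (1 : ℝ) ≤ (Y : ℝ) ^ ε := Real.one_le_rpow hY hε.le
  have hpow : (Y : ℝ) ^ (5 / 3 + ε) = (Y : ℝ) ^ (5 / 3 : ℝ) * (Y : ℝ) ^ ε := Real.rpow_add hY0 _ _
  have hY53 : (Y : ℝ) ≤ (Y : ℝ) ^ (5 / 3 : ℝ) := by
    conv_lhs => rw [← Real.rpow_one (Y : ℝ)]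
    exact Real.rpow_le_rpow_of_exponent_le hY (by norm_num)
  have hq1 : 1 ≤ u q / q * q := by rw [div_mul_cancel₀ _ (by linarith)]; exact hu1q
  have huq0 : 0 ≤ u q / q := by positivity
  have c1 : 1 ≤ (Y : ℝ) ^ (5 / 3 + ε) * (u q / q) := by
    rw [hpow]
    calc 1 ≤ u q / q * q := hq1
      _ ≤ u q / q * Y := by gcongr
      _ ≤ u q / q * ((Y : ℝ) ^ (5 / 3 : ℝ) * (Y : ℝ) ^ ε) := by
          gcongr; exact hY53.trans (le_mul_of_one_le_right (by positivity) hYe)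
      _ = _ := by ring
  have c2 : 15 * q.divisors.card * √x / q ≤ 30 * K1 * ((Y : ℝ) ^ (5 / 3 + ε) * (u q / q)) := by
    have : (q.divisors.card : ℝ) ≤ K1 * (Y : ℝ) ^ ε := (ht q (by lia)).trans (by gcongr)
    rw [hpow]
    calc 15 * q.divisors.card * √x / q ≤ 15 * (K1 * (Y : ℝ) ^ ε) * (2 * Y) / q := by gcongr
      _ = 30 * K1 * (Y * (Y : ℝ) ^ ε * (1 / q)) := by ring
      _ ≤ _ := by gcongr
  have c3 : E ≤ K0 * (2 : ℝ) ^ (ε / 2) * 4 * ((Y : ℝ) ^ (5 / 3 + ε) * (u q / q)) := by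
    have d1 : (x : ℝ) ^ (ε / 2) ≤ (2 : ℝ) ^ (ε / 2) * (Y : ℝ) ^ ε := by
      calc (x : ℝ) ^ (ε / 2) ≤ (2 * (Y : ℝ) ^ 2) ^ (ε / 2) := by gcongr
        _ = _ := by
          rw [Real.mul_rpow (by norm_num) (by positivity), ← Real.rpow_natCast, ← Real.rpow_mul hY0.le]
          congr 2; push_cast; ring
    have d2 : (x : ℝ) ^ (1 / 3 : ℝ) ≤ 2 * (Y : ℝ) ^ (2 / 3 : ℝ) := by
      calc (x : ℝ) ^ (1 / 3 : ℝ) ≤ (2 * (Y : ℝ) ^ 2) ^ (1 / 3 : ℝ) := by gcongr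
        _ = (2 : ℝ) ^ (1 / 3 : ℝ) * (Y : ℝ) ^ (2 / 3 : ℝ) := by
          rw [Real.mul_rpow (by norm_num) (by positivity), ← Real.rpow_natCast, ← Real.rpow_mul hY0.le]
          norm_num
        _ ≤ _ := by
          gcongr
          conv_rhs => rw [← Real.rpow_one (2 : ℝ)]
          exact Real.rpow_le_rpow_of_exponent_le (by norm_num) (by norm_num)
    have d3 : u q * (2 * (Y : ℝ) ^ (2 / 3 : ℝ)) ≤ 2 * ((Y : ℝ) ^ (5 / 3 : ℝ) * (u q / q)) := by
      have e : (Y : ℝ) ^ (5 / 3 : ℝ) = Y * (Y : ℝ) ^ (2 / 3 : ℝ) := by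
        rw [← Real.rpow_one_add' hY0.le (by norm_num)]; norm_num
      rw [e]
      calc u q * (2 * (Y : ℝ) ^ (2 / 3 : ℝ)) = 2 * (q * (Y : ℝ) ^ (2 / 3 : ℝ) * (u q / q)) := by
            field_simp
        _ ≤ _ := by gcongr
    have d4 : u q * (√x / √q) ≤ 2 * ((Y : ℝ) ^ (5 / 3 : ℝ) * (u q / q)) := by
      have hsq : 0 < √(q : ℝ) := Real.sqrt_pos.2 (by linarith)
      have e : (Y : ℝ) * √Y ≤ (Y : ℝ) ^ (5 / 3 : ℝ) := by
        rw [Real.sqrt_eq_rpow, ← Real.rpow_one_add' hY0.le (by norm_num)]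
        exact Real.rpow_le_rpow_of_exponent_le hY (by norm_num)
      calc u q * (√x / √q) = √x * √q * (u q / q) := by
            have := Real.mul_self_sqrt (by linarith : (0 : ℝ) ≤ q)
            field_simp
            rw [pow_two, this]
        _ ≤ 2 * Y * √Y * (u q / q) := by gcongr
        _ = 2 * (Y * √Y * (u q / q)) := by ring
        _ ≤ _ := by gcongr
    rw [hE, hpow]
    calc _ = K0 * (x : ℝ) ^ (ε / 2) * (u q * (x : ℝ) ^ (1 / 3 : ℝ) + u q * (√x / √q)) := by ring
      _ ≤ K0 * ((2 : ℝ) ^ (ε / 2) * (Y : ℝ) ^ ε) * (u q * (2 * (Y : ℝ) ^ (2 / 3 : ℝ)) +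
          2 * ((Y : ℝ) ^ (5 / 3 : ℝ) * (u q / q))) := by gcongr
      _ ≤ K0 * ((2 : ℝ) ^ (ε / 2) * (Y : ℝ) ^ ε) * (2 * ((Y : ℝ) ^ (5 / 3 : ℝ) * (u q / q)) +
          2 * ((Y : ℝ) ^ (5 / 3 : ℝ) * (u q / q))) := by gcongr
      _ = _ := by ring
  linarith

end Stepanov

/-! ### The correlation up to a square -/

namespace Stepanov

/-- The main term may be evaluated at `Y²` and `q Y` instead of the exact end points of the summation. -/
lemma mainq_shift : ∃ K : ℝ, 0 ≤ K ∧ ∀ Y q : ℕ, ∀ a b : ℝ, 1 ≤ q → q ≤ Y → 1 ≤ a → a ≤ b →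
    b ≤ a + q → b ≤ 2 * (Y : ℝ) ^ 2 → |mainq q b - mainq q a| ≤ K * (Y : ℝ) ^ (2 / 3 : ℝ) := by
  obtain ⟨K1, hK1, ht⟩ := card_divisors_le (show (0 : ℝ) < 1 / 3 by norm_num)
  refine ⟨K1 * 17, by positivity, fun Y q a b hq hqY ha hab hbq hbY => ?_⟩
  have hq' : (1 : ℝ) ≤ q := by exact_mod_cast hq
  have hqY' : (q : ℝ) ≤ Y := by exact_mod_cast hqY
  have hY : (1 : ℝ) ≤ Y := by linarith
  have h := mainq_diff hq ha hab
  have l1 : Real.log Y ≤ 3 * (Y : ℝ) ^ (1 / 3 : ℝ) := by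
    have := log_le_rpow (show (0 : ℝ) < 1 / 3 by norm_num) hY
    norm_num at this ⊢; exact this
  have l2 : Real.log q ≤ Real.log Y := Real.log_le_log (by linarith) hqY'
  have l3 : Real.log b ≤ 1 + 2 * Real.log Y := by
    calc Real.log b ≤ Real.log (2 * (Y : ℝ) ^ 2) := Real.log_le_log (by linarith) hbY
      _ = Real.log 2 + 2 * Real.log Y := by
        rw [Real.log_mul (by norm_num) (by positivity), Real.log_pow]; push_cast; ring
      _ ≤ _ := by linarith [Real.log_two_lt_d9]
  have hY1 : (1 : ℝ) ≤ (Y : ℝ) ^ (1 / 3 : ℝ) := Real.one_le_rpow hY (by norm_num)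
  have l4 : Real.log b + 2 * Real.log q + 4 ≤ 17 * (Y : ℝ) ^ (1 / 3 : ℝ) := by linarith
  have l5 : (q.divisors.card : ℝ) ≤ K1 * (Y : ℝ) ^ (1 / 3 : ℝ) := (ht q (by lia)).trans (by gcongr)
  have hlog : 0 ≤ Real.log b + 2 * Real.log q + 4 := by
    have := Real.log_nonneg (ha.trans hab)
    have := Real.log_nonneg hq'
    linarith
  calc |mainq q b - mainq q a| ≤ (b - a) * q.divisors.card / q * (Real.log b + 2 * Real.log q + 4) := h
    _ ≤ q * q.divisors.card / q * (Real.log b + 2 * Real.log q + 4) := by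
        gcongr; linarith
    _ = q.divisors.card * (Real.log b + 2 * Real.log q + 4) := by
        rw [mul_div_cancel_left₀ _ (by linarith : (q : ℝ) ≠ 0)]
    _ ≤ (K1 * (Y : ℝ) ^ (1 / 3 : ℝ)) * (17 * (Y : ℝ) ^ (1 / 3 : ℝ)) := by gcongr
    _ = K1 * 17 * ((Y : ℝ) ^ (1 / 3 : ℝ) * (Y : ℝ) ^ (1 / 3 : ℝ)) := by ring
    _ = K1 * 17 * (Y : ℝ) ^ (2 / 3 : ℝ) := by
        rw [← Real.rpow_add (by linarith)]; norm_num

lemma sum_mainP_bound {Y : ℕ} (hY : 1 ≤ Y) :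
    |∑ d ∈ Finset.Icc 1 Y, mu d * mainP (Y / d) - (Y : ℝ) ^ 2 * ∑ d ∈ Finset.Icc 1 Y, mu d / (d : ℝ) ^ 2 *
      ((2 * Real.log (Y / d) + 2 * Real.eulerMascheroniConstant) ^ 2 -
        2 * (2 * Real.log (Y / d) + 2 * Real.eulerMascheroniConstant) + 2)| ≤
      176 * (Y : ℝ) ^ (5 / 3 : ℝ) := by
  have hY' : (1 : ℝ) ≤ Y := by exact_mod_cast hY
  have hY1 : (1 : ℝ) ≤ (Y : ℝ) ^ (1 / 3 : ℝ) := Real.one_le_rpow hY' (by norm_num)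
  have l1 : Real.log Y ≤ 3 * (Y : ℝ) ^ (1 / 3 : ℝ) := by
    have := log_le_rpow (show (0 : ℝ) < 1 / 3 by norm_num) hY'
    norm_num at this ⊢; exact this
  have l2 : ∑ i ∈ Finset.Icc 1 Y, 1 / (i : ℝ) ≤ 4 * (Y : ℝ) ^ (1 / 3 : ℝ) := by
    have := harmonic_le_rpow (show (0 : ℝ) < 1 / 3 by norm_num) hY
    norm_num at this ⊢; exact this
  rw [Finset.mul_sum, ← Finset.sum_sub_distrib]
  have key : ∀ d ∈ Finset.Icc 1 Y, |mu d * mainP (Y / d) - (Y : ℝ) ^ 2 * (mu d / (d : ℝ) ^ 2 *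
      ((2 * Real.log (Y / d) + 2 * Real.eulerMascheroniConstant) ^ 2 -
        2 * (2 * Real.log (Y / d) + 2 * Real.eulerMascheroniConstant) + 2))| ≤
      11 * Y * (4 * (Y : ℝ) ^ (1 / 3 : ℝ)) * (1 / d) := by
    intro d hd
    rw [Finset.mem_Icc] at hd
    have hd0 : (1 : ℝ) ≤ d := by exact_mod_cast hd.1
    have hdY : (d : ℝ) ≤ Y := by exact_mod_cast hd.2
    have h := mainP_bound (z := (Y : ℝ) / d) (by rw [le_div_iff₀ (by linarith)]; linarith)
    rw [show mu d * mainP (Y / d) - (Y : ℝ) ^ 2 * (mu d / (d : ℝ) ^ 2 *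
      ((2 * Real.log (Y / d) + 2 * Real.eulerMascheroniConstant) ^ 2 -
        2 * (2 * Real.log (Y / d) + 2 * Real.eulerMascheroniConstant) + 2)) =
      mu d * (mainP (Y / d) - ((Y : ℝ) / d) ^ 2 *
      ((2 * Real.log (Y / d) + 2 * Real.eulerMascheroniConstant) ^ 2 -
        2 * (2 * Real.log (Y / d) + 2 * Real.eulerMascheroniConstant) + 2)) by ring, abs_mul]
    have l3 : Real.log ((Y : ℝ) / d) ≤ Real.log Y := by
      apply Real.log_le_log (by positivity)
      exact div_le_self (by linarith) hd0
    calc _ ≤ 1 * (11 * ((Y : ℝ) / d) * (Real.log ((Y : ℝ) / d) + 1)) :=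
          mul_le_mul (abs_mu_le d) h (abs_nonneg _) zero_le_one
      _ ≤ 1 * (11 * ((Y : ℝ) / d) * (4 * (Y : ℝ) ^ (1 / 3 : ℝ))) := by
          gcongr; linarith
      _ = _ := by ring
  calc _ ≤ _ := Finset.abs_sum_le_sum_abs _ _
    _ ≤ _ := Finset.sum_le_sum key
    _ = 11 * Y * (4 * (Y : ℝ) ^ (1 / 3 : ℝ)) * ∑ i ∈ Finset.Icc 1 Y, 1 / (i : ℝ) := by
        rw [Finset.mul_sum]
    _ ≤ 11 * Y * (4 * (Y : ℝ) ^ (1 / 3 : ℝ)) * (4 * (Y : ℝ) ^ (1 / 3 : ℝ)) := by gcongr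
    _ = 176 * ((Y : ℝ) ^ (1 : ℝ) * (Y : ℝ) ^ (1 / 3 : ℝ) * (Y : ℝ) ^ (1 / 3 : ℝ)) := by
        rw [Real.rpow_one]; ring
    _ = _ := by
        rw [← Real.rpow_add (by linarith), ← Real.rpow_add (by linarith)]; norm_num

/-- The correlation up to `Y²`, before the truncated series over `d` are completed. -/
lemma correlation_square {ε : ℝ} (hε : 0 < ε) : ∃ K : ℝ, 0 ≤ K ∧ ∀ Y : ℕ, 1 ≤ Y →
    |∑ n ∈ Finset.Icc 1 (Y ^ 2), (n.divisors.card : ℝ) * ((n + 1).divisors.card : ℝ) -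
      (Y : ℝ) ^ 2 * ∑ d ∈ Finset.Icc 1 Y, mu d / (d : ℝ) ^ 2 *
      ((2 * Real.log (Y / d) + 2 * Real.eulerMascheroniConstant) ^ 2 -
        2 * (2 * Real.log (Y / d) + 2 * Real.eulerMascheroniConstant) + 2)| ≤
      K * (Y : ℝ) ^ (5 / 3 + ε) := by
  obtain ⟨u, hu1, hu, hu2⟩ := exists_weight
  obtain ⟨K0, hK0, hp⟩ := tau_prog_bound hu1 hu (half_pos hε)
  obtain ⟨K1, hK1, hm⟩ := mainq_shift
  obtain ⟨K2, hK2, hs⟩ := hu2 (ε / 2) (half_pos hε)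
  refine ⟨(3 * K0 + 5 * K1) * K2 + 176, by positivity, fun Y hY => ?_⟩
  have hY' : (1 : ℝ) ≤ Y := by exact_mod_cast hY
  have hY0 : (0 : ℝ) < Y := by linarith
  have h1 := hyperbola (fun n => ((n + 1).divisors.card : ℝ)) (Y ^ 2)
  rw [show (Y ^ 2).sqrt = Y by rw [pow_two, Nat.sqrt_eq], Finset.mul_sum, ← Finset.sum_sub_distrib] at h1
  rw [h1]
  have h2 := sum_mainP_bound hY
  rw [← sum_mainq] at h2
  have key : ∀ q ∈ Finset.Icc 1 Y, |(2 * ∑ b ∈ Finset.Icc 1 (Y ^ 2 / q), ((q * b + 1).divisors.card : ℝ) -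
      ∑ b ∈ Finset.Icc 1 Y, ((q * b + 1).divisors.card : ℝ)) -
      (2 * mainq q ((Y : ℝ) ^ 2) - mainq q (q * Y))| ≤
      (3 * K0 + 5 * K1) * (Y : ℝ) ^ (5 / 3 + ε / 2) * (u q / q) := by
    intro q hq
    rw [Finset.mem_Icc] at hq
    have hq' : (1 : ℝ) ≤ q := by exact_mod_cast hq.1
    have hqY' : (q : ℝ) ≤ Y := by exact_mod_cast hq.2
    set B := Y ^ 2 / q with hB
    have hqB : q ≤ B := by
      rw [hB, Nat.le_div_iff_mul_le hq.1, pow_two]; exact Nat.mul_le_mul hq.2 hq.2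
    have hBY : q * B ≤ Y ^ 2 := Nat.mul_div_le _ _
    have hBY2 : Y ^ 2 ≤ q * B + q := by
      have := Nat.div_add_mod (Y ^ 2) q
      have := Nat.mod_lt (Y ^ 2) hq.1
      lia
    have p1 := hp Y q B hq.1 hq.2 hqB hBY
    have p2 := hp Y q Y hq.1 hq.2 hq.2 (by rw [pow_two]; exact Nat.mul_le_mul_right _ hq.2)
    have hB1 : (1 : ℝ) ≤ q * B := by
      exact_mod_cast Nat.mul_pos hq.1 (hq.1.trans hqB)
    have hqY1 : (1 : ℝ) ≤ q * Y := by nlinarith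
    have hqYY : (q : ℝ) * Y ≤ (Y : ℝ) ^ 2 := by nlinarith
    have hBY' : (q : ℝ) * B ≤ (Y : ℝ) ^ 2 := by exact_mod_cast hBY
    have hBY2' : (Y : ℝ) ^ 2 ≤ q * B + q := by exact_mod_cast hBY2
    have m1 := hm Y q (q * B) (q * B + 1) hq.1 hq.2 hB1 (by linarith) (by linarith) (by nlinarith)
    have m2 := hm Y q (q * B) ((Y : ℝ) ^ 2) hq.1 hq.2 hB1 hBY' hBY2' (by nlinarith)
    have m3 := hm Y q (q * Y) (q * Y + 1) hq.1 hq.2 hqY1 (by linarith) (by linarith) (by nlinarith)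
    push_cast at p1 p2
    have huq : 1 ≤ u q / q * Y := by
      calc (1 : ℝ) ≤ u q := hu1 q (by lia)
        _ = u q / q * q := by field_simp
        _ ≤ _ := by
          have := hu1 q (by lia)
          gcongr
    have hb : (Y : ℝ) ^ (2 / 3 : ℝ) ≤ (Y : ℝ) ^ (5 / 3 + ε / 2) * (u q / q) := by
      calc (Y : ℝ) ^ (2 / 3 : ℝ) ≤ (Y : ℝ) ^ (2 / 3 : ℝ) * (u q / q * Y) :=
            le_mul_of_one_le_right (by positivity) huq
        _ = ((Y : ℝ) ^ (2 / 3 : ℝ) * (Y : ℝ) ^ (1 : ℝ)) * (u q / q) := by rw [Real.rpow_one]; ring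
        _ ≤ _ := by
          rw [← Real.rpow_add hY0]
          have : 0 ≤ u q / q := div_nonneg (by linarith [hu1 q (by lia)]) (by linarith)
          exact mul_le_mul_of_nonneg_right
            (Real.rpow_le_rpow_of_exponent_le hY' (by linarith)) this
    have hb1 := mul_le_mul_of_nonneg_left hb hK1
    clear h1 h2
    rw [abs_le] at p1 p2 m1 m2 m3 ⊢
    constructor <;> linarith [p1.1, p1.2, p2.1, p2.2, m1.1, m1.2, m2.1, m2.2, m3.1, m3.2]
  have h3 : |∑ q ∈ Finset.Icc 1 Y, (2 * ∑ b ∈ Finset.Icc 1 (Y ^ 2 / q), ((q * b + 1).divisors.card : ℝ) -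
      ∑ b ∈ Finset.Icc 1 Y, ((q * b + 1).divisors.card : ℝ)) -
      ∑ q ∈ Finset.Icc 1 Y, (2 * mainq q ((Y : ℝ) ^ 2) - mainq q (q * Y))| ≤
      (3 * K0 + 5 * K1) * K2 * (Y : ℝ) ^ (5 / 3 + ε) := by
    rw [← Finset.sum_sub_distrib]
    calc _ ≤ _ := Finset.abs_sum_le_sum_abs _ _
      _ ≤ _ := Finset.sum_le_sum key
      _ = (3 * K0 + 5 * K1) * (Y : ℝ) ^ (5 / 3 + ε / 2) * ∑ q ∈ Finset.Icc 1 Y, u q / q := by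
          rw [Finset.mul_sum]
      _ ≤ (3 * K0 + 5 * K1) * (Y : ℝ) ^ (5 / 3 + ε / 2) * (K2 * (Y : ℝ) ^ (ε / 2)) := by
          gcongr; exact hs Y hY
      _ = (3 * K0 + 5 * K1) * K2 * ((Y : ℝ) ^ (5 / 3 + ε / 2) * (Y : ℝ) ^ (ε / 2)) := by ring
      _ = _ := by
          rw [← Real.rpow_add hY0]; congr 2; ring
  have h4 : (Y : ℝ) ^ (5 / 3 : ℝ) ≤ (Y : ℝ) ^ (5 / 3 + ε) :=
    Real.rpow_le_rpow_of_exponent_le hY' (by linarith)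
  rw [abs_le] at h2 h3 ⊢
  constructor <;> linarith [h3.1, h3.2, h2.1, h2.2]

end Stepanov

/-! ### Dirichlet series at 2 -/

namespace Stepanov

open ArithmeticFunction LSeries

/-- A Dirichlet series with real coefficients at `2` is a real series; its term at `0` vanishes since
`g 0 / 0 = 0`. -/
lemma LSeries_two_ofReal (f : ℕ → ℂ) (g : ℕ → ℝ) (h : ∀ n, f n = (g n : ℂ)) :
    LSeries f 2 = ((∑' n, g n / (n : ℝ) ^ 2 : ℝ) : ℂ) := by
  rw [LSeries, Complex.ofReal_tsum]
  refine tsum_congr fun n => ?_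
  rcases Nat.eq_zero_or_pos n with h0 | h0
  · subst h0; simp
  · rw [LSeries.term_of_ne_zero h0.ne', h n]
    push_cast
    norm_cast

lemma summable_two_ofReal (f : ℕ → ℂ) (g : ℕ → ℝ) (h : ∀ n, f n = (g n : ℂ)) (hs : LSeriesSummable f 2) :
    Summable fun n => g n / (n : ℝ) ^ 2 := by
  rw [← Complex.summable_ofReal]
  refine (summable_congr fun n => ?_).mp hs
  rcases Nat.eq_zero_or_pos n with h0 | h0
  · subst h0; simp
  · rw [LSeries.term_of_ne_zero h0.ne', h n]
    push_cast
    norm_cast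

/-- The Möbius function with complex values. -/
noncomputable abbrev muC : ℕ → ℂ := fun n => ((moebius n : ℤ) : ℂ)
/-- The von Mangoldt function with complex values. -/
noncomputable abbrev lamC : ℕ → ℂ := fun n => (vonMangoldt n : ℂ)

lemma abscissa_lam : abscissaOfAbsConv lamC ≤ 1 := by
  refine abscissaOfAbsConv_le_of_forall_lt_LSeriesSummable fun y hy => ?_
  exact LSeriesSummable_vonMangoldt (by simpa using hy)

lemma abs_lt_mu {s : ℂ} (hs : 1 < s.re) : abscissaOfAbsConv muC < s.re := by
  rw [abscissaOfAbsConv_moebius]; exact_mod_cast hs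

lemma abs_lt_lam {s : ℂ} (hs : 1 < s.re) : abscissaOfAbsConv lamC < s.re :=
  abscissa_lam.trans_lt (by exact_mod_cast hs)

lemma abs_lt_one {s : ℂ} (hs : 1 < s.re) : abscissaOfAbsConv 1 < s.re := by
  rw [abscissaOfAbsConv_one]; exact_mod_cast hs

lemma nhds_re {s : ℂ} (hs : 1 < s.re) : ∀ᶠ z in nhds s, 1 < z.re :=
  (isOpen_lt continuous_const Complex.continuous_re).mem_nhds hs

/-- The derivative of `1 / ζ` is `(1 / ζ) (-ζ' / ζ)`; the factor `log n` stands for minus the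
derivative. -/
lemma LSeries_logMul_mu {s : ℂ} (hs : 1 < s.re) :
    LSeries (logMul muC) s = -(LSeries muC s * LSeries lamC s) := by
  have h1 := LSeries_hasDerivAt (abs_lt_mu hs)
  have h2 := LSeries_hasDerivAt (abs_lt_one hs)
  have h3 := (h2.mul h1).congr_of_eventuallyEq (f₁ := fun _ => (1 : ℂ)) (by
    filter_upwards [nhds_re hs] with z hz
    exact (LSeries_one_mul_Lseries_moebius hz).symm)
  have h4 := h3.unique (hasDerivAt_const s (1 : ℂ))
  have h5 : LSeries lamC s = - deriv (LSeries 1) s / LSeries 1 s := LSeries_vonMangoldt_eq hs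
  rw [h2.deriv] at h5
  have h6 : LSeries 1 s ≠ 0 := LSeries_one_ne_zero_of_one_lt_re hs
  have h7 : LSeries 1 s * LSeries muC s = 1 := LSeries_one_mul_Lseries_moebius hs
  rw [h5]
  field_simp
  linear_combination -h4

/-- The second derivative of `1 / ζ`, by the product rule. -/
lemma LSeries_logMul_logMul_mu {s : ℂ} (hs : 1 < s.re) :
    LSeries (logMul (logMul muC)) s =
      LSeries muC s * (LSeries lamC s ^ 2 - LSeries (logMul lamC) s) := by
  have h0 : abscissaOfAbsConv (logMul muC) < s.re := by
    rw [abscissaOfAbsConv_logMul]; exact abs_lt_mu hs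
  have h1 := LSeries_hasDerivAt (abs_lt_mu hs)
  have h2 := LSeries_hasDerivAt (abs_lt_lam hs)
  have h3 := LSeries_hasDerivAt h0
  have h4 := ((h1.mul h2).neg).congr_of_eventuallyEq (f₁ := LSeries (logMul muC)) (by
    filter_upwards [nhds_re hs] with z hz
    exact LSeries_logMul_mu hz)
  have h5 := h3.unique h4
  rw [LSeries_logMul_mu hs] at h5
  linear_combination -h5

lemma tsum_primePow (F : ℕ → ℝ) (hF : Summable F) (h0 : ∀ n, ¬ IsPrimePow n → F n = 0) :
    ∑' n, F n = ∑' p : Nat.Primes, ∑' k : ℕ, F ((p : ℕ) ^ (k + 1)) := by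
  have h1 : ∑' n : {n : ℕ // IsPrimePow n}, F n = ∑' n, F n :=
    tsum_subtype_eq_of_support_subset (s := {n | IsPrimePow n}) (fun n hn => by
      by_contra h; exact hn (h0 n h))
  have h2 : Summable fun n : {n : ℕ // IsPrimePow n} => F n := hF.subtype _
  rw [← h1, ← Nat.Primes.prodNatEquiv.tsum_eq]
  have h3 := (Nat.Primes.prodNatEquiv.summable_iff).mpr h2
  exact h3.tsum_prod

lemma vonMangoldt_primes_pow (p : Nat.Primes) (k : ℕ) :
    vonMangoldt ((p : ℕ) ^ (k + 1)) = Real.log (p : ℕ) := by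
  rw [vonMangoldt_apply_pow (by lia), vonMangoldt_apply_prime p.2]

/-- Summing the geometric series `∑ p ^ (-2 k)` over the powers of each prime gives `1 / (p² - 1)`. -/
lemma tsum_lam (hs : Summable fun n : ℕ => vonMangoldt n / (n : ℝ) ^ 2) :
    ∑' n : ℕ, vonMangoldt n / (n : ℝ) ^ 2 = S1 := by
  rw [tsum_primePow _ hs fun n hn => by simp [vonMangoldt_eq_zero_iff.mpr hn], S1]
  refine tsum_congr fun p => ?_
  have hp : (1 : ℝ) < (p : ℕ) := by exact_mod_cast p.2.one_lt
  have hr : ‖(((p : ℕ) : ℝ) ^ 2)⁻¹‖ < 1 := by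
    rw [Real.norm_of_nonneg (by positivity)]
    exact inv_lt_one_of_one_lt₀ (by nlinarith)
  have e : ∀ k : ℕ, vonMangoldt ((p : ℕ) ^ (k + 1)) / (((p : ℕ) ^ (k + 1) : ℕ) : ℝ) ^ 2 =
      Real.log (p : ℕ) * (((p : ℕ) : ℝ) ^ 2)⁻¹ * ((((p : ℕ) : ℝ) ^ 2)⁻¹) ^ k := by
    intro k
    rw [vonMangoldt_primes_pow]
    push_cast
    rw [← pow_mul, mul_comm (k + 1), pow_mul, pow_succ, inv_pow]
    field_simp
  rw [tsum_congr e, tsum_mul_left, tsum_geometric_of_norm_lt_one hr]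
  have : ((p : ℕ) : ℝ) ^ 2 - 1 ≠ 0 := by nlinarith
  field_simp

/-- Here `∑ k p ^ (-2 k) = p² / (p² - 1)²` over the powers of each prime. -/
lemma tsum_log_lam (hs : Summable fun n : ℕ => Real.log n * vonMangoldt n / (n : ℝ) ^ 2) :
    ∑' n : ℕ, Real.log n * vonMangoldt n / (n : ℝ) ^ 2 = S2 := by
  rw [tsum_primePow _ hs fun n hn => by simp [vonMangoldt_eq_zero_iff.mpr hn], S2]
  refine tsum_congr fun p => ?_
  have hp : (1 : ℝ) < (p : ℕ) := by exact_mod_cast p.2.one_lt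
  have hr : ‖(((p : ℕ) : ℝ) ^ 2)⁻¹‖ < 1 := by
    rw [Real.norm_of_nonneg (by positivity)]
    exact inv_lt_one_of_one_lt₀ (by nlinarith)
  have e : ∀ k : ℕ, Real.log ((p : ℕ) ^ (k + 1) : ℕ) * vonMangoldt ((p : ℕ) ^ (k + 1)) /
      (((p : ℕ) ^ (k + 1) : ℕ) : ℝ) ^ 2 =
      Real.log (p : ℕ) ^ 2 * (((k + 1 : ℕ) : ℝ) * ((((p : ℕ) : ℝ) ^ 2)⁻¹) ^ (k + 1)) := by
    intro k
    rw [vonMangoldt_primes_pow]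
    push_cast
    rw [← pow_mul, mul_comm (k + 1), pow_mul, inv_pow, ← Nat.cast_succ, Real.log_pow]
    push_cast
    field_simp
  have h1 := tsum_coe_mul_geometric_of_norm_lt_one hr
  have h2 := (summable_pow_mul_geometric_of_norm_lt_one 1 hr).tsum_eq_zero_add
  simp only [pow_one, Nat.cast_zero, zero_mul, zero_add] at h2
  rw [tsum_congr e, tsum_mul_left, ← h2, h1]
  have : ((p : ℕ) : ℝ) ^ 2 - 1 ≠ 0 := by nlinarith
  have h3 : 1 - (((p : ℕ) : ℝ) ^ 2)⁻¹ ≠ 0 := by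
    rw [Real.norm_of_nonneg (by positivity)] at hr; linarith
  have e3 : 1 - (((p : ℕ) : ℝ) ^ 2)⁻¹ = (((p : ℕ) : ℝ) ^ 2 - 1) / ((p : ℕ) : ℝ) ^ 2 := by
    field_simp
  rw [e3]
  field_simp

lemma series_values :
    (∑' n : ℕ, mu n / (n : ℝ) ^ 2 = 6 / Real.pi ^ 2) ∧
    (∑' n : ℕ, Real.log n * mu n / (n : ℝ) ^ 2 = -(6 / Real.pi ^ 2 * S1)) ∧
    (∑' n : ℕ, Real.log n * (Real.log n * mu n) / (n : ℝ) ^ 2 = 6 / Real.pi ^ 2 * (S1 ^ 2 - S2)) := by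
  have h2 : (1 : ℝ) < (2 : ℂ).re := by norm_num
  have e0 : LSeries muC 2 = _ := LSeries_two_ofReal muC mu (fun n => by simp [mu])
  have e1 : LSeries (logMul muC) 2 = _ := LSeries_two_ofReal _ (fun n => Real.log n * mu n)
    (fun n => by simp [mu, logMul])
  have e2 : LSeries (logMul (logMul muC)) 2 = _ :=
    LSeries_two_ofReal _ (fun n => Real.log n * (Real.log n * mu n)) (fun n => by simp [mu, logMul])
  have f0 : LSeries lamC 2 = _ := LSeries_two_ofReal lamC (fun n => vonMangoldt n) (fun n => rfl)
  have f1 : LSeries (logMul lamC) 2 = _ :=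
    LSeries_two_ofReal _ (fun n => Real.log n * vonMangoldt n) (fun n => by simp [logMul])
  have s0 := summable_two_ofReal lamC (fun n => vonMangoldt n) (fun n => rfl) 
    (LSeriesSummable_vonMangoldt h2)
  have s1 := summable_two_ofReal (logMul lamC) (fun n => Real.log n * vonMangoldt n)
    (fun n => by simp [logMul]) (LSeriesSummable_logMul_of_lt_re (abs_lt_lam h2))
  rw [tsum_lam s0] at f0
  rw [tsum_log_lam s1] at f1
  have z : LSeries muC 2 = ((6 / Real.pi ^ 2 : ℝ) : ℂ) := by
    have h := LSeries_one_mul_Lseries_moebius h2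
    rw [LSeries_one_eq_riemannZeta h2, riemannZeta_two] at h
    have hpi : (Real.pi : ℂ) ≠ 0 := by exact_mod_cast Real.pi_ne_zero
    push_cast
    field_simp at h ⊢
    linear_combination h
  have g1 := LSeries_logMul_mu h2
  have g2 := LSeries_logMul_logMul_mu h2
  rw [e1, z, f0] at g1
  rw [e2, z, f0, f1] at g2
  rw [z] at e0
  refine ⟨?_, ?_, ?_⟩
  · exact_mod_cast e0.symm
  · exact_mod_cast g1
  · exact_mod_cast g2

end Stepanov

/-! ### Truncating the series -/

namespace Stepanov

/-- The exponent `1 / 6` leaves room for the logarithms. The saving `Y ^ (-2/3)` is ample: `Y ^ (-1/3)`,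
after multiplication by `(log Y)²`, is what the final error term requires. -/
lemma tail_bound {c : ℝ} (hc : 0 ≤ c) : ∃ K : ℝ, 0 ≤ K ∧ ∀ g : ℕ → ℝ, g 0 = 0 →
    (∀ n : ℕ, 1 ≤ n → |g n| ≤ c * (n : ℝ) ^ (1 / 6 : ℝ) / (n : ℝ) ^ 2) → ∀ Y : ℕ, 1 ≤ Y →
    |∑ d ∈ Finset.Icc 1 Y, g d - ∑' n, g n| ≤ K * (Y : ℝ) ^ (-(2 / 3) : ℝ) := by
  have hz : Summable fun n : ℕ => c * (n : ℝ) ^ (-(7 / 6) : ℝ) :=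
    (Real.summable_nat_rpow.mpr (by norm_num)).mul_left c
  refine ⟨∑' n : ℕ, c * (n : ℝ) ^ (-(7 / 6) : ℝ), tsum_nonneg fun n => by positivity,
    fun g g0 hg Y hY => ?_⟩
  have hY' : (1 : ℝ) ≤ Y := by exact_mod_cast hY
  have hb : ∀ n : ℕ, Y ≤ n → |g n| ≤ (Y : ℝ) ^ (-(2 / 3) : ℝ) * (c * (n : ℝ) ^ (-(7 / 6) : ℝ)) := by
    intro n hn
    have hn' : (Y : ℝ) ≤ n := by exact_mod_cast hn
    have hn0 : (0 : ℝ) < n := by linarith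
    calc |g n| ≤ c * (n : ℝ) ^ (1 / 6 : ℝ) / (n : ℝ) ^ 2 := hg n (hY.trans hn)
      _ = c * ((n : ℝ) ^ (-(2 / 3) : ℝ) * (n : ℝ) ^ (-(7 / 6) : ℝ)) := by
          rw [← Real.rpow_add hn0, mul_div_assoc, ← Real.rpow_natCast, ← Real.rpow_sub hn0]
          norm_num
      _ ≤ c * ((Y : ℝ) ^ (-(2 / 3) : ℝ) * (n : ℝ) ^ (-(7 / 6) : ℝ)) := by
          have := Real.rpow_le_rpow_of_nonpos (by linarith : (0 : ℝ) < Y) hn'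
            (by norm_num : (-(2 / 3) : ℝ) ≤ 0)
          gcongr
      _ = _ := by ring
  have hz2 := hz.mul_left ((Y : ℝ) ^ (-(2 / 3) : ℝ))
  have hsg : Summable g := by
    rw [← summable_nat_add_iff Y]
    exact Summable.of_norm_bounded ((summable_nat_add_iff Y).mpr hz2) fun n => hb _ (by lia)
  have h1 : ∑ d ∈ Finset.Icc 1 Y, g d = ∑ d ∈ Finset.range (Y + 1), g d := by
    rw [Finset.range_eq_Ico, Finset.sum_eq_sum_Ico_succ_bot (by lia), g0, zero_add]
    rfl
  rw [h1, ← hsg.sum_add_tsum_nat_add (Y + 1), sub_add_cancel_left, abs_neg]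
  have h2 : |∑' i, g (i + (Y + 1))| ≤
      ∑' i : ℕ, (Y : ℝ) ^ (-(2 / 3) : ℝ) * (c * ((i + (Y + 1) : ℕ) : ℝ) ^ (-(7 / 6) : ℝ)) :=
    tsum_of_norm_bounded (f := fun i => g (i + (Y + 1)))
      ((summable_nat_add_iff (Y + 1)).mpr hz2).hasSum fun i => hb (i + (Y + 1)) (by lia)
  refine h2.trans ?_
  rw [tsum_mul_left, mul_comm]
  refine mul_le_mul_of_nonneg_right ?_ (by positivity)
  have h3 := hz.sum_add_tsum_nat_add (Y + 1)
  have h4 : 0 ≤ ∑ i ∈ Finset.range (Y + 1), c * (i : ℝ) ^ (-(7 / 6) : ℝ) :=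
    Finset.sum_nonneg fun i _ => by positivity
  linarith

lemma series_tails : ∃ K : ℝ, 0 ≤ K ∧ ∀ Y : ℕ, 1 ≤ Y →
    |∑ d ∈ Finset.Icc 1 Y, mu d / (d : ℝ) ^ 2 - 6 / Real.pi ^ 2| ≤ K * (Y : ℝ) ^ (-(2 / 3) : ℝ) ∧
    |∑ d ∈ Finset.Icc 1 Y, Real.log d * mu d / (d : ℝ) ^ 2 - (-(6 / Real.pi ^ 2 * S1))| ≤
      K * (Y : ℝ) ^ (-(2 / 3) : ℝ) ∧
    |∑ d ∈ Finset.Icc 1 Y, Real.log d * (Real.log d * mu d) / (d : ℝ) ^ 2 -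
      6 / Real.pi ^ 2 * (S1 ^ 2 - S2)| ≤ K * (Y : ℝ) ^ (-(2 / 3) : ℝ) := by
  obtain ⟨K, hK, h⟩ := tail_bound (c := 144) (by norm_num)
  obtain ⟨e0, e1, e2⟩ := series_values
  have hm : ∀ n : ℕ, 1 ≤ n → 1 ≤ (n : ℝ) ^ (1 / 12 : ℝ) ∧ 0 ≤ Real.log n ∧
      Real.log n ≤ 12 * (n : ℝ) ^ (1 / 12 : ℝ) ∧
      (n : ℝ) ^ (1 / 6 : ℝ) = (n : ℝ) ^ (1 / 12 : ℝ) * (n : ℝ) ^ (1 / 12 : ℝ) := by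
    intro n hn
    have hn' : (1 : ℝ) ≤ n := by exact_mod_cast hn
    refine ⟨Real.one_le_rpow hn' (by norm_num), Real.log_nonneg hn', ?_, ?_⟩
    · have := log_le_rpow (show (0 : ℝ) < 1 / 12 by norm_num) hn'
      norm_num at this ⊢; exact this
    · rw [← Real.rpow_add (by linarith)]; norm_num
  refine ⟨K, hK, fun Y hY => ?_⟩
  rw [← e2, ← e1, ← e0]
  refine ⟨h _ (by simp) (fun n hn => ?_) Y hY, h _ (by simp) (fun n hn => ?_) Y hY,
    h _ (by simp) (fun n hn => ?_) Y hY⟩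
  all_goals
    obtain ⟨h1, h2, h3, h4⟩ := hm n hn
    rw [abs_div, abs_of_nonneg (by positivity : (0 : ℝ) ≤ (n : ℝ) ^ 2), h4]
    gcongr
  · nlinarith [abs_mu_le n]
  · rw [abs_mul, abs_of_nonneg h2]
    calc _ ≤ Real.log n * 1 := mul_le_mul_of_nonneg_left (abs_mu_le n) h2
      _ ≤ _ := by nlinarith
  · rw [abs_mul, abs_mul, abs_of_nonneg h2]
    calc _ ≤ Real.log n * (Real.log n * 1) := by
          gcongr; exact abs_mu_le n
      _ ≤ (12 * (n : ℝ) ^ (1 / 12 : ℝ)) * (12 * (n : ℝ) ^ (1 / 12 : ℝ) * 1) := by gcongr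
      _ = _ := by ring

/-- The main term of the theorem divided by `X`, as a function of `L = log X`. -/
noncomputable def mainL (L : ℝ) : ℝ :=
  6 / Real.pi ^ 2 * (L ^ 2 + (4 * Real.eulerMascheroniConstant + 4 * S1 - 2) * L +
    (4 * (Real.eulerMascheroniConstant + S1) ^ 2 - 4 * (Real.eulerMascheroniConstant + S1) - 4 * S2 + 2))

/-- The quadratic polynomial `mainL` arises by expanding `log (Y / d) = log Y - log d` and inserting the
values of the three series. -/
lemma mainL_approx : ∃ K : ℝ, 0 ≤ K ∧ ∀ Y : ℕ, 1 ≤ Y →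
    |∑ d ∈ Finset.Icc 1 Y, mu d / (d : ℝ) ^ 2 *
      ((2 * Real.log (Y / d) + 2 * Real.eulerMascheroniConstant) ^ 2 -
        2 * (2 * Real.log (Y / d) + 2 * Real.eulerMascheroniConstant) + 2) - mainL (2 * Real.log Y)| ≤
      K * (Y : ℝ) ^ (-(1 / 3) : ℝ) := by
  obtain ⟨K, hK, h⟩ := series_tails
  refine ⟨290 * K, by positivity, fun Y hY => ?_⟩
  have hY' : (1 : ℝ) ≤ Y := by exact_mod_cast hY
  obtain ⟨t0, t1, t2⟩ := h Y hY
  set a := 2 * Real.log Y + 2 * Real.eulerMascheroniConstant with ha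
  have e : ∑ d ∈ Finset.Icc 1 Y, mu d / (d : ℝ) ^ 2 *
      ((2 * Real.log (Y / d) + 2 * Real.eulerMascheroniConstant) ^ 2 -
        2 * (2 * Real.log (Y / d) + 2 * Real.eulerMascheroniConstant) + 2) =
      (a ^ 2 - 2 * a + 2) * ∑ d ∈ Finset.Icc 1 Y, mu d / (d : ℝ) ^ 2 +
      (4 - 4 * a) * ∑ d ∈ Finset.Icc 1 Y, Real.log d * mu d / (d : ℝ) ^ 2 +
      4 * ∑ d ∈ Finset.Icc 1 Y, Real.log d * (Real.log d * mu d) / (d : ℝ) ^ 2 := by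
    rw [Finset.mul_sum, Finset.mul_sum, Finset.mul_sum, ← Finset.sum_add_distrib,
      ← Finset.sum_add_distrib]
    refine Finset.sum_congr rfl fun d hd => ?_
    rw [Finset.mem_Icc] at hd
    have hd0 : (0 : ℝ) < d := by exact_mod_cast hd.1
    rw [Real.log_div (by linarith) hd0.ne', ha]
    ring
  have e2 : mainL (2 * Real.log Y) = (a ^ 2 - 2 * a + 2) * (6 / Real.pi ^ 2) +
      (4 - 4 * a) * (-(6 / Real.pi ^ 2 * S1)) + 4 * (6 / Real.pi ^ 2 * (S1 ^ 2 - S2)) := by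
    rw [mainL, ha]; ring
  rw [e, e2]
  have hl : Real.log Y ≤ 6 * (Y : ℝ) ^ (1 / 6 : ℝ) := by
    have := log_le_rpow (show (0 : ℝ) < 1 / 6 by norm_num) hY'
    norm_num at this ⊢; exact this
  have hl0 : 0 ≤ Real.log Y := Real.log_nonneg hY'
  have hp1 : (1 : ℝ) ≤ (Y : ℝ) ^ (1 / 6 : ℝ) := Real.one_le_rpow hY' (by norm_num)
  have hγ := Real.eulerMascheroniConstant_lt_two_thirds
  have hγ' := Real.one_half_lt_eulerMascheroniConstant
  have ha0 : 0 ≤ a := by linarith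
  have ha1 : a ≤ 14 * (Y : ℝ) ^ (1 / 6 : ℝ) := by linarith
  set P := (Y : ℝ) ^ (1 / 6 : ℝ) with hP
  set E := K * (Y : ℝ) ^ (-(2 / 3) : ℝ) with hE
  have hE0 : 0 ≤ E := by positivity
  have b0 : |a ^ 2 - 2 * a + 2| ≤ a ^ 2 + 2 * a + 2 := by
    rw [abs_le]; constructor <;> nlinarith
  have b1 : |4 - 4 * a| ≤ 4 + 4 * a := by
    rw [abs_le]; constructor <;> linarith
  have hPP : (Y : ℝ) ^ (-(1 / 3) : ℝ) = P * P * (Y : ℝ) ^ (-(2 / 3) : ℝ) := by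
    rw [hP, ← Real.rpow_add (by linarith), ← Real.rpow_add (by linarith)]; norm_num
  have m0 : |(a ^ 2 - 2 * a + 2) * (∑ d ∈ Finset.Icc 1 Y, mu d / (d : ℝ) ^ 2 - 6 / Real.pi ^ 2)| ≤
      (a ^ 2 + 2 * a + 2) * E := by
    rw [abs_mul]; exact mul_le_mul b0 t0 (abs_nonneg _) (by positivity)
  have m1 : |(4 - 4 * a) * (∑ d ∈ Finset.Icc 1 Y, Real.log d * mu d / (d : ℝ) ^ 2 -
      (-(6 / Real.pi ^ 2 * S1)))| ≤ (4 + 4 * a) * E := by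
    rw [abs_mul]; exact mul_le_mul b1 t1 (abs_nonneg _) (by positivity)
  have hQ : a ^ 2 + 2 * a + 2 + (4 + 4 * a) + 4 ≤ 290 * (P * P) := by nlinarith
  have hQE := mul_le_mul_of_nonneg_right hQ hE0
  rw [hPP]
  have fin : 290 * K * (P * P * (Y : ℝ) ^ (-(2 / 3) : ℝ)) = 290 * (P * P) * E := by rw [hE]; ring
  rw [fin]
  rw [abs_le] at m0 m1 t2 ⊢
  constructor <;> linarith [m0.1, m0.2, m1.1, m1.2, t2.1, t2.2]

end Stepanov

/-! ### From squares to real X -/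

namespace Stepanov

lemma tauk_two {n : ℕ} (hn : n ≠ 0) : tauk 2 n = n.divisors.card := by
  rw [tauk]
  refine Finset.card_bij (fun f _ => f 0) ?_ ?_ ?_
  · intro f hf
    rw [Finset.mem_filter, Fintype.mem_piFinset] at hf
    exact hf.1 0
  · intro f hf g hg h
    rw [Finset.mem_filter, Fintype.mem_piFinset, Fin.prod_univ_two] at hf hg
    have hf0 := Nat.pos_of_mem_divisors (hf.1 0)
    have h1 : f 0 * f 1 = f 0 * g 1 := by
      rw [hf.2, h]; exact hg.2.symm
    have h2 := Nat.eq_of_mul_eq_mul_left hf0 h1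
    funext i
    fin_cases i
    · exact h
    · exact h2
  · intro d hd
    have hdvd := Nat.dvd_of_mem_divisors hd
    refine ⟨![d, n / d], ?_, rfl⟩
    rw [Finset.mem_filter, Fintype.mem_piFinset, Fin.prod_univ_two]
    refine ⟨fun i => ?_, Nat.mul_div_cancel' hdvd⟩
    fin_cases i
    · exact hd
    · exact Nat.mem_divisors.mpr ⟨Nat.div_dvd_of_dvd hdvd, hn⟩

/-- The quadratic `mainL` varies slowly: replacing `X` by a square `Y² = X + O(Y)` is harmless. -/
lemma mainL_smooth : ∃ K : ℝ, 0 ≤ K ∧ ∀ (X : ℝ) (Y : ℕ), 1 ≤ Y → (Y : ℝ) ^ 2 ≤ X →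
    X ≤ (Y : ℝ) ^ 2 + 3 * Y →
    |X * mainL (Real.log X) - (Y : ℝ) ^ 2 * mainL (2 * Real.log Y)| ≤ K * X ^ (2 / 3 : ℝ) := by
  obtain ⟨A, B, D, hA, hm⟩ : ∃ A B D : ℝ, 0 ≤ A ∧ ∀ L, mainL L = A * (L ^ 2 + B * L + D) :=
    ⟨_, _, _, by positivity, fun L => rfl⟩
  set C := A * (1 + |B| + |D|) with hC
  have hC0 : 0 ≤ C := by positivity
  -- The bound `log X ≤ 12 X ^ (1/12)` gives `1 + log X ≤ 13 X ^ (1/12)`, whence the constant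
  -- `585 = 3 * 13² + 6 * 13`.
  refine ⟨585 * C, by positivity, fun X Y hY hYX hXY => ?_⟩
  have hY' : (1 : ℝ) ≤ Y := by exact_mod_cast hY
  have hX : 1 ≤ X := by nlinarith
  have hX0 : 0 < X := by linarith
  set L := Real.log X with hL
  set M := 2 * Real.log Y with hM
  have hM0 : 0 ≤ M := mul_nonneg (by norm_num) (Real.log_nonneg hY')
  have hM2 : M = Real.log ((Y : ℝ) ^ 2) := by rw [Real.log_pow]; push_cast; rfl
  have hML : M ≤ L := by rw [hM2]; exact Real.log_le_log (by positivity) hYX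
  have hLM : L - M ≤ 3 / Y := by
    rw [hM2, hL, ← Real.log_div hX0.ne' (by positivity)]
    refine (Real.log_le_sub_one_of_pos (by positivity)).trans ?_
    rw [div_sub_one (by positivity), div_le_div_iff₀ (by positivity) (by linarith)]
    nlinarith
  have hB := neg_abs_le B
  have hB' := le_abs_self B
  have hD := neg_abs_le D
  have hD' := le_abs_self D
  have hB0 := abs_nonneg B
  have hD0 := abs_nonneg D
  have g1 : |mainL L| ≤ C * (1 + L) ^ 2 := by
    rw [hm, abs_mul, abs_of_nonneg hA, hC, mul_assoc]
    refine mul_le_mul_of_nonneg_left ?_ hA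
    have hL0 : 0 ≤ L := hM0.trans hML
    calc |L ^ 2 + B * L + D| ≤ |L ^ 2 + B * L| + |D| := abs_add_le _ _
      _ ≤ |L ^ 2| + |B * L| + |D| := by gcongr; exact abs_add_le _ _
      _ = L ^ 2 + |B| * L + |D| := by
          rw [abs_mul, abs_of_nonneg hL0, abs_of_nonneg (sq_nonneg L)]
      _ ≤ _ := by nlinarith [mul_nonneg hB0 hL0, mul_nonneg hD0 hL0,
          mul_nonneg hB0 (sq_nonneg L), mul_nonneg hD0 (sq_nonneg L)]
  have g2 : |mainL L - mainL M| ≤ 2 * C * (1 + L) * (3 / Y) := by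
    rw [hm, hm, show A * (L ^ 2 + B * L + D) - A * (M ^ 2 + B * M + D) =
      A * (L + M + B) * (L - M) by ring, abs_mul, abs_mul, abs_of_nonneg hA,
      abs_of_nonneg (sub_nonneg.mpr hML)]
    have hL0 : 0 ≤ L := hM0.trans hML
    have : |L + M + B| ≤ 2 * (1 + |B| + |D|) * (1 + L) := by
      rw [abs_le]
      constructor <;> nlinarith [mul_nonneg hB0 hL0, mul_nonneg hD0 hL0]
    calc A * |L + M + B| * (L - M) ≤ A * (2 * (1 + |B| + |D|) * (1 + L)) * (3 / Y) := by
          gcongr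
      _ = _ := by rw [hC]; ring
  have hlog : 1 + L ≤ 13 * X ^ (1 / 12 : ℝ) := by
    have h1 := log_le_rpow (show (0 : ℝ) < 1 / 12 by norm_num) hX
    have h2 : 1 ≤ X ^ (1 / 12 : ℝ) := Real.one_le_rpow hX (by norm_num)
    norm_num at h1 h2 ⊢; linarith
  have hL0 : 0 ≤ L := hM0.trans hML
  have hP1 : 1 ≤ X ^ (1 / 12 : ℝ) := Real.one_le_rpow hX (by norm_num)
  have hYs : (Y : ℝ) ≤ X ^ (1 / 2 : ℝ) := by
    rw [← Real.sqrt_eq_rpow]; exact Real.le_sqrt_of_sq_le hYX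
  have hpow : X ^ (2 / 3 : ℝ) = X ^ (1 / 2 : ℝ) * (X ^ (1 / 12 : ℝ)) ^ 2 := by
    rw [← Real.rpow_natCast, ← Real.rpow_mul hX0.le, ← Real.rpow_add hX0]; norm_num
  have hY0 : (Y : ℝ) ≠ 0 := by linarith
  rw [show X * mainL L - (Y : ℝ) ^ 2 * mainL M =
    (X - (Y : ℝ) ^ 2) * mainL L + (Y : ℝ) ^ 2 * (mainL L - mainL M) by ring]
  refine (abs_add_le _ _).trans ?_
  rw [abs_mul, abs_mul, abs_of_nonneg (sub_nonneg.mpr hYX), abs_of_nonneg (sq_nonneg (Y : ℝ)), hpow]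
  calc (X - (Y : ℝ) ^ 2) * |mainL L| + (Y : ℝ) ^ 2 * |mainL L - mainL M|
      ≤ (3 * Y) * (C * (1 + L) ^ 2) + (Y : ℝ) ^ 2 * (2 * C * (1 + L) * (3 / Y)) := by
        gcongr; linarith
    _ = Y * (3 * C * (1 + L) ^ 2 + 6 * C * (1 + L)) := by field_simp; ring
    _ ≤ Y * (3 * C * (13 * X ^ (1 / 12 : ℝ)) ^ 2 + 6 * C * (13 * X ^ (1 / 12 : ℝ))) := by gcongr
    _ ≤ Y * (3 * C * (13 * X ^ (1 / 12 : ℝ)) ^ 2 +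
          6 * C * (13 * (X ^ (1 / 12 : ℝ) * X ^ (1 / 12 : ℝ)))) := by
        gcongr; exact le_mul_of_one_le_right (by positivity) hP1
    _ = 585 * C * (Y * (X ^ (1 / 12 : ℝ)) ^ 2) := by ring
    _ ≤ _ := by gcongr

/-- The `O(√X)` integers between `Y²` and `X` are estimated by the divisor bound. -/
lemma short_sum : ∃ K : ℝ, 0 ≤ K ∧ ∀ (X : ℝ) (Y : ℕ), 1 ≤ Y → (Y : ℝ) ^ 2 ≤ X →
    X ≤ (Y : ℝ) ^ 2 + 3 * Y →
    |∑ n ∈ Finset.Ioc (Y ^ 2) ⌊X⌋₊, (n.divisors.card : ℝ) * ((n + 1).divisors.card : ℝ)| ≤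
      K * X ^ (2 / 3 : ℝ) := by
  -- Any exponent below `1 / 6` would do, as `1 / 2 + 2 / 12 = 2 / 3 < 5 / 6`.
  obtain ⟨K, hK, ht⟩ := card_divisors_le (show (0 : ℝ) < 1 / 12 by norm_num)
  refine ⟨6 * K ^ 2, by positivity, fun X Y hY hYX hXY => ?_⟩
  have hY' : (1 : ℝ) ≤ Y := by exact_mod_cast hY
  have hX : 1 ≤ X := by nlinarith
  have hX0 : 0 < X := by linarith
  have hN : (⌊X⌋₊ : ℝ) ≤ X := Nat.floor_le hX0.le
  have hYs : (Y : ℝ) ≤ X ^ (1 / 2 : ℝ) := by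
    rw [← Real.sqrt_eq_rpow]; exact Real.le_sqrt_of_sq_le hYX
  have hpow : X ^ (2 / 3 : ℝ) = X ^ (1 / 2 : ℝ) * (X ^ (1 / 12 : ℝ) * X ^ (1 / 12 : ℝ)) := by
    rw [← Real.rpow_add hX0, ← Real.rpow_add hX0]; norm_num
  have key : ∀ n ∈ Finset.Ioc (Y ^ 2) ⌊X⌋₊, |(n.divisors.card : ℝ) * ((n + 1).divisors.card : ℝ)| ≤
      2 * K ^ 2 * (X ^ (1 / 12 : ℝ) * X ^ (1 / 12 : ℝ)) := by
    intro n hn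
    rw [Finset.mem_Ioc] at hn
    have hnX : (n : ℝ) ≤ X := le_trans (by exact_mod_cast hn.2) hN
    have h1 : (n.divisors.card : ℝ) ≤ K * X ^ (1 / 12 : ℝ) := (ht n (by lia)).trans (by gcongr)
    have h2 : ((n + 1).divisors.card : ℝ) ≤ K * (2 * X ^ (1 / 12 : ℝ)) := by
      refine (ht (n + 1) (by lia)).trans ?_
      have h3 : ((n + 1 : ℕ) : ℝ) ≤ 2 * X := by push_cast; linarith
      have h4 : (2 : ℝ) ^ (1 / 12 : ℝ) ≤ 2 := by
        conv_rhs => rw [← Real.rpow_one 2]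
        exact Real.rpow_le_rpow_of_exponent_le (by norm_num) (by norm_num)
      calc K * ((n + 1 : ℕ) : ℝ) ^ (1 / 12 : ℝ) ≤ K * (2 * X) ^ (1 / 12 : ℝ) := by gcongr
        _ = K * ((2 : ℝ) ^ (1 / 12 : ℝ) * X ^ (1 / 12 : ℝ)) := by
            rw [Real.mul_rpow (by norm_num) hX0.le]
        _ ≤ _ := by gcongr
    rw [abs_of_nonneg (by positivity)]
    calc _ ≤ (K * X ^ (1 / 12 : ℝ)) * (K * (2 * X ^ (1 / 12 : ℝ))) := by gcongr
      _ = _ := by ring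
  have hcard : ((⌊X⌋₊ - Y ^ 2 : ℕ) : ℝ) ≤ 3 * Y := by
    have hf : Y ^ 2 ≤ ⌊X⌋₊ := Nat.le_floor (by exact_mod_cast hYX)
    rw [Nat.cast_sub hf]; push_cast; linarith
  calc _ ≤ _ := Finset.abs_sum_le_sum_abs _ _
    _ ≤ _ := Finset.sum_le_sum key
    _ = ((⌊X⌋₊ - Y ^ 2 : ℕ) : ℝ) * (2 * K ^ 2 * (X ^ (1 / 12 : ℝ) * X ^ (1 / 12 : ℝ))) := by
        rw [Finset.sum_const, Nat.card_Ioc, nsmul_eq_mul]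
    _ ≤ (3 * X ^ (1 / 2 : ℝ)) * (2 * K ^ 2 * (X ^ (1 / 12 : ℝ) * X ^ (1 / 12 : ℝ))) := by
        gcongr; linarith
    _ = _ := by rw [hpow]; ring

end Stepanov

open Stepanov in
theorem tau_correlation_shift_one :
    ∀ ε : ℝ, 0 < ε → ∃ C : ℝ, 0 < C ∧ ∀ X : ℝ, 2 ≤ X →
      |(∑ n ∈ Finset.Icc 1 ⌊X⌋₊, (tauk 2 n : ℝ) * (tauk 2 (n + 1) : ℝ)) -
          X * (6 / Real.pi ^ 2) *
            ((Real.log X) ^ 2 +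
              (4 * Real.eulerMascheroniConstant + 4 * S1 - 2) * Real.log X +
              (4 * (Real.eulerMascheroniConstant + S1) ^ 2 -
                4 * (Real.eulerMascheroniConstant + S1) - 4 * S2 + 2))| ≤
        C * X ^ ((5 : ℝ) / 6 + ε) := by
  intro ε hε
  obtain ⟨K0, hK0, h0⟩ := correlation_square (ε := 2 * ε) (by linarith)
  obtain ⟨K1, hK1, h1⟩ := mainL_approx
  obtain ⟨K2, hK2, h2⟩ := mainL_smooth
  obtain ⟨K3, hK3, h3⟩ := short_sum
  refine ⟨K0 + K1 + K2 + K3 + 1, by positivity, fun X hX => ?_⟩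
  set Y := Nat.sqrt ⌊X⌋₊ with hYdef
  have hX0 : 0 < X := by linarith
  have hX1 : 1 ≤ X := by linarith
  have hfl : (⌊X⌋₊ : ℝ) ≤ X := Nat.floor_le hX0.le
  have hfl2 : X < ⌊X⌋₊ + 1 := Nat.lt_floor_add_one X
  have hYN : Y ^ 2 ≤ ⌊X⌋₊ := Nat.sqrt_le' _
  have hY : 1 ≤ Y := by
    rw [hYdef, Nat.le_sqrt]; exact Nat.le_floor (by push_cast; linarith)
  have hNY : ⌊X⌋₊ < (Y + 1) ^ 2 := Nat.lt_succ_sqrt' _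
  have hY' : (1 : ℝ) ≤ Y := by exact_mod_cast hY
  have hYX : (Y : ℝ) ^ 2 ≤ X := le_trans (by exact_mod_cast hYN) hfl
  have hXY : X ≤ (Y : ℝ) ^ 2 + 3 * Y := by
    have : (⌊X⌋₊ : ℝ) + 1 ≤ ((Y : ℝ) + 1) ^ 2 := by exact_mod_cast hNY
    nlinarith
  have e : ∑ n ∈ Finset.Icc 1 ⌊X⌋₊, (tauk 2 n : ℝ) * (tauk 2 (n + 1) : ℝ) =
      ∑ n ∈ Finset.Icc 1 (Y ^ 2), (n.divisors.card : ℝ) * ((n + 1).divisors.card : ℝ) +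
      ∑ n ∈ Finset.Ioc (Y ^ 2) ⌊X⌋₊, (n.divisors.card : ℝ) * ((n + 1).divisors.card : ℝ) := by
    have e1 : ∀ n ∈ Finset.Icc 1 ⌊X⌋₊, (tauk 2 n : ℝ) * (tauk 2 (n + 1) : ℝ) =
        (n.divisors.card : ℝ) * ((n + 1).divisors.card : ℝ) := by
      intro n hn
      rw [Finset.mem_Icc] at hn
      rw [tauk_two (by lia), tauk_two (by lia)]
    rw [Finset.sum_congr rfl e1]
    exact (Finset.sum_Ioc_consecutive (fun n : ℕ => (n.divisors.card : ℝ) * ((n + 1).divisors.card : ℝ))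
      (Nat.zero_le _) hYN).symm
  have em : X * (6 / Real.pi ^ 2) *
      ((Real.log X) ^ 2 + (4 * Real.eulerMascheroniConstant + 4 * S1 - 2) * Real.log X +
        (4 * (Real.eulerMascheroniConstant + S1) ^ 2 -
          4 * (Real.eulerMascheroniConstant + S1) - 4 * S2 + 2)) = X * mainL (Real.log X) := by
    rw [mainL]; ring
  rw [e, em]
  have hYs : (Y : ℝ) ≤ X ^ (1 / 2 : ℝ) := by
    rw [← Real.sqrt_eq_rpow]; exact Real.le_sqrt_of_sq_le hYX
  set Z := X ^ ((5 : ℝ) / 6 + ε) with hZ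
  have hZ0 : 0 ≤ Z := by positivity
  have p0 : (Y : ℝ) ^ (5 / 3 + 2 * ε) ≤ Z := by
    calc (Y : ℝ) ^ (5 / 3 + 2 * ε) ≤ (X ^ (1 / 2 : ℝ)) ^ (5 / 3 + 2 * ε) := by gcongr
      _ = Z := by rw [← Real.rpow_mul hX0.le, hZ]; congr 1; ring
  have p1 : (Y : ℝ) ^ 2 * (Y : ℝ) ^ (-(1 / 3) : ℝ) ≤ Z := by
    refine le_trans ?_ p0
    rw [← Real.rpow_natCast, ← Real.rpow_add (by linarith)]
    exact Real.rpow_le_rpow_of_exponent_le hY' (by push_cast; linarith)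
  have p2 : X ^ (2 / 3 : ℝ) ≤ Z := Real.rpow_le_rpow_of_exponent_le hX1 (by linarith)
  have a0 := (h0 Y hY).trans (mul_le_mul_of_nonneg_left p0 hK0)
  have a1 : |(Y : ℝ) ^ 2 * ∑ d ∈ Finset.Icc 1 Y, mu d / (d : ℝ) ^ 2 *
      ((2 * Real.log (Y / d) + 2 * Real.eulerMascheroniConstant) ^ 2 -
        2 * (2 * Real.log (Y / d) + 2 * Real.eulerMascheroniConstant) + 2) -
      (Y : ℝ) ^ 2 * mainL (2 * Real.log Y)| ≤ K1 * Z := by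
    rw [← mul_sub, abs_mul, abs_of_nonneg (sq_nonneg (Y : ℝ))]
    calc _ ≤ (Y : ℝ) ^ 2 * (K1 * (Y : ℝ) ^ (-(1 / 3) : ℝ)) := by gcongr; exact h1 Y hY
      _ = K1 * ((Y : ℝ) ^ 2 * (Y : ℝ) ^ (-(1 / 3) : ℝ)) := by ring
      _ ≤ _ := by gcongr
  have a2 := (h2 X Y hY hYX hXY).trans (mul_le_mul_of_nonneg_left p2 hK2)
  have a3 := (h3 X Y hY hYX hXY).trans (mul_le_mul_of_nonneg_left p2 hK3)
  rw [abs_le] at a0 a1 a2 a3 ⊢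
  constructor <;> linarith [a0.1, a0.2, a1.1, a1.2, a2.1, a2.2, a3.1, a3.2]
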